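/- arXiv:1202.0015 — 4 statements merged into one kernel-verified Lean document; each statement's English description precedes it below -/
import Mathlib

section
/- (Second derivative of entropy for gamma noise) Let X be a nonnegative real random variable whose moment generating function exists, with density f_X, and let W be an independent Gamma(α,1) random variable with α ≥ 3. For a > 0 and k ≥ 1 write g_k(w) = w^{k−1} e^{−w}/Γ(k) for w ≥ 0, f_{Y_k}(y;a) = ∫ f_X(x) a^{−1/2} g_k((y−x)/√a) dx, f_Y = f_{Y_α}, m(y;a) = ∫ x f_X(x) a^{−1/2} g_α((y−x)/√a) dx / f_Y(y;a), v(y;a) = ∫ (y−x)² f_X(x) a^{−1/2} g_α((y−x)/√a) dx / f_Y(y;a), and m_{α−1}(y;a), v analogues with g_{α−1}. Then h(a) = −∫ f_Y log f_Y dy satisfies d²/da² h(a) = −(1/(4a³)) ∫ f_{Y_{α−2}}(y;a) v(y;a) dy − (1/(4a²√a)) ∫ f_{Y_{α−1}}(y;a) m(y;a) dy + ((α−1)/(4a²√a)) ∫ f_{Y_{α−1}}(y;a) · v(y;a)/(y − m_{α−1}(y;a)) dy − J_a − (1/(4a²√a)) (√a − E[X]), where J_a = ∫ (∂/∂a f_Y(y;a))²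 / f_Y(y;a) dy and m_{α−1}(y;a) = ∫ x f_X(x) a^{−1/2} g_{α−1}((y−x)/√a) dx / f_{Y_{α−1}}(y;a). -/
open MeasureTheory Filter

namespace GN

noncomputable def gg (k w : ℝ) : ℝ :=
  if 0 ≤ w then w ^ (k - 1) * Real.exp (-w) / Real.Gamma k else 0

noncomputable def pp (k s z : ℝ) : ℝ := s⁻¹ * gg k (z / s)

lemma gg_nonneg {k : ℝ} (hk : 0 < k) (w : ℝ) : 0 ≤ gg k w := by
  unfold gg
  split_ifs with h
  · have := Real.Gamma_pos_of_pos hk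
    positivity
  · exact le_rfl

lemma mul_gg {k : ℝ} (hk : 0 < k) (w : ℝ) : w * gg k w = k * gg (k + 1) w := by
  unfold gg
  split_ifs with h
  · have hG := Real.Gamma_pos_of_pos hk
    rw [Real.Gamma_add_one hk.ne']
    have : w ^ (k + 1 - 1) = w ^ (k - 1) * w := by
      rcases h.eq_or_lt with h0 | h0
      · rw [← h0, add_sub_cancel_right, Real.zero_rpow hk.ne']; simp
      · rw [← Real.rpow_add_one h0.ne']; ring_nf
    rw [this]
    field_simp
  · simp

lemma pp_nonneg {k s : ℝ} (hk : 0 < k) (hs : 0 < s) (z : ℝ) : 0 ≤ pp k s z := by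
  have := gg_nonneg hk (z / s)
  unfold pp
  positivity

lemma mul_pp {k s : ℝ} (hk : 0 < k) (hs : 0 < s) (z : ℝ) :
    z * pp k s z = s * k * pp (k + 1) s z := by
  have := mul_gg hk (z / s)
  unfold pp
  have h2 : z * (s⁻¹ * gg k (z / s)) = s * (s⁻¹ * (z / s * gg k (z / s))) := by
    field_simp
  rw [h2, this]; ring

lemma pp_neg {k s z : ℝ} (hs : 0 < s) (hz : z < 0) : pp k s z = 0 := by
  unfold pp gg
  rw [if_neg, mul_zero]
  exact not_le.mpr (div_neg_of_neg_of_pos hz hs)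

lemma pp_eq {k s z : ℝ} (hs : 0 < s) (hz : 0 ≤ z) :
    pp k s z = z ^ (k - 1) / Real.Gamma k * (s ^ (-k) * Real.exp (-z / s)) := by
  unfold pp gg
  rw [if_pos (by positivity), Real.div_rpow hz hs.le]
  have : s ^ (-k) = s⁻¹ * (s ^ (k - 1))⁻¹ := by
    rw [← Real.rpow_neg hs.le, ← Real.rpow_neg_one s, ← Real.rpow_add hs]
    ring_nf
  rw [this, neg_div]
  ring

lemma pp_pos {k s z : ℝ} (hk : 0 < k) (hs : 0 < s) (hz : 0 < z) : 0 < pp k s z := by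
  rw [pp_eq hs hz.le]
  have := Real.Gamma_pos_of_pos hk
  positivity

lemma gg_measurable (k : ℝ) : Measurable (gg k) := by
  unfold gg
  refine Measurable.ite measurableSet_Ici ?_ measurable_const
  fun_prop

lemma pp_measurable (k s : ℝ) : Measurable (pp k s) := by
  unfold pp
  exact ((gg_measurable k).comp (measurable_id.div_const s)).const_mul _

lemma rpow_le_exp {r e : ℝ} (hr : 0 ≤ r) (he : 0 < e) :
    ∃ C, 0 < C ∧ ∀ z, 0 ≤ z → z ^ r ≤ C * Real.exp (e * z) := by
  rcases hr.eq_or_lt with h0 | h0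
  · refine ⟨1, one_pos, fun z hz => ?_⟩
    rw [← h0, Real.rpow_zero, one_mul]
    exact Real.one_le_exp (by positivity)
  · refine ⟨(r / e) ^ r, by positivity, fun z hz => ?_⟩
    have h1 : z ≤ (r / e) * Real.exp (e * z / r) := by
      have := Real.add_one_le_exp (e * z / r)
      calc z = (r / e) * (e * z / r) := by field_simp
        _ ≤ _ := by gcongr; linarith
    calc z ^ r ≤ ((r / e) * Real.exp (e * z / r)) ^ r := by gcongr
      _ = (r / e) ^ r * Real.exp (e * z) := by
        rw [Real.mul_rpow (by positivity) (by positivity), ← Real.exp_mul]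
        congr 2; field_simp

lemma pp_bound {k s1 s2 : ℝ} (hk : 1 ≤ k) (h1 : 0 < s1) (h12 : s1 ≤ s2) :
    ∃ C, 0 < C ∧ ∀ s, s1 ≤ s → s ≤ s2 → ∀ z,
      pp k s z ≤ C * Real.exp (-(1 / (2 * s2)) * z) := by
  have h2 : 0 < s2 := h1.trans_le h12
  obtain ⟨C, hC, hb⟩ := rpow_le_exp (r := k - 1) (e := 1 / (2 * s2)) (by linarith) (by positivity)
  have hG := Real.Gamma_pos_of_pos (by linarith : 0 < k)
  refine ⟨C / Real.Gamma k * s1 ^ (-k), by positivity, fun s hs1 hs2 z => ?_⟩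
  have hs : 0 < s := h1.trans_le hs1
  rcases lt_or_ge z 0 with hz | hz
  · rw [pp_neg hs hz]; positivity
  · rw [pp_eq hs hz]
    have e1 : s ^ (-k) ≤ s1 ^ (-k) := Real.rpow_le_rpow_of_nonpos h1 hs1 (by linarith)
    have e2 : Real.exp (-z / s) ≤ Real.exp (-z / s2) := by
      apply Real.exp_le_exp.mpr
      rw [neg_div, neg_div]
      apply neg_le_neg
      gcongr
    calc _ ≤ C * Real.exp (1 / (2 * s2) * z) / Real.Gamma k * (s1 ^ (-k) * Real.exp (-z / s2)) := by
          gcongr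
          exact hb z hz
      _ = C / Real.Gamma k * s1 ^ (-k) * (Real.exp (1 / (2 * s2) * z) * Real.exp (-z / s2)) := by ring
      _ = _ := by
        rw [← Real.exp_add]
        congr 2
        field_simp
        ring

lemma pp_bound' {k s1 s2 : ℝ} (hk : 1 ≤ k) (h1 : 0 < s1) (h12 : s1 ≤ s2) :
    ∃ C, 0 < C ∧ ∀ s, s1 ≤ s → s ≤ s2 → ∀ z, pp k s z ≤ C := by
  obtain ⟨C, hC, h⟩ := pp_bound hk h1 h12
  have h2 : 0 < s2 := h1.trans_le h12
  refine ⟨C, hC, fun s a b z => ?_⟩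
  rcases lt_or_ge z 0 with hz | hz
  · rw [pp_neg (h1.trans_le a) hz]; exact hC.le
  · refine (h s a b z).trans ?_
    have : Real.exp (-(1 / (2 * s2)) * z) ≤ 1 := by
      apply Real.exp_le_one_iff.mpr
      have : 0 ≤ 1 / (2 * s2) * z := by positivity
      linarith
    nlinarith

lemma pp_deriv_s {k s : ℝ} (hk : 0 < k) (hs : 0 < s) (z : ℝ) :
    HasDerivAt (fun s => pp k s z) (k / s * (pp (k + 1) s z - pp k s z)) s := by
  rcases lt_or_ge z 0 with hz | hz
  · have : (fun s => pp k s z) =ᶠ[nhds s] fun _ => 0 := by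
      filter_upwards [lt_mem_nhds hs] with t ht
      exact pp_neg ht hz
    rw [pp_neg hs hz, pp_neg hs hz]
    simpa using (hasDerivAt_const s (0:ℝ)).congr_of_eventuallyEq this
  · have e : (fun s => pp k s z) =ᶠ[nhds s]
        fun s => z ^ (k - 1) / Real.Gamma k * (s ^ (-k) * Real.exp (-z / s)) := by
      filter_upwards [lt_mem_nhds hs] with t ht
      exact pp_eq ht hz
    refine HasDerivAt.congr_of_eventuallyEq ?_ e
    have d1 : HasDerivAt (fun s : ℝ => s ^ (-k)) (-k * s ^ (-k - 1)) s :=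
      Real.hasDerivAt_rpow_const (Or.inl hs.ne')
    have d2 : HasDerivAt (fun s : ℝ => Real.exp (-z / s)) (Real.exp (-z / s) * (z / s ^ 2)) s := by
      have : HasDerivAt (fun s : ℝ => -z / s) (z / s ^ 2) s := by
        have := (hasDerivAt_inv hs.ne').const_mul (-z)
        refine this.congr_deriv ?_
        field_simp
      exact this.exp
    refine ((d1.mul d2).const_mul (z ^ (k - 1) / Real.Gamma k)).congr_deriv ?_
    have hm := mul_pp hk hs z
    have hr : pp (k + 1) s z = z * pp k s z / (s * k) := by
      rw [hm]; field_simp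
    rw [hr, pp_eq hs hz, Real.rpow_sub_one hs.ne']
    field_simp
    ring

noncomputable def qq (k s z : ℝ) : ℝ := z ^ (k - 1) / Real.Gamma k * (s ^ (-k) * Real.exp (-z / s))

lemma qq_deriv {k s z : ℝ} (hk : 2 ≤ k) (hs : 0 < s) (hz : 0 ≤ z) :
    HasDerivAt (qq k s) ((pp (k - 1) s z - pp k s z) / s) z := by
  unfold qq
  have d1 : HasDerivAt (fun z : ℝ => z ^ (k - 1)) ((k - 1) * z ^ (k - 1 - 1)) z :=
    Real.hasDerivAt_rpow_const (Or.inr (by linarith))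
  have d2 : HasDerivAt (fun z : ℝ => Real.exp (-z / s)) (Real.exp (-z / s) * (-1 / s)) z :=
    ((hasDerivAt_neg z).div_const s).exp
  refine ((d1.div_const _).mul (d2.const_mul (s ^ (-k)))).congr_deriv ?_
  rw [pp_eq hs hz, pp_eq hs hz]
  have hG := Real.Gamma_pos_of_pos (by linarith : 0 < k - 1)
  have hG2 : Real.Gamma k = (k - 1) * Real.Gamma (k - 1) := by
    rw [← Real.Gamma_add_one (by linarith : k - 1 ≠ 0)]; ring_nf
  have hs2 : s ^ (-(k - 1)) = s * s ^ (-k) := by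
    rw [show -(k - 1) = -k + 1 by ring, Real.rpow_add_one hs.ne']; ring
  have hk1 : k - 1 ≠ 0 := by linarith
  rw [hG2, hs2]
  field_simp
  ring

lemma pp_deriv_z {k s z : ℝ} (hk : 2 ≤ k) (hs : 0 < s) (hz : z ≠ 0) :
    HasDerivAt (pp k s) ((pp (k - 1) s z - pp k s z) / s) z := by
  rcases hz.lt_or_gt with hz | hz
  · have : pp k s =ᶠ[nhds z] fun _ => 0 := by
      filter_upwards [gt_mem_nhds hz] with t ht
      exact pp_neg hs ht
    rw [pp_neg hs hz, pp_neg hs hz]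
    simpa using (hasDerivAt_const z (0:ℝ)).congr_of_eventuallyEq this
  · refine (qq_deriv hk hs hz.le).congr_of_eventuallyEq ?_
    filter_upwards [lt_mem_nhds hz] with t ht
    exact pp_eq hs ht.le

lemma pp_lip {k s : ℝ} (hk : 2 ≤ k) (hs : 0 < s) : ∃ C, LipschitzWith C (pp k s) := by
  obtain ⟨C1, hC1, h1⟩ := pp_bound' (k := k) (by linarith) hs le_rfl
  obtain ⟨C2, hC2, h2⟩ := pp_bound' (k := k - 1) (by linarith) hs le_rfl
  refine ⟨Real.toNNReal ((C1 + C2) / s), ?_⟩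
  have hl : LipschitzOnWith (Real.toNNReal ((C1 + C2) / s)) (qq k s) (Set.Ici 0) := by
    refine Convex.lipschitzOnWith_of_nnnorm_hasDerivWithin_le (convex_Ici 0)
      (fun z hz => (qq_deriv hk hs hz).hasDerivWithinAt) (fun z hz => ?_)
    rw [← NNReal.coe_le_coe]
    rw [coe_nnnorm, Real.norm_eq_abs, Real.coe_toNNReal _ (by positivity),
      abs_div, abs_of_pos hs]
    gcongr
    have a1 := pp_nonneg (k := k) (by linarith) hs z
    have a2 := pp_nonneg (k := k - 1) (by linarith) hs z
    have b1 := h1 s le_rfl le_rfl z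
    have b2 := h2 s le_rfl le_rfl z
    rw [abs_le]; constructor <;> linarith
  have e : ∀ z, pp k s z = qq k s (max z 0) := by
    intro z
    rcases lt_or_ge z 0 with hz | hz
    · rw [pp_neg hs hz, max_eq_right hz.le]
      unfold qq
      rw [Real.zero_rpow (by linarith)]; simp
    · rw [max_eq_left hz]; exact pp_eq hs hz
  refine LipschitzWith.of_dist_le_mul fun x y => ?_
  rw [e, e]
  refine (hl.dist_le_mul _ (Set.mem_Ici.mpr (le_max_right _ _)) _
    (Set.mem_Ici.mpr (le_max_right _ _))).trans ?_
  gcongr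
  rw [Real.dist_eq, Real.dist_eq]
  exact abs_max_sub_max_le_abs _ _ _

lemma gg_int {k : ℝ} (hk : 0 < k) : Integrable (gg k) ∧ ∫ w, gg k w = 1 := by
  have hG := Real.Gamma_pos_of_pos hk
  have e : gg k =ᵐ[volume] (Set.Ioi (0:ℝ)).indicator
      (fun x => Real.exp (-x) * x ^ (k - 1) / Real.Gamma k) := by
    filter_upwards [Measure.ae_ne volume (0:ℝ)] with w hw
    unfold gg
    by_cases h : 0 ≤ w
    · rw [if_pos h, Set.indicator_of_mem (Set.mem_Ioi.mpr (lt_of_le_of_ne h hw.symm))]; ring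
    · rw [if_neg h, Set.indicator_of_notMem]
      simp only [Set.mem_Ioi]; linarith
  constructor
  · refine Integrable.congr ?_ e.symm
    rw [integrable_indicator_iff measurableSet_Ioi]
    exact (Real.GammaIntegral_convergent hk).div_const _
  · rw [integral_congr_ae e, integral_indicator measurableSet_Ioi, integral_div,
      ← Real.Gamma_eq_integral hk]
    exact div_self hG.ne'

lemma pp_int {k s : ℝ} (hk : 0 < k) (hs : 0 < s) : Integrable (pp k s) ∧ ∫ w, pp k s w = 1 := by
  obtain ⟨h1, h2⟩ := gg_int hk
  unfold pp
  refine ⟨(h1.comp_div hs.ne').const_mul _, ?_⟩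
  rw [integral_const_mul, Measure.integral_comp_div, h2, abs_of_pos hs]
  simp [hs.ne']

noncomputable def F (fX : ℝ → ℝ) (k s y : ℝ) : ℝ := ∫ x, fX x * pp k s (y - x)

structure Hyp (fX : ℝ → ℝ) : Prop where
  nonneg : ∀ x, 0 ≤ fX x
  prob : (∫ x, fX x) = 1
  supp : ∀ x, x < 0 → fX x = 0
  mgf : ∀ s : ℝ, Integrable (fun x => Real.exp (s * x) * fX x)

variable {fX : ℝ → ℝ}

lemma Hyp.int (H : Hyp fX) : Integrable fX := by simpa using H.mgf 0

lemma Hyp.int_mul (H : Hyp fX) : Integrable (fun x => x * fX x) := by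
  refine (H.mgf 1).mono' (by have := H.int.aestronglyMeasurable; fun_prop) (ae_of_all _ fun x => ?_)
  rcases lt_or_ge x 0 with hx | hx
  · simp [H.supp x hx]
  · rw [Real.norm_eq_abs, abs_of_nonneg (mul_nonneg hx (H.nonneg x))]
    have := Real.add_one_le_exp (1 * x)
    gcongr
    · exact H.nonneg x
    · linarith

lemma Hyp.int_pp (H : Hyp fX) {k s : ℝ} (hk : 1 ≤ k) (hs : 0 < s) (y : ℝ) :
    Integrable (fun x => fX x * pp k s (y - x)) := by
  obtain ⟨C, hC, h⟩ := pp_bound' hk hs le_rfl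
  refine H.int.mul_bdd (c := C) ?_ (ae_of_all _ fun x => ?_)
  · exact ((pp_measurable k s).comp (measurable_const.sub measurable_id)).aestronglyMeasurable
  · rw [Real.norm_eq_abs, abs_of_nonneg (pp_nonneg (by linarith) hs _)]
    exact h s le_rfl le_rfl _

lemma Hyp.F_nonneg (H : Hyp fX) {k s : ℝ} (hk : 1 ≤ k) (hs : 0 < s) (y : ℝ) : 0 ≤ F fX k s y :=
  integral_nonneg fun x => mul_nonneg (H.nonneg x) (pp_nonneg (by linarith) hs _)

lemma Hyp.F_neg (H : Hyp fX) {k s y : ℝ} (hs : 0 < s) (hy : y < 0) : F fX k s y = 0 := by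
  unfold F
  rw [← integral_zero ℝ ℝ (μ := volume)]
  congr 1
  ext x
  rcases lt_or_ge x 0 with hx | hx
  · simp [H.supp x hx]
  · rw [pp_neg hs (by linarith), mul_zero]

lemma Hyp.F_bound (H : Hyp fX) {k s1 s2 : ℝ} (hk : 1 ≤ k) (h1 : 0 < s1) (h12 : s1 ≤ s2) :
    ∃ C, 0 < C ∧ ∀ s, s1 ≤ s → s ≤ s2 → ∀ y,
      F fX k s y ≤ C * Real.exp (-(1 / (2 * s2)) * y) := by
  obtain ⟨C, hC, h⟩ := pp_bound hk h1 h12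
  set c := 1 / (2 * s2)
  have hM : 0 ≤ ∫ x, Real.exp (c * x) * fX x :=
    integral_nonneg fun x => mul_nonneg (Real.exp_pos _).le (H.nonneg x)
  refine ⟨C * ((∫ x, Real.exp (c * x) * fX x) + 1), by positivity, fun s a b y => ?_⟩
  have : F fX k s y ≤ ∫ x, C * Real.exp (-c * y) * (Real.exp (c * x) * fX x) := by
    refine integral_mono (H.int_pp hk (h1.trans_le a) y) ((H.mgf c).const_mul _) fun x => ?_
    have := h s a b (y - x)
    calc fX x * pp k s (y - x) ≤ fX x * (C * Real.exp (-c * (y - x))) := by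
          gcongr
          exact H.nonneg x
      _ = _ := by
        rw [show -c * (y - x) = -c * y + c * x by ring, Real.exp_add]; ring
  refine this.trans ?_
  rw [integral_const_mul]
  have := Real.exp_pos (-c * y)
  have := mul_pos hC this
  nlinarith

lemma Hyp.mul_F (H : Hyp fX) {k s : ℝ} (hk : 1 ≤ k) (hs : 0 < s) (y : ℝ) :
    (∫ x, x * fX x * pp k s (y - x)) = y * F fX k s y - s * k * F fX (k + 1) s y := by
  unfold F
  rw [← integral_const_mul, ← integral_const_mul, ← integral_sub]
  · congr 1; ext x
    have := mul_pp (by linarith : 0 < k) hs (y - x)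
    linear_combination -(fX x) * this
  · exact (H.int_pp hk hs y).const_mul _
  · exact (H.int_pp (by linarith) hs y).const_mul _

lemma Hyp.sq_F {k s : ℝ} (hk : 1 ≤ k) (hs : 0 < s) (y : ℝ) :
    (∫ x, (y - x) ^ 2 * fX x * pp k s (y - x)) = s ^ 2 * (k * (k + 1)) * F fX (k + 2) s y := by
  unfold F
  rw [← integral_const_mul]
  congr 1; ext x
  have h1 := mul_pp (by linarith : 0 < k) hs (y - x)
  have h2 := mul_pp (by linarith : 0 < k + 1) hs (y - x)
  rw [show k + 1 + 1 = k + 2 by ring] at h2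
  linear_combination (fX x) * (y - x) * h1 + fX x * s * k * h2

lemma Hyp.F_succ_le (H : Hyp fX) {k s : ℝ} (hk : 1 ≤ k) (hs : 0 < s) (y : ℝ) :
    F fX (k + 1) s y ≤ y / (s * k) * F fX k s y := by
  have h := H.mul_F hk hs y
  have : 0 ≤ (∫ x, x * fX x * pp k s (y - x)) := by
    refine integral_nonneg fun x => mul_nonneg ?_ (pp_nonneg (by linarith) hs _)
    rcases lt_or_ge x 0 with hx | hx
    · simp [H.supp x hx]
    · exact mul_nonneg hx (H.nonneg x)
  have hp : 0 < s * k := by positivity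
  rw [div_mul_eq_mul_div, le_div_iff₀ hp]
  linarith

lemma Hyp.F_cs (H : Hyp fX) {k s : ℝ} (hk : 1 ≤ k) (hs : 0 < s) (y : ℝ) :
    F fX (k + 1) s y ^ 2 ≤ (k + 1) / k * (F fX k s y * F fX (k + 2) s y) := by
  have key : ∀ l : ℝ, 0 ≤ F fX k s y * (l * l) + (-2 * (s * k) * F fX (k + 1) s y) * l +
      s ^ 2 * (k * (k + 1)) * F fX (k + 2) s y := by
    intro l
    have : 0 ≤ ∫ x, fX x * pp k s (y - x) * (y - x - l) ^ 2 :=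
      integral_nonneg fun x => mul_nonneg (mul_nonneg (H.nonneg x) (pp_nonneg (by linarith) hs _))
        (sq_nonneg _)
    convert this using 1
    unfold F
    rw [← integral_const_mul, ← integral_const_mul, ← integral_mul_const, ← integral_mul_const,
      ← integral_add, ← integral_add]
    · congr 1; ext x
      have h1 := mul_pp (by linarith : 0 < k) hs (y - x)
      have h2 := mul_pp (by linarith : 0 < k + 1) hs (y - x)
      rw [show k + 1 + 1 = k + 2 by ring] at h2
      linear_combination -(fX x) * (y - x - 2 * l) * h1 - fX x * s * k * h2
    · exact ((H.int_pp hk hs y).mul_const _).add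
        (((H.int_pp (by linarith) hs y).const_mul _).mul_const _)
    · exact ((H.int_pp (by linarith) hs y).const_mul _)
    · exact ((H.int_pp hk hs y).mul_const _)
    · exact (((H.int_pp (by linarith) hs y).const_mul _).mul_const _)
  have := discrim_le_zero key
  unfold discrim at this
  rw [div_mul_eq_mul_div, le_div_iff₀ (by linarith)]
  have hp : 0 < 4 * s ^ 2 * k := by positivity
  have h3 : (4 * s ^ 2 * k) * (F fX (k + 1) s y ^ 2 * k) ≤
      (4 * s ^ 2 * k) * ((k + 1) * (F fX k s y * F fX (k + 2) s y)) := by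
    linarith
  exact le_of_mul_le_mul_left h3 hp

lemma Hyp.F_zero_iff (H : Hyp fX) {k s : ℝ} (hk : 1 ≤ k) (hs : 0 < s) (y : ℝ) :
    F fX k s y = 0 ↔ ∀ᵐ x, x < y → fX x = 0 := by
  unfold F
  rw [integral_eq_zero_iff_of_nonneg
    (fun x => mul_nonneg (H.nonneg x) (pp_nonneg (by linarith) hs _)) (H.int_pp hk hs y)]
  constructor
  · intro h
    filter_upwards [h] with x hx hxy
    have := pp_pos (k := k) (by linarith) hs (sub_pos.mpr hxy)
    simpa [this.ne'] using hx
  · intro h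
    filter_upwards [h, Measure.ae_ne volume y] with x hx hne
    rcases hne.lt_or_gt with h1 | h1
    · simp [hx h1]
    · simp [pp_neg hs (sub_neg.mpr h1)]

lemma Hyp.F_zero (H : Hyp fX) {k s k' s' y : ℝ} (hk : 1 ≤ k) (hs : 0 < s) (hk' : 1 ≤ k')
    (hs' : 0 < s') (h : F fX k s y = 0) : F fX k' s' y = 0 := by
  rw [H.F_zero_iff hk' hs']; rwa [H.F_zero_iff hk hs] at h

lemma Hyp.F_pos (H : Hyp fX) {k s k' s' y : ℝ} (hk : 1 ≤ k) (hs : 0 < s) (hk' : 1 ≤ k')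
    (hs' : 0 < s') (h : 0 < F fX k s y) : 0 < F fX k' s' y :=
  lt_of_le_of_ne (H.F_nonneg hk' hs' y) fun h' => h.ne' (H.F_zero hk' hs' hk hs h'.symm)

lemma Hyp.F_pos_mono (H : Hyp fX) {k s y y' : ℝ} (hk : 1 ≤ k) (hs : 0 < s) (hy : y ≤ y')
    (h : 0 < F fX k s y) : 0 < F fX k s y' := by
  refine lt_of_le_of_ne (H.F_nonneg hk hs y') fun h' => h.ne' ?_
  rw [H.F_zero_iff hk hs]
  filter_upwards [(H.F_zero_iff hk hs y').1 h'.symm] with x hx hxy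
  exact hx (by linarith)

lemma Hyp.F_deriv_s (H : Hyp fX) {k s : ℝ} (hk : 1 ≤ k) (hs : 0 < s) (y : ℝ) :
    HasDerivAt (fun s => F fX k s y) (k / s * (F fX (k + 1) s y - F fX k s y)) s := by
  obtain ⟨C1, hC1, h1⟩ := pp_bound' hk (half_pos hs) (by linarith : s / 2 ≤ 2 * s)
  obtain ⟨C2, hC2, h2⟩ := pp_bound' (k := k + 1) (by linarith) (half_pos hs)
    (by linarith : s / 2 ≤ 2 * s)
  have hk0 : 0 < k := by linarith
  have hms : ∀ k s, AEStronglyMeasurable (fun x => fX x * pp k s (y - x)) := fun k s =>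
    H.int.aestronglyMeasurable.mul
      ((pp_measurable k s).comp (measurable_const.sub measurable_id)).aestronglyMeasurable
  have := (hasDerivAt_integral_of_dominated_loc_of_deriv_le (μ := volume) (𝕜 := ℝ)
    (F := fun s x => fX x * pp k s (y - x)) (x₀ := s) (s := Set.Icc (s / 2) (2 * s))
    (F' := fun s x => fX x * (k / s * (pp (k + 1) s (y - x) - pp k s (y - x))))
    (bound := fun x => fX x * (k / (s / 2) * (C2 + C1)))
    (Icc_mem_nhds (by linarith) (by linarith))
    (Eventually.of_forall fun t => hms k t) (H.int_pp hk hs y) ?_ (ae_of_all _ ?_)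
    (H.int.mul_const _) (ae_of_all _ ?_)).2
  · refine this.congr_deriv ?_
    unfold F
    rw [← integral_sub (H.int_pp (by linarith) hs y) (H.int_pp hk hs y), ← integral_const_mul]
    congr 1; ext x; ring
  · refine (((hms (k+1) s).sub (hms k s)).const_mul (k / s)).congr (ae_of_all _ fun x => ?_)
    simp only [Pi.sub_apply]; ring
  · rintro x t ⟨ht1, ht2⟩
    have ht : 0 < t := by linarith
    rw [Real.norm_eq_abs, abs_mul, abs_of_nonneg (H.nonneg x), abs_mul, abs_of_pos (by positivity)]
    have a1 := pp_nonneg hk0 ht (y - x)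
    have a2 := pp_nonneg (k := k + 1) (by linarith) ht (y - x)
    have b1 := h1 t ht1 ht2 (y - x)
    have b2 := h2 t ht1 ht2 (y - x)
    gcongr
    · exact H.nonneg x
    · rw [abs_le]; constructor <;> linarith
  · rintro x t ⟨ht1, ht2⟩
    exact (pp_deriv_s hk0 (by linarith) (y - x)).const_mul _

lemma Hyp.F_deriv_y (H : Hyp fX) {k s : ℝ} (hk : 2 ≤ k) (hs : 0 < s) (y : ℝ) :
    HasDerivAt (F fX k s) ((F fX (k - 1) s y - F fX k s y) / s) y := by
  obtain ⟨C, hC⟩ := pp_lip hk hs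
  have hms : ∀ k y, AEStronglyMeasurable (fun x => fX x * pp k s (y - x)) := fun k y =>
    H.int.aestronglyMeasurable.mul
      ((pp_measurable k s).comp (measurable_const.sub measurable_id)).aestronglyMeasurable
  have := (hasDerivAt_integral_of_dominated_loc_of_lip (μ := volume) (𝕜 := ℝ)
    (F := fun y x => fX x * pp k s (y - x)) (x₀ := y) (s := Set.univ)
    (F' := fun x => fX x * ((pp (k - 1) s (y - x) - pp k s (y - x)) / s))
    (bound := fun x => fX x * C)
    univ_mem
    (Eventually.of_forall fun t => hms k t) (H.int_pp (by linarith) hs y) ?_ (ae_of_all _ ?_)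
    (H.int.mul_const _) ?_).2
  · refine this.congr_deriv ?_
    unfold F
    rw [← integral_sub (H.int_pp (by linarith) hs y) (H.int_pp (by linarith) hs y),
      ← integral_div]
    congr 1; ext x; ring
  · refine (((hms (k-1) y).sub (hms k y)).const_mul (s⁻¹)).congr (ae_of_all _ fun x => ?_)
    simp only [Pi.sub_apply]; ring
  · intro x
    refine LipschitzOnWith.of_dist_le_mul fun u _ w _ => ?_
    rw [Real.coe_nnabs, abs_of_nonneg (mul_nonneg (H.nonneg x) C.coe_nonneg), Real.dist_eq, ← mul_sub,
      abs_mul, abs_of_nonneg (H.nonneg x), mul_assoc]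
    have := hC.dist_le_mul (u - x) (w - x)
    rw [Real.dist_eq, dist_sub_right] at this
    exact mul_le_mul_of_nonneg_left this (H.nonneg x)
  · filter_upwards [Measure.ae_ne volume y] with x hx
    have := (pp_deriv_z hk hs (sub_ne_zero.mpr hx.symm)).comp_sub_const y x
    exact this.const_mul _

lemma Hyp.F_cont (H : Hyp fX) {k s : ℝ} (hk : 2 ≤ k) (hs : 0 < s) : Continuous (F fX k s) :=
  continuous_iff_continuousAt.mpr fun y => (H.F_deriv_y hk hs y).continuousAt

lemma conv_int {φ : ℝ → ℝ} (hφ : Integrable φ) {k s : ℝ} (hk : 1 ≤ k) (hs : 0 < s) :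
    Integrable (fun y => ∫ x, φ x * pp k s (y - x)) ∧
      ∫ y, ∫ x, φ x * pp k s (y - x) = ∫ x, φ x := by
  obtain ⟨h1, h2⟩ := pp_int (k := k) (by linarith) hs
  have e : (fun y => ∫ x, φ x * pp k s (y - x)) =
      convolution φ (pp k s) (ContinuousLinearMap.mul ℝ ℝ) volume := by
    ext y; rfl
  rw [e]
  refine ⟨hφ.integrable_convolution _ h1, ?_⟩
  rw [integral_convolution _ hφ h1, h2]
  simp

lemma Hyp.F_int (H : Hyp fX) {k s : ℝ} (hk : 1 ≤ k) (hs : 0 < s) :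
    Integrable (F fX k s) ∧ ∫ y, F fX k s y = 1 := by
  have := conv_int H.int hk hs
  rw [H.prob] at this
  exact this

lemma Hyp.F_mean (H : Hyp fX) {k s : ℝ} (hk : 1 ≤ k) (hs : 0 < s) :
    Integrable (fun y => y * F fX k s y) ∧
      ∫ y, y * F fX k s y = (∫ x, x * fX x) + s * k := by
  have h1 := conv_int H.int_mul hk hs
  have h2 := H.F_int (k := k + 1) (by linarith) hs
  have e : (fun y => y * F fX k s y) = fun y =>
      (∫ x, x * fX x * pp k s (y - x)) + s * k * F fX (k + 1) s y := by
    ext y; rw [H.mul_F hk hs]; ring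
  rw [e]
  refine ⟨h1.1.add (h2.1.const_mul _), ?_⟩
  rw [integral_add h1.1 (h2.1.const_mul _), h1.2, integral_const_mul, h2.2, mul_one]

lemma Hyp.F_meas (H : Hyp fX) {k s : ℝ} (hk : 1 ≤ k) (hs : 0 < s) :
    AEMeasurable (F fX k s) := (H.F_int hk hs).1.aemeasurable

noncomputable def dm (B c y : ℝ) : ℝ :=
  (Set.Ici (0:ℝ)).indicator (fun y => B * ((1 + y) ^ 2 * Real.exp (-c * y))) y

lemma sq_exp_bound {c : ℝ} (hc : 0 < c) : ∃ C, 0 < C ∧ ∀ y, 0 ≤ y →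
    (1 + y) ^ 2 * Real.exp (-c * y) ≤ C * Real.exp (-(c / 2) * y) := by
  obtain ⟨C, hC, h⟩ := rpow_le_exp (r := 2) (e := c / 2) (by norm_num) (by positivity)
  refine ⟨C * Real.exp (c / 2), by positivity, fun y hy => ?_⟩
  have := h (1 + y) (by linarith)
  rw [Real.rpow_two] at this
  calc _ ≤ C * Real.exp (c / 2 * (1 + y)) * Real.exp (-c * y) := by gcongr
    _ = _ := by
      rw [mul_assoc, mul_assoc, ← Real.exp_add, ← Real.exp_add]
      congr 2; ring

lemma dm_int (B : ℝ) {c : ℝ} (hc : 0 < c) : Integrable (dm B c) := by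
  unfold dm
  rw [integrable_indicator_iff measurableSet_Ici]
  refine Integrable.const_mul ?_ _
  obtain ⟨C, hC, h⟩ := sq_exp_bound hc
  have h1 : IntegrableOn (fun y => C * Real.exp (-(c / 2) * y)) (Set.Ici 0) := by
    rw [integrableOn_Ici_iff_integrableOn_Ioi]
    exact (exp_neg_integrableOn_Ioi 0 (half_pos hc)).const_mul C
  refine Integrable.mono' h1 (by fun_prop) ?_
  filter_upwards [ae_restrict_mem measurableSet_Ici] with y hy
  rw [Real.norm_eq_abs, abs_of_nonneg (by positivity)]
  exact h y hy

lemma le_dm {B c y u : ℝ} (h0 : y < 0 → u = 0)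
    (h1 : 0 ≤ y → |u| ≤ B * ((1 + y) ^ 2 * Real.exp (-c * y))) : ‖u‖ ≤ dm B c y := by
  unfold dm
  rw [Real.norm_eq_abs]
  rcases lt_or_ge y 0 with hy | hy
  · rw [Set.indicator_of_notMem (by simpa using hy), h0 hy, abs_zero]
  · rw [Set.indicator_of_mem (Set.mem_Ici.mpr hy)]; exact h1 hy

lemma sq_exp_tendsto (B : ℝ) {c : ℝ} (hc : 0 < c) :
    Tendsto (fun y => B * ((1 + y) ^ 2 * Real.exp (-c * y))) atTop (nhds 0) := by
  obtain ⟨C, hC, h⟩ := sq_exp_bound hc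
  have h1 : Tendsto (fun y => C * Real.exp (-(c / 2) * y)) atTop (nhds 0) := by
    have : Tendsto (fun y : ℝ => -(c / 2) * y) atTop atBot :=
      tendsto_id.const_mul_atTop_of_neg (by linarith)
    simpa using (Real.tendsto_exp_atBot.comp this).const_mul C
  have h2 : Tendsto (fun y => (1 + y) ^ 2 * Real.exp (-c * y)) atTop (nhds 0) := by
    refine squeeze_zero' ?_ ?_ h1
    · exact Eventually.of_forall fun y => by positivity
    · filter_upwards [eventually_ge_atTop 0] with y hy using h y hy
  simpa using h2.const_mul B

lemma mul_log_bound {t : ℝ} (ht : 0 ≤ t) : |t * Real.log t| ≤ 2 * Real.sqrt t * (1 + t) := by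
  rcases ht.eq_or_lt with h | h
  · simp [← h]
  set r := Real.sqrt t
  have hr : 0 < r := Real.sqrt_pos.mpr h
  have hrt : t = r ^ 2 := (Real.sq_sqrt ht).symm
  have hl : Real.log t = 2 * Real.log r := by rw [hrt, Real.log_pow]; norm_num
  have l1 : Real.log r ≤ r := (Real.log_le_sub_one_of_pos hr).trans (by linarith)
  have l2 : -Real.log r ≤ r⁻¹ := by
    rw [← Real.log_inv]
    exact (Real.log_le_sub_one_of_pos (inv_pos.mpr hr)).trans (by linarith)
  have e1 : r ^ 2 * r⁻¹ = r := by field_simp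
  rw [hl, hrt, abs_le]
  have p2 : 0 < r ^ 2 := by positivity
  have m1 := mul_le_mul_of_nonneg_left l1 p2.le
  have m2 := mul_le_mul_of_nonneg_left l2 p2.le
  constructor <;> nlinarith [mul_pos hr p2]

lemma Hyp.dom (H : Hyp fX) {k s1 s2 : ℝ} (hk : 1 ≤ k) (h1 : 0 < s1) (h12 : s1 ≤ s2) :
    ∃ B c, 0 < B ∧ 0 < c ∧ ∀ s, s1 ≤ s → s ≤ s2 → ∀ y, 0 ≤ y →
      F fX k s y ≤ B * Real.exp (-c * y) ∧
      |F fX k s y * Real.log (F fX k s y)| ≤ B * Real.exp (-c * y) := by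
  obtain ⟨C, hC, h⟩ := H.F_bound hk h1 h12
  have h2 : 0 < s2 := h1.trans_le h12
  set c := 1 / (2 * s2) with hcdef
  have hc : 0 < c := by positivity
  refine ⟨C + 2 * Real.sqrt C * (1 + C), c / 2, by positivity, by positivity,
    fun s a b y hy => ?_⟩
  have hF := h s a b y
  have hF0 := H.F_nonneg hk (h1.trans_le a) y
  have e1 : Real.exp (-c * y) ≤ Real.exp (-(c / 2) * y) := by
    apply Real.exp_le_exp.mpr
    nlinarith
  have e2 : Real.exp (-c * y) ≤ 1 := by
    apply Real.exp_le_one_iff.mpr; nlinarith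
  have e3 : Real.sqrt (Real.exp (-c * y)) = Real.exp (-(c / 2) * y) := by
    rw [Real.sqrt_eq_rpow, ← Real.exp_mul]; congr 1; ring
  have hE := Real.exp_pos (-(c / 2) * y)
  have hE' := Real.exp_pos (-c * y)
  have hsC : 0 ≤ Real.sqrt C := Real.sqrt_nonneg C
  constructor
  · calc F fX k s y ≤ C * Real.exp (-c * y) := hF
      _ ≤ (C + 2 * Real.sqrt C * (1 + C)) * Real.exp (-(c / 2) * y) := by
        gcongr
        have : 0 ≤ 2 * Real.sqrt C * (1 + C) := by positivity
        linarith
  · calc _ ≤ 2 * Real.sqrt (F fX k s y) * (1 + F fX k s y) := mul_log_bound hF0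
      _ ≤ 2 * Real.sqrt (C * Real.exp (-c * y)) * (1 + C) := by
        gcongr
        nlinarith
      _ = 2 * Real.sqrt C * (1 + C) * Real.exp (-(c / 2) * y) := by
        rw [Real.sqrt_mul hC.le, e3]; ring
      _ ≤ _ := by
        gcongr
        linarith

lemma Hyp.ctl (H : Hyp fX) {k s1 : ℝ} (hk : 1 ≤ k) (h1 : 0 < s1) :
    ∃ K, 1 ≤ K ∧ ∀ s, s1 ≤ s → ∀ y, 0 ≤ y →
      F fX (k + 1) s y ≤ K * (1 + y) * F fX k s y ∧
      F fX (k + 2) s y ≤ (K * (1 + y)) ^ 2 * F fX k s y := by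
  have key : ∀ k, 1 ≤ k → ∀ s, s1 ≤ s → ∀ y, 0 ≤ y →
      F fX (k + 1) s y ≤ (1 + 1 / s1) * (1 + y) * F fX k s y := by
    intro k hk s hs y hy
    have hs0 : 0 < s := h1.trans_le hs
    have := H.F_succ_le hk hs0 y
    refine this.trans ?_
    have h0 := H.F_nonneg hk hs0 y
    gcongr
    calc y / (s * k) ≤ y / (s1 * 1) := by gcongr
      _ = 1 / s1 * y := by field_simp
      _ ≤ _ := by
        have : 0 < 1 / s1 := by positivity
        nlinarith
  refine ⟨1 + 1 / s1, by have : 0 < 1 / s1 := by positivity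
                         linarith, fun s hs y hy => ⟨key k hk s hs y hy, ?_⟩⟩
  have a1 := key k hk s hs y hy
  have a2 := key (k + 1) (by linarith) s hs y hy
  rw [show k + 1 + 1 = k + 2 by ring] at a2
  have hp : 0 ≤ (1 + 1 / s1) * (1 + y) := by positivity
  calc _ ≤ _ := a2
    _ ≤ (1 + 1 / s1) * (1 + y) * ((1 + 1 / s1) * (1 + y) * F fX k s y) := by gcongr
    _ = _ := by ring

/-- integration over the whole line of a derivative supported where `F > 0` -/
lemma Hyp.ibp (H : Hyp fX) {k s : ℝ} (hk : 2 ≤ k) (hs : 0 < s) {u u' w : ℝ → ℝ}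
    (hu0 : ∀ y, F fX k s y = 0 → u' y = 0)
    (hd : ∀ y, 0 < F fX k s y → HasDerivAt u (u' y) y)
    (hint : Integrable u') (hw : Continuous w) (hw0 : ∀ y, F fX k s y = 0 → w y = 0)
    (huw : ∀ y, |u y| ≤ w y)
    {B c : ℝ} (hc : 0 < c) (hB : ∀ y, 0 ≤ y → w y ≤ B * ((1 + y) ^ 2 * Real.exp (-c * y))) :
    ∫ y, u' y = 0 := by
  have hk1 : 1 ≤ k := by linarith
  set S : Set ℝ := {y | 0 < F fX k s y} with hS
  have hSo : IsOpen S := isOpen_lt continuous_const (H.F_cont hk hs)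
  have hSne : S.Nonempty := by
    by_contra hne
    have hz : ∀ y, F fX k s y = 0 := by
      intro y
      by_contra h0
      exact hne ⟨y, lt_of_le_of_ne (H.F_nonneg hk1 hs y) (Ne.symm h0)⟩
    have h1 := (H.F_int hk1 hs).2
    simp [hz] at h1
  have hSb : BddBelow S := by
    refine ⟨0, fun y hy => ?_⟩
    by_contra hlt
    have := H.F_neg (k := k) hs (not_le.mp hlt)
    exact (ne_of_gt hy) this
  set x0 := sInf S with hx0
  have hx0S : x0 ∉ S := by
    intro hmem
    obtain ⟨l, hl, hl2⟩ := exists_Ioc_subset_of_mem_nhds (hSo.mem_nhds hmem) ⟨x0 - 1, by linarith⟩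
    have : (l + x0) / 2 ∈ S := hl2 ⟨by linarith, by linarith⟩
    have := csInf_le hSb this
    linarith
  have hSI : ∀ y, y ∈ S ↔ x0 < y := by
    intro y
    constructor
    · intro hy
      refine lt_of_le_of_ne (csInf_le hSb hy) ?_
      intro h; exact hx0S (h ▸ hy)
    · intro hy
      obtain ⟨z, hz, hzy⟩ := exists_lt_of_csInf_lt hSne hy
      exact H.F_pos_mono hk1 hs hzy.le hz
  have hFz : ∀ y, y ∉ S → F fX k s y = 0 := fun y hy =>
    le_antisymm (not_lt.mp hy) (H.F_nonneg hk1 hs y)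
  have hw00 : w x0 = 0 := hw0 _ (hFz _ hx0S)
  have hu00 : u x0 = 0 := by
    have := huw x0
    rw [hw00] at this
    exact abs_eq_zero.mp (le_antisymm this (abs_nonneg _))
  have hcont : ContinuousAt u x0 := by
    unfold ContinuousAt
    rw [hu00]
    refine squeeze_zero_norm (a := w) (fun y => huw y) ?_
    have := hw.tendsto x0
    rwa [hw00] at this
  have hinf : Tendsto u atTop (nhds 0) := by
    refine squeeze_zero_norm' (a := fun y => B * ((1 + y) ^ 2 * Real.exp (-c * y))) ?_
      (sq_exp_tendsto B hc)
    filter_upwards [eventually_ge_atTop 0] with y hy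
    exact (huw y).trans (hB y hy)
  have := integral_Ioi_of_hasDerivAt_of_tendsto (f := u) (f' := u') (a := x0) (m := 0)
    hcont.continuousWithinAt (fun y hy => hd y ((hSI y).2 hy)) hint.integrableOn hinf
  rw [hu00, sub_zero] at this
  rw [← this]
  symm
  refine setIntegral_eq_integral_of_forall_compl_eq_zero fun y hy => hu0 y (hFz y ?_)
  rw [hSI]; exact hy

lemma int_sub3 {f g h : ℝ → ℝ} (hf : Integrable f) (hg : Integrable g) (hh : Integrable h) :
    ∫ y, (f y - g y - h y) = (∫ y, f y) - (∫ y, g y) - ∫ y, h y := by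
  rw [integral_sub (f := fun y => f y - g y) (hf.sub hg) hh, integral_sub hf hg]

lemma int_sub4 {f g h i : ℝ → ℝ} (hf : Integrable f) (hg : Integrable g) (hh : Integrable h)
    (hi : Integrable i) :
    ∫ y, (f y - g y + h y - i y) = (∫ y, f y) - (∫ y, g y) + (∫ y, h y) - ∫ y, i y := by
  rw [integral_sub (f := fun y => f y - g y + h y) ((hf.sub hg).add hh) hi,
    integral_add (f := fun y => f y - g y) (hf.sub hg) hh, integral_sub hf hg]

lemma Hyp.ctl3 (H : Hyp fX) {k s1 : ℝ} (hk : 1 ≤ k) (h1 : 0 < s1) :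
    ∃ K, 1 ≤ K ∧ ∀ s, s1 ≤ s → ∀ y, 0 ≤ y →
      F fX k s y ≤ K * (1 + y) ^ 2 * F fX k s y ∧
      F fX (k + 1) s y ≤ K * (1 + y) ^ 2 * F fX k s y ∧
      F fX (k + 2) s y ≤ K * (1 + y) ^ 2 * F fX k s y ∧
      (F fX (k + 1) s y - F fX k s y) ^ 2 / F fX k s y ≤ K * (1 + y) ^ 2 * F fX k s y := by
  obtain ⟨K, hK, h⟩ := H.ctl hk h1
  refine ⟨K ^ 2, by nlinarith, fun s hs y hy => ?_⟩
  obtain ⟨a1, a2⟩ := h s hs y hy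
  have h0 := H.F_nonneg hk (h1.trans_le hs) y
  have h0' := H.F_nonneg (k := k + 1) (by linarith) (h1.trans_le hs) y
  have b1 : 1 ≤ K * (1 + y) := by nlinarith
  have b2 : K * (1 + y) ≤ K ^ 2 * (1 + y) ^ 2 := by nlinarith
  have c1 : F fX k s y ≤ K * (1 + y) * F fX k s y := by nlinarith
  have c2 : K * (1 + y) * F fX k s y ≤ K ^ 2 * (1 + y) ^ 2 * F fX k s y := by gcongr
  refine ⟨c1.trans c2, a1.trans c2, by rw [← mul_pow]; exact a2, ?_⟩
  rcases h0.eq_or_lt with hz | hp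
  · rw [← hz]; simp
  · rw [div_le_iff₀ hp]
    calc _ ≤ (K * (1 + y) * F fX k s y) ^ 2 := by
          apply sq_le_sq'
          · linarith
          · linarith
      _ = _ := by ring

lemma Hyp.log_int (H : Hyp fX) {α j s : ℝ} (hα : 1 ≤ α) (hj : 1 ≤ j) (hs : 0 < s) {K : ℝ}
    (hK : ∀ y, 0 ≤ y → F fX j s y ≤ K * (1 + y) ^ 2 * F fX α s y) :
    Integrable (fun y => F fX j s y * Real.log (F fX α s y)) := by
  obtain ⟨B, c, hB, hc, h⟩ := H.dom hα hs le_rfl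
  have m1 := H.F_meas hα hs
  have m2 := H.F_meas hj hs
  refine (dm_int (K * B) hc).mono' (by
    exact (m2.mul m1.log).aestronglyMeasurable) (ae_of_all _ fun y => le_dm ?_ ?_)
  · intro hy; rw [H.F_neg hs hy]; simp
  · intro hy
    have h0 := H.F_nonneg hα hs y
    have h1 := H.F_nonneg hj hs y
    obtain ⟨b1, b2⟩ := h s le_rfl le_rfl y hy
    rcases h0.eq_or_lt with hz | hp
    · rw [← hz] at b2 ⊢
      have hK0 : 0 ≤ B * Real.exp (-c * y) := by positivity
      rw [H.F_zero hα hs hj hs hz.symm]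
      simp only [zero_mul, abs_zero]
      -- need K * B nonneg
      by_cases hKn : 0 ≤ K
      · positivity
      · exfalso
        -- find a point with positive density
        have hall : ∀ y, F fX α s y = 0 := by
          intro z
          by_contra hne
          have hzp : 0 < F fX α s z := lt_of_le_of_ne (H.F_nonneg hα hs z) (Ne.symm hne)
          have hz0 : 0 ≤ z := by
            by_contra hlt
            exact hne (H.F_neg hs (not_le.mp hlt))
          have := hK z hz0
          have hj0 := H.F_nonneg hj hs z
          have : 0 < (1 + z) ^ 2 * F fX α s z := by positivity
          nlinarith
        have := (H.F_int hα hs).2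
        simp [hall] at this
    · have hk := hK y hy
      rw [abs_mul, abs_of_nonneg h1]
      rw [abs_mul, abs_of_nonneg h0] at b2
      have hK0 : 0 ≤ K := by
        by_contra hneg
        have : 0 < (1 + y) ^ 2 * F fX α s y := by positivity
        nlinarith
      calc _ ≤ K * (1 + y) ^ 2 * F fX α s y * |Real.log (F fX α s y)| := by gcongr
        _ = K * (1 + y) ^ 2 * (F fX α s y * |Real.log (F fX α s y)|) := by ring
        _ ≤ K * (1 + y) ^ 2 * (B * Real.exp (-c * y)) := by gcongr
        _ = _ := by ring

lemma Hyp.ratio_le (H : Hyp fX) {α j s y : ℝ} (hα : 1 ≤ α) (_hj : 1 ≤ j) (hs : 0 < s) {K : ℝ}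
    (hK0 : 1 ≤ K)
    (hK : F fX j s y ≤ K * (1 + y) ^ 2 * F fX α s y) :
    F fX j s y / F fX α s y ≤ K * (1 + y) ^ 2 := by
  have h0 := H.F_nonneg hα hs y
  rcases h0.eq_or_lt with hz | hp
  · rw [← hz]; simp; positivity
  · rwa [div_le_iff₀ hp]

lemma Hyp.ratio_int (H : Hyp fX) {α j i s : ℝ} (hα : 1 ≤ α) (hj : 1 ≤ j) (hi : 1 ≤ i)
    (hs : 0 < s) {K : ℝ} (hK0 : 1 ≤ K)
    (hK : ∀ y, 0 ≤ y → F fX j s y ≤ K * (1 + y) ^ 2 * F fX α s y) :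
    Integrable (fun y => F fX j s y * F fX i s y / F fX α s y) := by
  obtain ⟨B, c, hB, hc, h⟩ := H.dom hi hs le_rfl
  have m1 := H.F_meas hα hs
  have m2 := H.F_meas hj hs
  have m3 := H.F_meas hi hs
  refine (dm_int (K * B) hc).mono' (by
    exact ((m2.mul m3).div m1).aestronglyMeasurable) (ae_of_all _ fun y => le_dm ?_ ?_)
  · intro hy; rw [H.F_neg hs hy]; simp
  · intro hy
    have h0 := H.F_nonneg hα hs y
    have h1 := H.F_nonneg hj hs y
    have h2 := H.F_nonneg hi hs y
    obtain ⟨b1, -⟩ := h s le_rfl le_rfl y hy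
    have r := H.ratio_le hα hj hs hK0 (hK y hy)
    rw [abs_of_nonneg (by positivity)]
    calc _ = F fX j s y / F fX α s y * F fX i s y := by ring
      _ ≤ K * (1 + y) ^ 2 * (B * Real.exp (-c * y)) := by gcongr
      _ = _ := by ring

lemma Hyp.D_int (H : Hyp fX) {α s : ℝ} (hα : 3 ≤ α) (hs : 0 < s) :
    Integrable (fun y => F fX (α + 2) s y * F fX (α - 1) s y ^ 2 / F fX α s y ^ 2) := by
  obtain ⟨K, hK0, hK⟩ := H.ctl3 (k := α) (by linarith) hs
  obtain ⟨B, c, hB, hc, h⟩ := H.dom (k := α - 2) (by linarith) hs le_rfl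
  have m1 := H.F_meas (k := α) (by linarith) hs
  have m2 := H.F_meas (k := α + 2) (by linarith) hs
  have m3 := H.F_meas (k := α - 1) (by linarith) hs
  refine (dm_int (K * (((α - 1) / (α - 2)) * B)) hc).mono' (by
    exact ((m2.mul (m3.pow_const 2)).div (m1.pow_const 2)).aestronglyMeasurable)
      (ae_of_all _ fun y => le_dm ?_ ?_)
  · intro hy; rw [H.F_neg hs hy]; simp
  · intro hy
    have h0 := H.F_nonneg (k := α) (by linarith) hs y
    have h1 := H.F_nonneg (k := α + 2) (by linarith) hs y
    have h2 := H.F_nonneg (k := α - 1) (by linarith) hs y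
    have h3 := H.F_nonneg (k := α - 2) (by linarith) hs y
    obtain ⟨b1, -⟩ := h s le_rfl le_rfl y hy
    have r := H.ratio_le (α := α) (j := α + 2) (by linarith) (by linarith) hs hK0
      (hK s le_rfl y hy).2.2.1
    have cs := H.F_cs (k := α - 2) (by linarith) hs y
    rw [show α - 2 + 1 = α - 1 by ring, show α - 2 + 2 = α by ring] at cs
    have hq : 0 ≤ (α - 1) / (α - 2) := div_nonneg (by linarith) (by linarith)
    have r2 : F fX (α - 1) s y ^ 2 / F fX α s y ≤ (α - 1) / (α - 2) * F fX (α - 2) s y := by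
      rcases h0.eq_or_lt with hz | hp
      · rw [← hz]; simp; positivity
      · rw [div_le_iff₀ hp]; linarith
    rw [abs_of_nonneg (by positivity)]
    calc _ = F fX (α + 2) s y / F fX α s y * (F fX (α - 1) s y ^ 2 / F fX α s y) := by ring
      _ ≤ K * (1 + y) ^ 2 * ((α - 1) / (α - 2) * F fX (α - 2) s y) := by gcongr
      _ ≤ K * (1 + y) ^ 2 * ((α - 1) / (α - 2) * (B * Real.exp (-c * y))) := by gcongr
      _ = _ := by ring

lemma Hyp.K_int (H : Hyp fX) {α s : ℝ} (hα : 1 ≤ α) (hs : 0 < s) :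
    Integrable (fun y => (F fX (α + 1) s y - F fX α s y) ^ 2 / F fX α s y) := by
  obtain ⟨K, hK0, hK⟩ := H.ctl3 (k := α) (by linarith) hs
  have i1 := H.ratio_int (α := α) (j := α + 1) (i := α + 1) hα (by linarith) (by linarith) hs hK0
    (fun y hy => (hK s le_rfl y hy).2.1)
  have i2 := (H.F_int (k := α + 1) (by linarith) hs).1
  have i3 := (H.F_int (k := α) (by linarith) hs).1
  refine ((i1.sub (i2.const_mul 2)).add i3).congr (ae_of_all _ fun y => ?_)
  simp only [Pi.add_apply, Pi.sub_apply]
  by_cases hz : F fX α s y = 0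
  · rw [hz, H.F_zero (k' := α + 1) hα hs (by linarith) hs hz]; simp
  · field_simp; ring

/-- integration by parts with the logarithm -/
lemma Hyp.log_ibp (H : Hyp fX) {α j s : ℝ} (hα : 3 ≤ α) (hj : 2 ≤ j) (hs : 0 < s) {K K' : ℝ}
    (hK0 : 1 ≤ K)
    (hK : ∀ y, 0 ≤ y → F fX j s y ≤ K * (1 + y) ^ 2 * F fX α s y)
    (hK' : ∀ y, 0 ≤ y → F fX (j - 1) s y ≤ K' * (1 + y) ^ 2 * F fX α s y) :
    ∫ y, (F fX j s y - F fX (j - 1) s y) * Real.log (F fX α s y) =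
      (∫ y, F fX j s y * F fX (α - 1) s y / F fX α s y) - 1 := by
  have hα1 : 1 ≤ α := by linarith
  have l1 := H.log_int hα1 (by linarith) hs hK
  have l2 := H.log_int hα1 (by linarith) hs hK'
  have l3 := H.ratio_int (i := α - 1) hα1 (by linarith) (by linarith) hs hK0 hK
  have l4 := H.F_int (k := j) (by linarith) hs
  obtain ⟨B, c, hB, hc, hdom⟩ := H.dom hα1 hs le_rfl
  have l12 : Integrable (fun y => (F fX j s y - F fX (j - 1) s y) * Real.log (F fX α s y)) :=
    (l1.sub l2).congr (ae_of_all _ fun y => by simp only [Pi.sub_apply]; ring)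
  have key := H.ibp (k := α) (by linarith) hs
    (u := fun y => F fX j s y * Real.log (F fX α s y))
    (u' := fun y => s⁻¹ * (F fX j s y * F fX (α - 1) s y / F fX α s y - F fX j s y -
      (F fX j s y - F fX (j - 1) s y) * Real.log (F fX α s y)))
    (w := fun y => K * (1 + |y|) ^ 2 * |F fX α s y * Real.log (F fX α s y)|)
    (B := K * B) (c := c) ?_ ?_ ?_ ?_ ?_ ?_ hc ?_
  · rw [integral_const_mul] at key
    have key2 := (mul_eq_zero.mp key).resolve_left (inv_ne_zero hs.ne')
    have key3 := (int_sub3 l3 l4.1 l12).symm.trans key2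
    rw [l4.2] at key3
    linarith
  · intro y hz
    have := H.F_zero (k' := j) hα1 hs (by linarith) hs hz
    simp [hz, this]
  · intro y hp
    have d1 := H.F_deriv_y hj hs y
    have d2 := (H.F_deriv_y (k := α) (by linarith) hs y).log hp.ne'
    refine (d1.mul d2).congr_deriv ?_
    field_simp
    ring
  · exact ((l3.sub l4.1).sub l12).const_mul _
  · have h1 := H.F_cont (k := α) (by linarith) hs
    have h2 := Real.continuous_mul_log.comp h1
    have h3 : Continuous (fun y => F fX α s y * Real.log (F fX α s y)) := h2
    fun_prop
  · intro y hz; simp [hz]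
  · intro y
    rcases lt_or_ge y 0 with hy | hy
    · simp [H.F_neg hs hy]
    · have := hK y hy
      have h1 := H.F_nonneg (k := j) (by linarith) hs y
      have h0 := H.F_nonneg hα1 hs y
      rw [abs_mul, abs_mul, abs_of_nonneg h1, abs_of_nonneg h0, abs_of_nonneg hy, ← mul_assoc]
      gcongr
  · intro y hy
    have b2 := (hdom s le_rfl le_rfl y hy).2
    rw [abs_of_nonneg hy]
    calc _ ≤ K * (1 + y) ^ 2 * (B * Real.exp (-c * y)) := by gcongr
      _ = _ := by ring

lemma Hyp.ratio_ibp (H : Hyp fX) {α s : ℝ} (hα : 3 ≤ α) (hs : 0 < s) :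
    (∫ y, F fX (α + 1) s y * F fX (α - 1) s y / F fX α s y)
    - (∫ y, F fX (α + 2) s y * F fX (α - 1) s y / F fX α s y)
    + (∫ y, F fX (α + 2) s y * F fX (α - 2) s y / F fX α s y)
    - (∫ y, F fX (α + 2) s y * F fX (α - 1) s y ^ 2 / F fX α s y ^ 2) = 0 := by
  have hα1 : 1 ≤ α := by linarith
  obtain ⟨K, hK0, hK⟩ := H.ctl3 (k := α) hα1 hs
  have iA := H.ratio_int (j := α + 1) (i := α - 1) hα1 (by linarith) (by linarith) hs hK0
    (fun y hy => (hK s le_rfl y hy).2.1)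
  have iB := H.ratio_int (j := α + 2) (i := α - 1) hα1 (by linarith) (by linarith) hs hK0
    (fun y hy => (hK s le_rfl y hy).2.2.1)
  have iC := H.ratio_int (j := α + 2) (i := α - 2) hα1 (by linarith) (by linarith) hs hK0
    (fun y hy => (hK s le_rfl y hy).2.2.1)
  have iD := H.D_int hα hs
  obtain ⟨B, c, hB, hc, hdom⟩ := H.dom (k := α - 1) (by linarith) hs le_rfl
  have key := H.ibp (k := α) (by linarith) hs
    (u := fun y => F fX (α + 2) s y * F fX (α - 1) s y / F fX α s y)
    (u' := fun y => s⁻¹ * (F fX (α + 1) s y * F fX (α - 1) s y / F fX α s y -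
      F fX (α + 2) s y * F fX (α - 1) s y / F fX α s y +
      F fX (α + 2) s y * F fX (α - 2) s y / F fX α s y -
      F fX (α + 2) s y * F fX (α - 1) s y ^ 2 / F fX α s y ^ 2))
    (w := fun y => K * (1 + |y|) ^ 2 * F fX (α - 1) s y)
    (B := K * B) (c := c) ?_ ?_ ?_ ?_ ?_ ?_ hc ?_
  · rw [integral_const_mul] at key
    have key2 := (mul_eq_zero.mp key).resolve_left (inv_ne_zero hs.ne')
    exact (int_sub4 iA iB iC iD).symm.trans key2
  · intro y hz; simp [hz]
  · intro y hp
    have d1 := H.F_deriv_y (k := α + 2) (by linarith) hs y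
    have d2 := H.F_deriv_y (k := α - 1) (by linarith) hs y
    have d3 := H.F_deriv_y (k := α) (by linarith) hs y
    rw [show α + 2 - 1 = α + 1 by ring] at d1
    rw [show α - 1 - 1 = α - 2 by ring] at d2
    refine ((d1.mul d2).div d3 hp.ne').congr_deriv ?_
    simp only [Pi.mul_apply]
    field_simp
    ring
  · exact (((iA.sub iB).add iC).sub iD).const_mul _
  · have h1 := H.F_cont (k := α - 1) (by linarith) hs
    fun_prop
  · intro y hz
    simp [H.F_zero (k' := α - 1) hα1 hs (by linarith) hs hz]
  · intro y
    rcases lt_or_ge y 0 with hy | hy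
    · simp [H.F_neg hs hy]
    · have h1 := H.F_nonneg (k := α + 2) (by linarith) hs y
      have h0 := H.F_nonneg hα1 hs y
      have h2 := H.F_nonneg (k := α - 1) (by linarith) hs y
      have r := H.ratio_le (α := α) (j := α + 2) hα1 (by linarith) hs hK0
        (hK s le_rfl y hy).2.2.1
      rw [abs_of_nonneg (by positivity), abs_of_nonneg hy]
      calc _ = F fX (α + 2) s y / F fX α s y * F fX (α - 1) s y := by ring
        _ ≤ _ := by gcongr
  · intro y hy
    have b1 := (hdom s le_rfl le_rfl y hy).1
    rw [abs_of_nonneg hy]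
    calc _ ≤ K * (1 + y) ^ 2 * (B * Real.exp (-c * y)) := by gcongr
      _ = _ := by ring

lemma Hyp.entropy_deriv (H : Hyp fX) {α s : ℝ} (hα : 3 ≤ α) (hs : 0 < s) :
    HasDerivAt (fun s => ∫ y, F fX α s y * Real.log (F fX α s y))
      (α / s * ∫ y, (F fX (α + 1) s y - F fX α s y) * Real.log (F fX α s y)) s := by
  have hα1 : 1 ≤ α := by linarith
  obtain ⟨K, hK0, hK⟩ := H.ctl3 (k := α) hα1 (half_pos hs)
  obtain ⟨B, c, hB, hc, hdom⟩ := H.dom hα1 (half_pos hs) (by linarith : s / 2 ≤ 2 * s)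
  have hKs := hK s (by linarith)
  have l0 := H.log_int (j := α) hα1 (by linarith) hs (fun y hy => (hKs y hy).1)
  have l1 := H.log_int (j := α + 1) hα1 (by linarith) hs (fun y hy => (hKs y hy).2.1)
  have f0 := H.F_int (k := α) hα1 hs
  have f1 := H.F_int (k := α + 1) (by linarith) hs
  have mm : ∀ t, 0 < t → AEMeasurable (F fX α t) := fun t ht => H.F_meas hα1 ht
  have m1 := mm s hs
  have m2 := H.F_meas (k := α + 1) (by linarith) hs
  have := (hasDerivAt_integral_of_dominated_loc_of_deriv_le (μ := volume) (𝕜 := ℝ)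
    (F := fun s y => F fX α s y * Real.log (F fX α s y)) (x₀ := s)
    (s := Set.Icc (s / 2) (2 * s))
    (F' := fun s y => α / s * ((F fX (α + 1) s y - F fX α s y) * (Real.log (F fX α s y) + 1)))
    (bound := dm (α / (s / 2) * (2 * K * (2 * B))) c)
    (Icc_mem_nhds (by linarith) (by linarith)) ?_ l0 ?_ (ae_of_all _ ?_)
    (dm_int _ hc) (ae_of_all _ ?_)).2
  · refine this.congr_deriv ?_
    rw [integral_const_mul]
    congr 1
    have e : ∀ y, (F fX (α + 1) s y - F fX α s y) * (Real.log (F fX α s y) + 1) =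
        (F fX (α + 1) s y - F fX α s y) * Real.log (F fX α s y) +
        (F fX (α + 1) s y - F fX α s y) := fun y => by ring
    simp_rw [e]
    rw [integral_add, integral_sub f1.1 f0.1, f1.2, f0.2]
    · ring
    · exact (l1.sub l0).congr (ae_of_all _ fun y => by simp only [Pi.sub_apply]; ring)
    · exact f1.1.sub f0.1
  · filter_upwards [lt_mem_nhds hs] with t ht
    exact ((mm t ht).mul (mm t ht).log).aestronglyMeasurable
  · exact (((m2.sub m1).mul (m1.log.add_const 1)).const_mul (α / s)).aestronglyMeasurable
  · rintro y t ⟨ht1, ht2⟩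
    have ht : 0 < t := by linarith
    refine le_dm (fun hy => by simp [H.F_neg ht hy]) fun hy => ?_
    obtain ⟨k0, k1, -, -⟩ := hK t ht1 y hy
    obtain ⟨b1, b2⟩ := hdom t ht1 ht2 y hy
    have h0 := H.F_nonneg hα1 ht y
    have h1 := H.F_nonneg (k := α + 1) (by linarith) ht y
    rw [abs_mul, abs_of_nonneg h0] at b2
    have q : |F fX (α + 1) t y - F fX α t y| ≤ 2 * (K * (1 + y) ^ 2 * F fX α t y) := by
      rw [abs_le]; constructor <;> linarith
    have q2 : |Real.log (F fX α t y) + 1| ≤ |Real.log (F fX α t y)| + 1 := by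
      simpa using abs_add_le (Real.log (F fX α t y)) 1
    rw [abs_mul, abs_of_pos (by positivity), abs_mul]
    calc α / t * (|F fX (α + 1) t y - F fX α t y| * |Real.log (F fX α t y) + 1|)
        ≤ α / (s / 2) * (2 * (K * (1 + y) ^ 2 * F fX α t y) * (|Real.log (F fX α t y)| + 1)) := by
          gcongr
      _ = α / (s / 2) * (2 * K * (1 + y) ^ 2 * (F fX α t y * |Real.log (F fX α t y)| +
            F fX α t y)) := by ring
      _ ≤ α / (s / 2) * (2 * K * (1 + y) ^ 2 * (B * Real.exp (-c * y) +
            B * Real.exp (-c * y))) := by gcongr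
      _ = _ := by ring
  · rintro y t ⟨ht1, ht2⟩
    have ht : 0 < t := by linarith
    by_cases hz : F fX α t y = 0
    · have hall : (fun s => F fX α s y * Real.log (F fX α s y)) =ᶠ[nhds t] fun _ => 0 := by
        filter_upwards [lt_mem_nhds ht] with r hr
        rw [H.F_zero hα1 ht hα1 hr hz, zero_mul]
      have h1 : F fX (α + 1) t y = 0 := H.F_zero hα1 ht (by linarith) ht hz
      rw [hz, h1]
      simpa using (hasDerivAt_const t (0:ℝ)).congr_of_eventuallyEq hall
    · have d := H.F_deriv_s hα1 ht y
      refine (d.mul (d.log hz)).congr_deriv ?_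
      field_simp

lemma Hyp.entropy_deriv2 (H : Hyp fX) {α s : ℝ} (hα : 3 ≤ α) (hs : 0 < s) :
    HasDerivAt (fun s => ∫ y, (F fX (α + 1) s y - F fX α s y) * Real.log (F fX α s y))
      ((α + 1) / s * (∫ y, (F fX (α + 2) s y - F fX (α + 1) s y) * Real.log (F fX α s y))
        - α / s * (∫ y, (F fX (α + 1) s y - F fX α s y) * Real.log (F fX α s y))
        + α / s * (∫ y, (F fX (α + 1) s y - F fX α s y) ^ 2 / F fX α s y)) s := by
  have hα1 : 1 ≤ α := by linarith
  obtain ⟨K, hK0, hK⟩ := H.ctl3 (k := α) hα1 (half_pos hs)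
  obtain ⟨B, c, hB, hc, hdom⟩ := H.dom hα1 (half_pos hs) (by linarith : s / 2 ≤ 2 * s)
  have hKs := hK s (by linarith)
  have l0 := H.log_int (j := α) hα1 (by linarith) hs (fun y hy => (hKs y hy).1)
  have l1 := H.log_int (j := α + 1) hα1 (by linarith) hs (fun y hy => (hKs y hy).2.1)
  have l2 := H.log_int (j := α + 2) hα1 (by linarith) hs (fun y hy => (hKs y hy).2.2.1)
  have l10 : Integrable (fun y => (F fX (α + 1) s y - F fX α s y) * Real.log (F fX α s y)) :=
    (l1.sub l0).congr (ae_of_all _ fun y => by simp only [Pi.sub_apply]; ring)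
  have l21 : Integrable (fun y => (F fX (α + 2) s y - F fX (α + 1) s y) *
      Real.log (F fX α s y)) :=
    (l2.sub l1).congr (ae_of_all _ fun y => by simp only [Pi.sub_apply]; ring)
  have lK := H.K_int hα1 hs
  have mm : ∀ t, 0 < t → AEMeasurable (F fX α t) := fun t ht => H.F_meas hα1 ht
  have mm1 : ∀ t, 0 < t → AEMeasurable (F fX (α + 1) t) :=
    fun t ht => H.F_meas (by linarith) ht
  have intF' : Integrable (fun y =>
      (α + 1) / s * ((F fX (α + 2) s y - F fX (α + 1) s y) * Real.log (F fX α s y))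
      - α / s * ((F fX (α + 1) s y - F fX α s y) * Real.log (F fX α s y))
      + α / s * ((F fX (α + 1) s y - F fX α s y) ^ 2 / F fX α s y)) :=
    ((l21.const_mul _).sub (l10.const_mul _)).add (lK.const_mul _)
  have := (hasDerivAt_integral_of_dominated_loc_of_deriv_le (μ := volume) (𝕜 := ℝ)
    (F := fun s y => (F fX (α + 1) s y - F fX α s y) * Real.log (F fX α s y)) (x₀ := s)
    (s := Set.Icc (s / 2) (2 * s))
    (F' := fun s y =>
      (α + 1) / s * ((F fX (α + 2) s y - F fX (α + 1) s y) * Real.log (F fX α s y))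
      - α / s * ((F fX (α + 1) s y - F fX α s y) * Real.log (F fX α s y))
      + α / s * ((F fX (α + 1) s y - F fX α s y) ^ 2 / F fX α s y))
    (bound := dm ((α + 1) / (s / 2) * (5 * K * B)) c)
    (Icc_mem_nhds (by linarith) (by linarith)) ?_ l10 intF'.aestronglyMeasurable (ae_of_all _ ?_)
    (dm_int _ hc) (ae_of_all _ ?_)).2
  · refine this.congr_deriv ?_
    rw [integral_add (f := fun y =>
      (α + 1) / s * ((F fX (α + 2) s y - F fX (α + 1) s y) * Real.log (F fX α s y))
      - α / s * ((F fX (α + 1) s y - F fX α s y) * Real.log (F fX α s y)))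
      ((l21.const_mul _).sub (l10.const_mul _)) (lK.const_mul _),
      integral_sub (l21.const_mul _) (l10.const_mul _), integral_const_mul, integral_const_mul,
      integral_const_mul]
  · filter_upwards [lt_mem_nhds hs] with t ht
    exact (((mm1 t ht).sub (mm t ht)).mul (mm t ht).log).aestronglyMeasurable
  · rintro y t ⟨ht1, ht2⟩
    have ht : 0 < t := by linarith
    refine le_dm (fun hy => by simp [H.F_neg ht hy]) fun hy => ?_
    obtain ⟨k0, k1, k2, k3⟩ := hK t ht1 y hy
    obtain ⟨b1, b2⟩ := hdom t ht1 ht2 y hy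
    have h0 := H.F_nonneg hα1 ht y
    have h1 := H.F_nonneg (k := α + 1) (by linarith) ht y
    have h2 := H.F_nonneg (k := α + 2) (by linarith) ht y
    rw [abs_mul, abs_of_nonneg h0] at b2
    have q : |F fX (α + 1) t y - F fX α t y| ≤ 2 * (K * (1 + y) ^ 2 * F fX α t y) := by
      rw [abs_le]; constructor <;> linarith
    have q2 : |F fX (α + 2) t y - F fX (α + 1) t y| ≤ 2 * (K * (1 + y) ^ 2 * F fX α t y) := by
      rw [abs_le]; constructor <;> linarith
    have k3' : |(F fX (α + 1) t y - F fX α t y) ^ 2 / F fX α t y| ≤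
        K * (1 + y) ^ 2 * F fX α t y := by
      rw [abs_of_nonneg (by positivity)]; exact k3
    have c1 : (α + 1) / t ≤ (α + 1) / (s / 2) := by gcongr
    have c2 : α / t ≤ (α + 1) / (s / 2) := by
      refine le_trans ?_ c1
      gcongr
      linarith
    have t1 : |(α + 1) / t * ((F fX (α + 2) t y - F fX (α + 1) t y) * Real.log (F fX α t y))| ≤
        (α + 1) / (s / 2) * (2 * (K * (1 + y) ^ 2 * F fX α t y) * |Real.log (F fX α t y)|) := by
      rw [abs_mul, abs_mul, abs_of_pos (by positivity : 0 < (α + 1) / t)]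
      gcongr
    have t2 : |α / t * ((F fX (α + 1) t y - F fX α t y) * Real.log (F fX α t y))| ≤
        (α + 1) / (s / 2) * (2 * (K * (1 + y) ^ 2 * F fX α t y) * |Real.log (F fX α t y)|) := by
      rw [abs_mul, abs_mul, abs_of_pos (by positivity : 0 < α / t)]
      gcongr
    have t3 : |α / t * ((F fX (α + 1) t y - F fX α t y) ^ 2 / F fX α t y)| ≤
        (α + 1) / (s / 2) * (K * (1 + y) ^ 2 * F fX α t y) := by
      rw [abs_mul, abs_of_pos (by positivity : 0 < α / t)]
      gcongr
    calc _ ≤ (α + 1) / (s / 2) *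
            (2 * (K * (1 + y) ^ 2 * F fX α t y) * |Real.log (F fX α t y)|) +
          (α + 1) / (s / 2) * (2 * (K * (1 + y) ^ 2 * F fX α t y) * |Real.log (F fX α t y)|) +
          (α + 1) / (s / 2) * (K * (1 + y) ^ 2 * F fX α t y) :=
          (abs_add_le _ _).trans (add_le_add ((abs_sub _ _).trans (add_le_add t1 t2)) t3)
      _ = (α + 1) / (s / 2) * (K * (1 + y) ^ 2 * (4 * (F fX α t y * |Real.log (F fX α t y)|) +
            F fX α t y)) := by ring
      _ ≤ (α + 1) / (s / 2) * (K * (1 + y) ^ 2 * (4 * (B * Real.exp (-c * y)) +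
            B * Real.exp (-c * y))) := by gcongr
      _ = _ := by ring
  · rintro y t ⟨ht1, ht2⟩
    have ht : 0 < t := by linarith
    by_cases hz : F fX α t y = 0
    · have hall : (fun s => (F fX (α + 1) s y - F fX α s y) * Real.log (F fX α s y))
          =ᶠ[nhds t] fun _ => 0 := by
        filter_upwards [lt_mem_nhds ht] with r hr
        rw [H.F_zero hα1 ht hα1 hr hz, Real.log_zero, mul_zero]
      rw [hz]
      simpa using (hasDerivAt_const t (0:ℝ)).congr_of_eventuallyEq hall
    · have d := H.F_deriv_s hα1 ht y
      have d1 := H.F_deriv_s (k := α + 1) (by linarith) ht y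
      rw [show α + 1 + 1 = α + 2 by ring] at d1
      refine ((d1.sub d).mul (d.log hz)).congr_deriv ?_
      simp only [Pi.sub_apply]
      field_simp
end GN



/-- **Second derivative of the differential entropy for gamma noise.**
For a nonnegative `X` with an existing moment generating function and
independent `Gamma(α,1)` noise with `α ≥ 3`,
`d²/da² h(Y) = −(1/(4a³)) ∫ f_{Y_{α−2}} v dy − (1/(4a²√a)) ∫ f_{Y_{α−1}} m dy
  + ((α−1)/(4a²√a)) ∫ f_{Y_{α−1}} v/(y − m_{α−1}) dy − J_a
  − (1/(4a²√a))(√a − E[X])`. -/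
theorem entropy_second_derivative_gamma_noise
    (fX : ℝ → ℝ)
    (hfX_nonneg : ∀ x, 0 ≤ fX x) (hfX_prob : (∫ x, fX x) = 1)
    (hfX_supp : ∀ x, x < 0 → fX x = 0)
    (hfX_mgf : ∀ s : ℝ, Integrable (fun x => Real.exp (s * x) * fX x))
    (α : ℝ) (hα : 3 ≤ α)
    (g : ℝ → ℝ → ℝ)
    (hg : ∀ k w : ℝ, g k w =
      if 0 ≤ w then w ^ (k - 1) * Real.exp (-w) / Real.Gamma k else 0)
    (fYk : ℝ → ℝ → ℝ → ℝ)
    (hfYk : ∀ k b y, fYk k b y =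
      ∫ x, fX x * ((Real.sqrt b)⁻¹ * g k ((y - x) / Real.sqrt b)))
    (a : ℝ) (ha : 0 < a)
    (m : ℝ → ℝ)
    (hm : ∀ y, m y =
      (∫ x, x * fX x * ((Real.sqrt a)⁻¹ * g α ((y - x) / Real.sqrt a))) /
        fYk α a y)
    (v : ℝ → ℝ)
    (hv : ∀ y, v y =
      (∫ x, (y - x) ^ 2 * fX x * ((Real.sqrt a)⁻¹ * g α ((y - x) / Real.sqrt a))) /
        fYk α a y)
    (mam1 : ℝ → ℝ)
    (hmam1 : ∀ y, mam1 y =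
      (∫ x, x * fX x * ((Real.sqrt a)⁻¹ * g (α - 1) ((y - x) / Real.sqrt a))) /
        fYk (α - 1) a y)
    (h : ℝ → ℝ)
    (hh : ∀ b, 0 < b → h b = -∫ y, fYk α b y * Real.log (fYk α b y))
    (Ja : ℝ)
    (hJa : Ja = ∫ y, (deriv (fun b => fYk α b y) a) ^ 2 / fYk α a y) :
    deriv (deriv h) a =
      -(1 / (4 * a ^ 3)) * (∫ y, fYk (α - 2) a y * v y)
      - (1 / (4 * a ^ 2 * Real.sqrt a)) * (∫ y, fYk (α - 1) a y * m y)
      + ((α - 1) / (4 * a ^ 2 * Real.sqrt a)) *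
          (∫ y, fYk (α - 1) a y * (v y / (y - mam1 y)))
      - Ja
      - (1 / (4 * a ^ 2 * Real.sqrt a)) * (Real.sqrt a - ∫ x, x * fX x) := by
  have hgg : g = GN.gg := by
    ext k w; rw [hg]; rfl
  have H : GN.Hyp fX := ⟨hfX_nonneg, hfX_prob, hfX_supp, hfX_mgf⟩
  have hF : ∀ k b y, fYk k b y = GN.F fX k (Real.sqrt b) y := by
    intro k b y; rw [hfYk, hgg]; rfl
  subst hgg
  have hα1 : 1 ≤ α := by linarith
  have hs : 0 < Real.sqrt a := Real.sqrt_pos.mpr ha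
  simp_rw [hF] at hh hJa hm hv hmam1 ⊢
  -- first derivative
  have hd1 : ∀ b, 0 < b → HasDerivAt h (-(α / (2 * b)) *
      ∫ y, (GN.F fX (α + 1) (Real.sqrt b) y - GN.F fX α (Real.sqrt b) y) *
        Real.log (GN.F fX α (Real.sqrt b) y)) b := by
    intro b hb
    have hsb : 0 < Real.sqrt b := Real.sqrt_pos.mpr hb
    have d := ((H.entropy_deriv hα hsb).comp b (Real.hasDerivAt_sqrt hb.ne')).neg
    have e : h =ᶠ[nhds b] -((fun s => ∫ y, GN.F fX α s y * Real.log (GN.F fX α s y)) ∘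
        fun x => Real.sqrt x) := by
      filter_upwards [lt_mem_nhds hb] with t ht
      rw [hh t ht]; rfl
    refine (d.congr_of_eventuallyEq e).congr_deriv ?_
    have hsq : b = Real.sqrt b ^ 2 := (Real.sq_sqrt hb.le).symm
    have : α / (2 * b) = α / Real.sqrt b * (1 / (2 * Real.sqrt b)) := by
      nth_rewrite 1 [hsq]; field_simp
    rw [this]; ring
  have hdd : deriv h =ᶠ[nhds a] fun b => -(α / (2 * b)) *
      ∫ y, (GN.F fX (α + 1) (Real.sqrt b) y - GN.F fX α (Real.sqrt b) y) *
        Real.log (GN.F fX α (Real.sqrt b) y) := by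
    filter_upwards [lt_mem_nhds ha] with t ht using (hd1 t ht).deriv
  have d2 := (H.entropy_deriv2 hα hs).comp a (Real.hasDerivAt_sqrt ha.ne')
  have d3 : HasDerivAt (fun b : ℝ => -(α / (2 * b))) (α / (2 * a ^ 2)) a := by
    have := ((hasDerivAt_inv ha.ne').const_mul (-(α / 2)))
    refine (this.congr_deriv ?_).congr_of_eventuallyEq ?_
    · field_simp
    · exact Eventually.of_forall fun b => by
        simp only [div_eq_mul_inv, mul_inv]; ring
  rw [hdd.deriv_eq]
  have d4 := (d3.mul d2).deriv
  refine Eq.trans d4 ?_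
  simp only [Function.comp_apply]
  -- Fisher information
  have hJ : Ja = α ^ 2 / (4 * a ^ 2) *
      ∫ y, (GN.F fX (α + 1) (Real.sqrt a) y - GN.F fX α (Real.sqrt a) y) ^ 2 /
        GN.F fX α (Real.sqrt a) y := by
    rw [hJa, ← integral_const_mul]
    congr 1; ext y
    have d := ((H.F_deriv_s hα1 hs y).comp a (Real.hasDerivAt_sqrt ha.ne')).deriv
    have d' : deriv (fun b => GN.F fX α (Real.sqrt b) y) a = α / Real.sqrt a *
        (GN.F fX (α + 1) (Real.sqrt a) y - GN.F fX α (Real.sqrt a) y) *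
        (1 / (2 * Real.sqrt a)) := d
    rw [d']
    have : (α / Real.sqrt a * (1 / (2 * Real.sqrt a))) ^ 2 = α ^ 2 / (4 * a ^ 2) := by
      nth_rewrite 3 [← Real.sq_sqrt ha.le]
      field_simp
      norm_num
    rw [← this]; ring
  obtain ⟨K, hK0, hK⟩ := H.ctl3 (k := α) hα1 hs
  have hG := H.log_ibp (j := α + 1) hα (by linarith) hs hK0
    (fun y hy => (hK _ le_rfl y hy).2.1)
    (K' := K) (fun y hy => by rw [add_sub_cancel_right]; exact (hK _ le_rfl y hy).1)
  rw [add_sub_cancel_right] at hG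
  have e21 : α + 2 - 1 = α + 1 := by ring
  have hT := H.log_ibp (j := α + 2) hα (by linarith) hs hK0
    (fun y hy => (hK _ le_rfl y hy).2.2.1)
    (K' := K) (fun y hy => by rw [e21]; exact (hK _ le_rfl y hy).2.1)
  rw [e21] at hT
  have hR := H.ratio_ibp hα hs
  rw [hG, hT]
  have hpos : ∀ y, GN.F fX α (Real.sqrt a) y ≠ 0 → GN.F fX (α - 1) (Real.sqrt a) y ≠ 0 :=
    fun y hy h0 => hy (H.F_zero (k := α - 1) (by linarith) hs hα1 hs h0)
  have hzero : ∀ k, 1 ≤ k → ∀ y, GN.F fX α (Real.sqrt a) y = 0 →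
      GN.F fX k (Real.sqrt a) y = 0 := fun k hk y hy => H.F_zero hα1 hs hk hs hy
  have hv' : ∀ y, v y = a * (α * (α + 1)) * GN.F fX (α + 2) (Real.sqrt a) y /
      GN.F fX α (Real.sqrt a) y := by
    intro y
    have := GN.Hyp.sq_F (fX := fX) hα1 hs y
    rw [Real.sq_sqrt ha.le] at this
    rw [hv, ← this]; rfl
  have hm' : ∀ y, m y = (y * GN.F fX α (Real.sqrt a) y -
      Real.sqrt a * α * GN.F fX (α + 1) (Real.sqrt a) y) / GN.F fX α (Real.sqrt a) y := by
    intro y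
    rw [hm, ← H.mul_F hα1 hs y]; rfl
  have hmam1' : ∀ y, mam1 y = (y * GN.F fX (α - 1) (Real.sqrt a) y -
      Real.sqrt a * (α - 1) * GN.F fX α (Real.sqrt a) y) / GN.F fX (α - 1) (Real.sqrt a) y := by
    intro y
    have := H.mul_F (k := α - 1) (by linarith) hs y
    rw [sub_add_cancel] at this
    rw [hmam1, ← this]; rfl
  have hI1 : ∫ y, GN.F fX (α - 2) (Real.sqrt a) y * v y = a * (α * (α + 1)) *
      ∫ y, GN.F fX (α + 2) (Real.sqrt a) y * GN.F fX (α - 2) (Real.sqrt a) y /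
        GN.F fX α (Real.sqrt a) y := by
    rw [← integral_const_mul]
    congr 1; ext y; rw [hv']; ring
  have hI2 : ∫ y, GN.F fX (α - 1) (Real.sqrt a) y * m y =
      ((∫ x, x * fX x) + Real.sqrt a * (α - 1)) - Real.sqrt a * α *
      ∫ y, GN.F fX (α + 1) (Real.sqrt a) y * GN.F fX (α - 1) (Real.sqrt a) y /
        GN.F fX α (Real.sqrt a) y := by
    have mean := H.F_mean (k := α - 1) (by linarith) hs
    have iA := H.ratio_int (j := α + 1) (i := α - 1) hα1 (by linarith) (by linarith) hs hK0
      (fun y hy => (hK _ le_rfl y hy).2.1)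
    rw [← mean.2, ← integral_const_mul, ← integral_sub mean.1 (iA.const_mul _)]
    congr 1; ext y; rw [hm']
    by_cases h0 : GN.F fX α (Real.sqrt a) y = 0
    · rw [h0, hzero (α - 1) (by linarith) y h0]; simp
    · field_simp
  have hI3 : (α - 1) * ∫ y, GN.F fX (α - 1) (Real.sqrt a) y * (v y / (y - mam1 y)) =
      Real.sqrt a * (α * (α + 1)) *
      ∫ y, GN.F fX (α + 2) (Real.sqrt a) y * GN.F fX (α - 1) (Real.sqrt a) y ^ 2 /
        GN.F fX α (Real.sqrt a) y ^ 2 := by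
    rw [← integral_const_mul, ← integral_const_mul]
    congr 1; ext y
    by_cases h0 : GN.F fX α (Real.sqrt a) y = 0
    · rw [h0, hzero (α - 1) (by linarith) y h0]; simp
    · have h1 := hpos y h0
      have hym : y - mam1 y = Real.sqrt a * (α - 1) * GN.F fX α (Real.sqrt a) y /
          GN.F fX (α - 1) (Real.sqrt a) y := by
        rw [hmam1']; field_simp; ring
      have hα2 : α - 1 ≠ 0 := by linarith
      rw [hym, hv']
      have hsq : a = Real.sqrt a * Real.sqrt a := (Real.mul_self_sqrt ha.le).symm
      generalize Real.sqrt a = s at *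
      subst hsq
      field_simp
  rw [hI1, hI2, hJ, div_mul_eq_mul_div (α - 1), hI3]
  have hsq : a = Real.sqrt a * Real.sqrt a := (Real.mul_self_sqrt ha.le).symm
  generalize (∫ y, GN.F fX (α + 1) (Real.sqrt a) y * GN.F fX (α - 1) (Real.sqrt a) y /
        GN.F fX α (Real.sqrt a) y) = A at *
  generalize (∫ y, GN.F fX (α + 2) (Real.sqrt a) y * GN.F fX (α - 1) (Real.sqrt a) y /
        GN.F fX α (Real.sqrt a) y) = B at *
  generalize (∫ y, GN.F fX (α + 2) (Real.sqrt a) y * GN.F fX (α - 2) (Real.sqrt a) y /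
        GN.F fX α (Real.sqrt a) y) = C at *
  generalize (∫ y, GN.F fX (α + 2) (Real.sqrt a) y * GN.F fX (α - 1) (Real.sqrt a) y ^ 2 /
        GN.F fX α (Real.sqrt a) y ^ 2) = D at *
  generalize (∫ y, (GN.F fX (α + 1) (Real.sqrt a) y - GN.F fX α (Real.sqrt a) y) ^ 2 /
        GN.F fX α (Real.sqrt a) y) = J at *
  generalize (∫ x, x * fX x) = E at *
  have hD : D = A - B + C := by linarith
  subst hD
  clear * - hs hsq
  generalize Real.sqrt a = s at *
  subst hsq
  field_simp
  ring
end

section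
/- (Derivative of the Fisher information) For every a > 0, the Fisher information J(a) = ∫ f_Y(y;a) S_Y(y;a)² dy of the output of the additive Gaussian noise channel is differentiable in a and d/da J(a) = −∫ f_Y(y;a) (∂/∂y S_Y(y;a))² dy, where S_Y(y;a) = ∂/∂y log f_Y(y;a). -/
open MeasureTheory Filter

/-- Gaussian kernel. -/
noncomputable def gk (a u : ℝ) : ℝ := (Real.sqrt (2 * Real.pi * a))⁻¹ * Real.exp (-u ^ 2 / (2 * a))

/-- polynomial growth, uniformly for `a ∈ [l, r]` -/
def Tame (l r : ℝ) (p : ℝ → ℝ → ℝ) : Prop :=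
  ∃ c : ℝ, ∃ n : ℕ, 0 ≤ c ∧ ∀ a, l ≤ a → a ≤ r → ∀ u, |p a u| ≤ c * (1 + u ^ 2) ^ n

lemma Tame.mul {l r : ℝ} {p q : ℝ → ℝ → ℝ} (hp : Tame l r p) (hq : Tame l r q) :
    Tame l r (fun a u => p a u * q a u) := by
  obtain ⟨c, n, hc, h⟩ := hp
  obtain ⟨d, m, hd, k⟩ := hq
  refine ⟨c * d, n + m, by positivity, fun a h1 h2 u => ?_⟩
  rw [abs_mul, pow_add]
  calc |p a u| * |q a u| ≤ (c * (1 + u ^ 2) ^ n) * (d * (1 + u ^ 2) ^ m) :=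
        mul_le_mul (h a h1 h2 u) (k a h1 h2 u) (abs_nonneg _) (by positivity)
    _ = _ := by ring

lemma Tame.add {l r : ℝ} {p q : ℝ → ℝ → ℝ} (hp : Tame l r p) (hq : Tame l r q) :
    Tame l r (fun a u => p a u + q a u) := by
  obtain ⟨c, n, hc, h⟩ := hp
  obtain ⟨d, m, hd, k⟩ := hq
  refine ⟨c + d, n + m, by positivity, fun a h1 h2 u => ?_⟩
  have e : 1 ≤ 1 + u ^ 2 := by nlinarith [sq_nonneg u]
  have e1 : (1 + u ^ 2) ^ n ≤ (1 + u ^ 2) ^ (n + m) := pow_le_pow_right₀ e (by omega)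
  have e2 : (1 + u ^ 2) ^ m ≤ (1 + u ^ 2) ^ (n + m) := pow_le_pow_right₀ e (by omega)
  calc |p a u + q a u| ≤ |p a u| + |q a u| := abs_add_le _ _
    _ ≤ c * (1 + u ^ 2) ^ n + d * (1 + u ^ 2) ^ m := add_le_add (h a h1 h2 u) (k a h1 h2 u)
    _ ≤ c * (1 + u ^ 2) ^ (n+m) + d * (1 + u ^ 2) ^ (n+m) := by gcongr
    _ = _ := by ring

lemma tame_const (l r k : ℝ) : Tame l r (fun _ _ => k) :=
  ⟨|k|, 0, abs_nonneg _, fun a _ _ u => by simp⟩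

lemma tame_var (l r : ℝ) : Tame l r (fun _ u => u) :=
  ⟨1, 1, zero_le_one, fun a _ _ u => by
    rw [abs_le]; constructor <;> nlinarith [sq_nonneg (u - 1), sq_nonneg (u + 1)]⟩

lemma tame_inv {l : ℝ} (hl : 0 < l) (r : ℝ) : Tame l r (fun a _ => a⁻¹) :=
  ⟨l⁻¹, 0, by positivity, fun a h _ u => by
    have : 0 < a := hl.trans_le h
    rw [abs_of_pos (by positivity)]
    simpa using inv_anti₀ hl h⟩

lemma gk_pos {a : ℝ} (ha : 0 < a) (u : ℝ) : 0 < gk a u := by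
  have := Real.pi_pos
  unfold gk; positivity

lemma gk_bound {l r : ℝ} (hl : 0 < l) (hr : 0 < r) (n : ℕ) :
    ∃ K : ℝ, 0 ≤ K ∧ ∀ a, l ≤ a → a ≤ r → ∀ u, (1 + u ^ 2) ^ n * gk a u ≤ K := by
  have hpi := Real.pi_pos
  refine ⟨(Real.sqrt (2 * Real.pi * l))⁻¹ * ((2 * r) ^ n * n.factorial * Real.exp (1 / (2 * r))),
    by positivity, fun a h1 h2 u => ?_⟩
  have ha : 0 < a := hl.trans_le h1
  unfold gk
  have e1 : (Real.sqrt (2 * Real.pi * a))⁻¹ ≤ (Real.sqrt (2 * Real.pi * l))⁻¹ := by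
    gcongr
  have e2 : Real.exp (-u ^ 2 / (2 * a)) ≤ Real.exp (-u ^ 2 / (2 * r)) := by
    apply Real.exp_le_exp.2
    rw [neg_div, neg_div, neg_le_neg_iff]
    gcongr
  have e3 := Real.pow_div_factorial_le_exp ((1 + u ^ 2) / (2 * r)) (by positivity) n
  have e4 : (1 + u ^ 2) ^ n ≤ (2 * r) ^ n * n.factorial * Real.exp ((1 + u ^ 2) / (2 * r)) := by
    rw [div_pow, div_div, div_le_iff₀ (by positivity)] at e3
    linarith
  have e5 : (1 + u ^ 2) ^ n * Real.exp (-u ^ 2 / (2 * r)) ≤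
      (2 * r) ^ n * n.factorial * Real.exp (1 / (2 * r)) := by
    calc _ ≤ (2 * r) ^ n * n.factorial * Real.exp ((1 + u ^ 2) / (2 * r)) *
          Real.exp (-u ^ 2 / (2 * r)) := by gcongr
      _ = _ := by rw [mul_assoc, ← Real.exp_add]; congr 2; ring
  calc _ = (Real.sqrt (2 * Real.pi * a))⁻¹ * ((1 + u ^ 2) ^ n * Real.exp (-u ^ 2 / (2 * a))) := by ring
    _ ≤ (Real.sqrt (2 * Real.pi * l))⁻¹ * ((1 + u ^ 2) ^ n * Real.exp (-u ^ 2 / (2 * r))) := by gcongr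
    _ ≤ _ := by gcongr

lemma Tame.bound {l r : ℝ} (hl : 0 < l) (hr : 0 < r) {p : ℝ → ℝ → ℝ} (hp : Tame l r p) :
    ∃ K : ℝ, 0 ≤ K ∧ ∀ a, l ≤ a → a ≤ r → ∀ u, |p a u * gk a u| ≤ K * (1 + u ^ 2)⁻¹ := by
  obtain ⟨c, n, hc, h⟩ := hp
  obtain ⟨K, hK, k⟩ := gk_bound hl hr (n + 1)
  refine ⟨c * K, by positivity, fun a h1 h2 u => ?_⟩
  have hg := gk_pos (hl.trans_le h1) u
  rw [abs_mul, abs_of_pos hg, ← div_eq_mul_inv, le_div_iff₀ (by positivity)]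
  calc |p a u| * gk a u * (1 + u ^ 2) ≤ (c * (1 + u ^ 2) ^ n) * gk a u * (1 + u ^ 2) := by
        gcongr; exact h a h1 h2 u
    _ = c * ((1 + u ^ 2) ^ (n + 1) * gk a u) := by ring
    _ ≤ _ := by gcongr; exact k a h1 h2 u

lemma gk_deriv_u {a : ℝ} (ha : 0 < a) (u : ℝ) : HasDerivAt (gk a) (-(u * a⁻¹) * gk a u) u := by
  unfold gk
  have h1 : HasDerivAt (fun u : ℝ => -u ^ 2 / (2 * a)) (-(u * a⁻¹)) u := by
    have := ((hasDerivAt_pow 2 u).neg).div_const (2 * a)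
    refine this.congr_deriv ?_
    field_simp
    simp
  refine (h1.exp.const_mul (Real.sqrt (2 * Real.pi * a))⁻¹).congr_deriv ?_
  ring

lemma gk_deriv_a {a : ℝ} (ha : 0 < a) (u : ℝ) :
    HasDerivAt (fun a => gk a u) ((u * a⁻¹ * (u * a⁻¹) - a⁻¹) / 2 * gk a u) a := by
  unfold gk
  have hpi := Real.pi_pos
  have hs : 0 < Real.sqrt (2 * Real.pi * a) := by positivity
  have h1 : HasDerivAt (fun a : ℝ => -u ^ 2 / (2 * a)) (u ^ 2 / (2 * a ^ 2)) a := by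
    have := (((hasDerivAt_id a).const_mul 2).inv (by simp; positivity)).const_mul (-u ^ 2)
    refine this.congr_deriv ?_
    simp only [id]
    field_simp
  have h0 : HasDerivAt (fun a : ℝ => 2 * Real.pi * a) (2 * Real.pi) a := by
    simpa using (hasDerivAt_id a).const_mul (2 * Real.pi)
  have h2 : HasDerivAt (fun a : ℝ => (Real.sqrt (2 * Real.pi * a))⁻¹)
      (-(1 / (2 * a)) * (Real.sqrt (2 * Real.pi * a))⁻¹) a := by
    refine ((h0.sqrt (by positivity)).inv hs.ne').congr_deriv ?_
    have e : Real.sqrt (2 * Real.pi * a) ^ 2 = 2 * Real.pi * a := Real.sq_sqrt (by positivity)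
    rw [e]
    field_simp
  refine (h2.mul h1.exp).congr_deriv ?_
  field_simp
  ring

lemma int_conv {f : ℝ → ℝ} (hf : Integrable f) {φ : ℝ → ℝ} (hφ : Continuous φ) {K : ℝ} (hK : ∀ u, |φ u| ≤ K) (y : ℝ) :
    Integrable (fun x => f x * φ (y - x)) := by
  refine hf.mul_bdd (c := K) (by fun_prop) (Eventually.of_forall fun x => ?_)
  exact hK _

lemma deriv_conv {f : ℝ → ℝ} (hf : Integrable f) {φ φ' : ℝ → ℝ} (hd : ∀ u, HasDerivAt φ (φ' u) u) (hφ' : Continuous φ')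
    {K K' : ℝ} (hK : ∀ u, |φ u| ≤ K) (hK' : ∀ u, |φ' u| ≤ K') (y : ℝ) :
    HasDerivAt (fun y => ∫ x, f x * φ (y - x)) (∫ x, f x * φ' (y - x)) y := by
  have hφ : Continuous φ := continuous_iff_continuousAt.2 fun u => (hd u).continuousAt
  refine (hasDerivAt_integral_of_dominated_loc_of_deriv_le (s := Set.univ) (F := fun y x => f x * φ (y - x)) (F' := fun y x => f x * φ' (y - x)) (bound := fun x => |f x| * K')
    Filter.univ_mem (Eventually.of_forall fun y => (int_conv hf hφ hK y).aestronglyMeasurable)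
    (int_conv hf hφ hK y) (int_conv hf hφ' hK' y).aestronglyMeasurable ?_ (hf.abs.mul_const _) ?_).2
  · refine Eventually.of_forall fun x y _ => ?_
    rw [Real.norm_eq_abs, abs_mul]
    gcongr
    exact hK' _
  · refine Eventually.of_forall fun x y _ => ?_
    have := (hd (y - x)).comp y ((hasDerivAt_id y).sub_const x)
    simpa using this.const_mul (f x)

lemma deriv_param {f : ℝ → ℝ} (hf : Integrable f) {φ φ' : ℝ → ℝ → ℝ} {l r : ℝ} (hd : ∀ a, l < a → a < r → ∀ u, HasDerivAt (fun a => φ a u) (φ' a u) a)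
    (hφ : ∀ a, l < a → a < r → Continuous (φ a))
    (hφ' : ∀ a, l < a → a < r → Continuous (φ' a))
    {K K' : ℝ} (hK : ∀ a, l < a → a < r → ∀ u, |φ a u| ≤ K)
    (hK' : ∀ a, l < a → a < r → ∀ u, |φ' a u| ≤ K') (y : ℝ) {a : ℝ} (h1 : l < a) (h2 : a < r) :
    HasDerivAt (fun a => ∫ x, f x * φ a (y - x)) (∫ x, f x * φ' a (y - x)) a := by
  have hn : Set.Ioo l r ∈ nhds a := Ioo_mem_nhds h1 h2
  refine (hasDerivAt_integral_of_dominated_loc_of_deriv_le (s := Set.Ioo l r) (F := fun a x => f x * φ a (y - x)) (F' := fun a x => f x * φ' a (y - x)) (bound := fun x => |f x| * K')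
    hn ?_
    (int_conv hf (hφ a h1 h2) (hK a h1 h2) y) (int_conv hf (hφ' a h1 h2) (hK' a h1 h2) y).aestronglyMeasurable
    ?_ (hf.abs.mul_const _) ?_).2
  · filter_upwards [hn] with b hb
    exact (int_conv hf (hφ b hb.1 hb.2) (hK b hb.1 hb.2) y).aestronglyMeasurable
  · refine Eventually.of_forall fun x b hb => ?_
    rw [Real.norm_eq_abs, abs_mul]
    gcongr
    exact hK' b hb.1 hb.2 _
  · refine Eventually.of_forall fun x b hb => ?_
    exact (hd b hb.1 hb.2 (y - x)).const_mul (f x)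

lemma int_P {f : ℝ → ℝ} (hf : Integrable f) : Integrable (fun y => ∫ x, f x * (1 + (y - x) ^ 2)⁻¹) := by
  have := hf.integrable_convolution (ContinuousLinearMap.mul ℝ ℝ) integrable_inv_one_add_sq
  exact this

lemma conv_le {f : ℝ → ℝ} (hf : Integrable f) {φ : ℝ → ℝ} (h0 : ∀ x, 0 ≤ f x) (hφ : Continuous φ) {K : ℝ}
    (hK : ∀ u, |φ u| ≤ K * (1 + u ^ 2)⁻¹) (hK0 : 0 ≤ K) (y : ℝ) :
    ∫ x, f x * φ (y - x) ≤ K * ∫ x, f x * (1 + (y - x) ^ 2)⁻¹ := by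
  have hc : Continuous (fun u : ℝ => (1 + u ^ 2)⁻¹) :=
    Continuous.inv₀ (by fun_prop) (fun u => by positivity)
  have h1 : ∀ u : ℝ, (1 + u ^ 2)⁻¹ ≤ 1 := fun u => inv_le_one_of_one_le₀ (by nlinarith [sq_nonneg u])
  rw [← integral_const_mul]
  refine integral_mono (int_conv hf hφ (K := K) (fun u => (hK u).trans ?_) y)
    ((int_conv hf hc (K := 1) (fun u => ?_) y).const_mul K) fun x => ?_
  · exact mul_le_of_le_one_right hK0 (h1 u)
  · rw [abs_of_pos (by positivity)]; exact h1 u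
  · have := (le_abs_self _).trans (hK (y - x))
    have := mul_le_mul_of_nonneg_left this (h0 x)
    simp only
    linarith

lemma conv_cs {f : ℝ → ℝ} (hf : Integrable f) {g p : ℝ → ℝ} (h0 : ∀ x, 0 ≤ f x) (hg0 : ∀ u, 0 ≤ g u) (hg : Continuous g) (hp : Continuous p)
    {K0 K1 K2 : ℝ} (hK0 : ∀ u, |g u| ≤ K0) (hK1 : ∀ u, |p u * g u| ≤ K1) (hK2 : ∀ u, |p u * p u * g u| ≤ K2)
    (y : ℝ) :
    (∫ x, f x * (p (y - x) * g (y - x))) ^ 2 ≤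
      (∫ x, f x * g (y - x)) * ∫ x, f x * (p (y - x) * p (y - x) * g (y - x)) := by
  have i0 := int_conv hf hg hK0 y
  have i1 := int_conv hf (hp.mul hg) hK1 y
  have i2 := int_conv hf ((hp.mul hp).mul hg) hK2 y
  simp only [Pi.mul_apply] at i1 i2
  set A := ∫ x, f x * g (y - x)
  set B := ∫ x, f x * (p (y - x) * g (y - x)) 
  set C := ∫ x, f x * (p (y - x) * p (y - x) * g (y - x))
  have key : ∀ t : ℝ, 0 ≤ A * (t * t) + (2 * B) * t + C := by
    intro t
    have e : A * (t * t) + (2 * B) * t + C =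
        ∫ x, (f x * g (y - x)) * (t + p (y - x)) ^ 2 := by
      rw [mul_comm A, mul_right_comm 2 B t]
      rw [← integral_const_mul, ← integral_const_mul, ← integral_add, ← integral_add]
      · congr 1; ext x; ring
      · exact (i0.const_mul _).add (by convert i1.const_mul (2*t) using 2)
      · exact i2
      · exact i0.const_mul _
      · convert i1.const_mul (2*t) using 2
    rw [e]
    exact integral_nonneg fun x => mul_nonneg (mul_nonneg (h0 x) (hg0 _)) (sq_nonneg _)
  have := discrim_le_zero key
  unfold discrim at this
  nlinarith

lemma conv_pos {f : ℝ → ℝ} (hf : Integrable f) {g : ℝ → ℝ} (h0 : ∀ x, 0 ≤ f x) (h1 : ∫ x, f x = 1) (hg0 : ∀ u, 0 < g u) (hg : Continuous g)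
    {K0 : ℝ} (hK0 : ∀ u, |g u| ≤ K0) (y : ℝ) : 0 < ∫ x, f x * g (y - x) := by
  rw [integral_pos_iff_support_of_nonneg (fun x => mul_nonneg (h0 x) (hg0 _).le) (int_conv hf hg hK0 y)]
  have : 0 < ∫ x, f x := by rw [h1]; norm_num
  rw [integral_pos_iff_support_of_nonneg h0 hf] at this
  convert this using 2
  ext x
  simp [(hg0 (y - x)).ne']


lemma pt1 {F0 F1 T : ℝ} (h : 0 < F0) (h1 : F1 ^ 2 ≤ F0 * T) : F1 ^ 2 / F0 ≤ T := by
  rw [div_le_iff₀ h]; linarith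

lemma pt4 {F0 F1 T : ℝ} (h : 0 < F0) (h1 : F1 ^ 4 ≤ F0 ^ 3 * T) : F1 ^ 4 / F0 ^ 3 ≤ T := by
  rw [div_le_iff₀ (by positivity)]; linarith

lemma ptprod {F0 F1 F2 T : ℝ} (h : 0 < F0) (h1 : F1 ^ 2 ≤ F0 * T) (h2 : F2 ^ 2 ≤ F0 * T) :
    |F1 * F2 / F0| ≤ T := by
  rw [abs_div, abs_of_pos h, div_le_iff₀ h, abs_le]
  constructor <;> nlinarith [sq_nonneg (F1 + F2), sq_nonneg (F1 - F2)]

lemma ptthree {F0 F1 F2 T : ℝ} (h : 0 < F0) (h1 : F1 ^ 4 ≤ F0 ^ 3 * T) (h2 : F2 ^ 2 ≤ F0 * T) :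
    |F1 ^ 2 * F2 / F0 ^ 2| ≤ T := by
  have e : F1 ^ 2 * F2 / F0 ^ 2 = (F1 ^ 2 / F0) * F2 / F0 := by field_simp
  rw [e]
  refine ptprod h ?_ h2
  rw [div_pow, div_le_iff₀ (by positivity)]
  nlinarith

lemma core (F0 F1 F2 F3 : ℝ → ℝ → ℝ) (T : ℝ → ℝ) (l r a : ℝ) (hla : l < a) (har : a < r)
    (hT : Integrable T)
    (hpos : ∀ b ∈ Set.Ioo l r, ∀ y, 0 < F0 b y)
    (d0 : ∀ b ∈ Set.Ioo l r, ∀ y, HasDerivAt (F0 b) (F1 b y) y)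
    (d1 : ∀ b ∈ Set.Ioo l r, ∀ y, HasDerivAt (F1 b) (F2 b y) y)
    (d2 : ∀ b ∈ Set.Ioo l r, ∀ y, HasDerivAt (F2 b) (F3 b y) y)
    (c3 : ∀ b ∈ Set.Ioo l r, Continuous (F3 b))
    (e0 : ∀ b ∈ Set.Ioo l r, ∀ y, HasDerivAt (fun b => F0 b y) (F2 b y / 2) b)
    (e1 : ∀ b ∈ Set.Ioo l r, ∀ y, HasDerivAt (fun b => F1 b y) (F3 b y / 2) b)
    (b1 : ∀ b ∈ Set.Ioo l r, ∀ y, F1 b y ^ 2 ≤ F0 b y * T y)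
    (b2 : ∀ b ∈ Set.Ioo l r, ∀ y, F2 b y ^ 2 ≤ F0 b y * T y)
    (b3 : ∀ b ∈ Set.Ioo l r, ∀ y, F3 b y ^ 2 ≤ F0 b y * T y)
    (b4 : ∀ b ∈ Set.Ioo l r, ∀ y, F1 b y ^ 4 ≤ F0 b y ^ 3 * T y) :
    HasDerivAt (fun b => ∫ y, F1 b y ^ 2 / F0 b y)
      (-∫ y, F0 a y * ((F2 a y * F0 a y - F1 a y * F1 a y) / F0 a y ^ 2) ^ 2) a := by
  have hn : Set.Ioo l r ∈ nhds a := Ioo_mem_nhds hla har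
  have ha : a ∈ Set.Ioo l r := ⟨hla, har⟩
  have c0 : ∀ b ∈ Set.Ioo l r, Continuous (F0 b) := fun b hb =>
    continuous_iff_continuousAt.2 fun u => (d0 b hb u).continuousAt
  have c1 : ∀ b ∈ Set.Ioo l r, Continuous (F1 b) := fun b hb =>
    continuous_iff_continuousAt.2 fun u => (d1 b hb u).continuousAt
  have c2 : ∀ b ∈ Set.Ioo l r, Continuous (F2 b) := fun b hb =>
    continuous_iff_continuousAt.2 fun u => (d2 b hb u).continuousAt
  have cI : ∀ b ∈ Set.Ioo l r, Continuous (fun y => F1 b y ^ 2 / F0 b y) := fun b hb =>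
    ((c1 b hb).pow 2).div (c0 b hb) fun y => (hpos b hb y).ne'
  set D : ℝ → ℝ → ℝ := fun b y =>
    F1 b y * F3 b y / F0 b y - 1 / 2 * (F1 b y ^ 2 * F2 b y / F0 b y ^ 2) with hD
  have cD : Continuous (D a) := by
    refine Continuous.sub (((c1 a ha).mul (c3 a ha)).div (c0 a ha) fun y => (hpos a ha y).ne') ?_
    refine Continuous.mul continuous_const ?_
    exact (((c1 a ha).pow 2).mul (c2 a ha)).div ((c0 a ha).pow 2) fun y =>
      pow_ne_zero 2 (hpos a ha y).ne'
  have T2 : Integrable (fun y => 2 * T y) := hT.const_mul 2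
  have bD : ∀ b ∈ Set.Ioo l r, ∀ y, |D b y| ≤ 2 * T y := by
    intro b hb y
    have h1 := ptprod (hpos b hb y) (b1 b hb y) (b3 b hb y)
    have h2 := ptthree (hpos b hb y) (b4 b hb y) (b2 b hb y)
    rw [abs_le] at *
    simp only [hD]
    constructor <;> linarith [h1.1, h1.2, h2.1, h2.2]
  have iI : Integrable (fun y => F1 a y ^ 2 / F0 a y) := by
    refine hT.mono' (cI a ha).aestronglyMeasurable (Eventually.of_forall fun y => ?_)
    have := hpos a ha y
    rw [Real.norm_eq_abs, abs_of_nonneg (by positivity)]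
    exact pt1 this (b1 a ha y)
  have main : HasDerivAt (fun b => ∫ y, F1 b y ^ 2 / F0 b y) (∫ y, D a y) a := by
    refine (hasDerivAt_integral_of_dominated_loc_of_deriv_le (s := Set.Ioo l r)
      (F := fun b y => F1 b y ^ 2 / F0 b y) (F' := D) (bound := fun y => 2 * T y) hn ?_ iI
      cD.aestronglyMeasurable ?_ T2 ?_).2
    · filter_upwards [hn] with b hb using (cI b hb).aestronglyMeasurable
    · exact Eventually.of_forall fun y b hb => bD b hb y
    · refine Eventually.of_forall fun y b hb => ?_
      have h := hpos b hb y
      refine (((e1 b hb y).pow 2).div (e0 b hb y) h.ne').congr_deriv ?_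
      simp only [hD, Pi.pow_apply]
      field_simp
      ring
  -- integration by parts
  set V : ℝ → ℝ := fun y => F1 a y * F2 a y / F0 a y - 1 / 2 * (F1 a y ^ 3 / F0 a y ^ 2) with hV
  set R : ℝ → ℝ := fun y => F0 a y * ((F2 a y * F0 a y - F1 a y * F1 a y) / F0 a y ^ 2) ^ 2 with hR
  have cV : Continuous V := by
    refine Continuous.sub (((c1 a ha).mul (c2 a ha)).div (c0 a ha) fun y => (hpos a ha y).ne') ?_
    refine Continuous.mul continuous_const ?_
    exact ((c1 a ha).pow 3).div ((c0 a ha).pow 2) fun y => pow_ne_zero 2 (hpos a ha y).ne'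
  have cR : Continuous R := by
    refine (c0 a ha).mul (Continuous.pow ?_ 2)
    exact (((c2 a ha).mul (c0 a ha)).sub ((c1 a ha).mul (c1 a ha))).div ((c0 a ha).pow 2)
      fun y => pow_ne_zero 2 (hpos a ha y).ne'
  have iV : Integrable V := by
    refine T2.mono' cV.aestronglyMeasurable (Eventually.of_forall fun y => ?_)
    have h1 := ptprod (hpos a ha y) (b1 a ha y) (b2 a ha y)
    have h2 := ptthree (hpos a ha y) (b4 a ha y) (b1 a ha y)
    rw [← pow_succ] at h2
    rw [Real.norm_eq_abs]
    rw [abs_le] at *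
    simp only [hV]
    norm_num at h2 ⊢
    constructor <;> linarith [h1.1, h1.2, h2.1, h2.2]
  have iR : Integrable R := by
    refine (hT.const_mul 4).mono' cR.aestronglyMeasurable (Eventually.of_forall fun y => ?_)
    have h := hpos a ha y
    have h1 := pt1 h (b2 a ha y)
    have h2 := pt4 h (b4 a ha y)
    rw [Real.norm_eq_abs, abs_of_nonneg (by simp only [hR]; positivity)]
    have e : R y + F0 a y * ((F2 a y * F0 a y + F1 a y * F1 a y) / F0 a y ^ 2) ^ 2
        = 2 * (F2 a y ^ 2 / F0 a y) + 2 * (F1 a y ^ 4 / F0 a y ^ 3) := by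
      simp only [hR]; field_simp; ring
    have : 0 ≤ F0 a y * ((F2 a y * F0 a y + F1 a y * F1 a y) / F0 a y ^ 2) ^ 2 := by positivity
    linarith
  have iD : Integrable (D a) :=
    T2.mono' cD.aestronglyMeasurable (Eventually.of_forall fun y => bD a ha y)
  have hz : ∫ y, (D a y + R y) = 0 := by
    refine integral_eq_zero_of_hasDerivAt_of_integrable (f := V) (fun y => ?_) (iD.add iR) iV
    have h := hpos a ha y
    have k1 := ((d1 a ha y).mul (d2 a ha y)).div (d0 a ha y) h.ne'
    have k2 := (((d1 a ha y).pow 3).div ((d0 a ha y).pow 2)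
      (pow_ne_zero 2 h.ne')).const_mul (1 / 2 : ℝ)
    refine (k1.sub k2).congr_deriv ?_
    simp only [hD, hR, Pi.pow_apply, Pi.mul_apply]
    field_simp
    ring
  rw [integral_add iD iR] at hz
  refine main.congr_deriv ?_
  linarith

/-- **Derivative of the Fisher information.** For the additive Gaussian noise
channel, the Fisher information `J(a)` of the output is differentiable in
`a > 0` and `d/da J(a) = −E_Y[(∂/∂y S_Y(y;a))²]`. -/
theorem fisher_information_derivative
    (fX : ℝ → ℝ)
    (hfX_nonneg : ∀ x, 0 ≤ fX x)
    (hfX_prob : (∫ x, fX x) = 1)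
    (hfX_mom : Integrable (fun x => x ^ 2 * fX x))
    (fY : ℝ → ℝ → ℝ)
    (hfY : ∀ a, 0 < a → ∀ y, fY a y =
      ∫ x, fX x * ((Real.sqrt (2 * Real.pi * a))⁻¹ *
        Real.exp (-(y - x) ^ 2 / (2 * a))))
    (J : ℝ → ℝ)
    (hJ : ∀ a, 0 < a → J a =
      ∫ y, fY a y * (deriv (fun y' => Real.log (fY a y')) y) ^ 2) :
    ∀ a, 0 < a → HasDerivAt J
      (-∫ y, fY a y *
        (deriv (fun y' => deriv (fun y'' => Real.log (fY a y'')) y') y) ^ 2)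
      a := by
  intro a ha
  have hf : Integrable fX := by
    by_contra h
    rw [integral_undef h] at hfX_prob
    norm_num at hfX_prob
  set l := a / 2 with hl'
  set r := 2 * a with hr'
  have hl : 0 < l := by positivity
  have hr : 0 < r := by positivity
  have hla : l < a := by rw [hl']; linarith
  have har : a < r := by rw [hr']; linarith
  -- the Hermite-type polynomials
  let h1 : ℝ → ℝ → ℝ := fun a u => -1 * (u * a⁻¹)
  let h2 : ℝ → ℝ → ℝ := fun a u => h1 a u * h1 a u + -1 * a⁻¹
  let h3 : ℝ → ℝ → ℝ := fun a u => h2 a u * h1 a u + -2 * (a⁻¹ * h1 a u)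
  let h4 : ℝ → ℝ → ℝ := fun a u => h3 a u * h1 a u + -3 * (a⁻¹ * h2 a u)
  have t0 : Tame l r (fun _ _ => 1) := tame_const _ _ _
  have t1 : Tame l r h1 := (tame_const _ _ _).mul ((tame_var _ _).mul (tame_inv hl r))
  have t2 : Tame l r h2 := (t1.mul t1).add ((tame_const _ _ _).mul (tame_inv hl r))
  have t3 : Tame l r h3 := (t2.mul t1).add ((tame_const _ _ _).mul ((tame_inv hl r).mul t1))
  have t4 : Tame l r h4 := (t3.mul t1).add ((tame_const _ _ _).mul ((tame_inv hl r).mul t2))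
  have ch1 : ∀ b, Continuous (h1 b) := fun b => by simp only [h1]; fun_prop
  have ch2 : ∀ b, Continuous (h2 b) := fun b => by simp only [h2, h1]; fun_prop
  have ch3 : ∀ b, Continuous (h3 b) := fun b => by simp only [h3, h2, h1]; fun_prop
  have ch4 : ∀ b, Continuous (h4 b) := fun b => by simp only [h4, h3, h2, h1]; fun_prop
  have cg : ∀ b, Continuous (gk b) := fun b => by unfold gk; fun_prop
  have wk : ∀ p : ℝ → ℝ → ℝ, Tame l r p → ∃ K : ℝ, ∀ b, l < b → b < r → ∀ u, |p b u * gk b u| ≤ K := by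
    intro p hp
    obtain ⟨K, hK, h⟩ := hp.bound hl hr
    refine ⟨K, fun b hb1 hb2 u => (h b hb1.le hb2.le u).trans ?_⟩
    exact mul_le_of_le_one_right hK (inv_le_one_of_one_le₀ (by nlinarith [sq_nonneg u]))
  obtain ⟨K0, w0⟩ := wk _ t0
  obtain ⟨K1, w1⟩ := wk _ t1
  obtain ⟨K2, w2⟩ := wk _ t2
  obtain ⟨K3, w3⟩ := wk _ t3
  obtain ⟨K4, w4⟩ := wk _ t4
  simp only [one_mul] at w0
  obtain ⟨K11, w11⟩ := wk _ (t1.mul t1)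
  obtain ⟨K22, w22⟩ := wk _ (t2.mul t2)
  obtain ⟨K33, w33⟩ := wk _ (t3.mul t3)
  obtain ⟨K1111, w1111⟩ := wk _ ((t1.mul t1).mul (t1.mul t1))
  obtain ⟨L1, L1p, v1⟩ := (t1.mul t1).bound hl hr
  obtain ⟨L2, L2p, v2⟩ := (t2.mul t2).bound hl hr
  obtain ⟨L3, L3p, v3⟩ := (t3.mul t3).bound hl hr
  obtain ⟨L4, L4p, v4⟩ := ((t1.mul t1).mul (t1.mul t1)).bound hl hr
  let P : ℝ → ℝ := fun y => ∫ x, fX x * (1 + (y - x) ^ 2)⁻¹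
  have hP0 : ∀ y, 0 ≤ P y := fun y => integral_nonneg fun x =>
    mul_nonneg (hfX_nonneg x) (by positivity)
  let T : ℝ → ℝ := fun y => (L1 + L2 + L3 + L4) * P y
  have hT : Integrable T := (int_P hf).const_mul _
  let F0 : ℝ → ℝ → ℝ := fun b y => ∫ x, fX x * gk b (y - x)
  let F1 : ℝ → ℝ → ℝ := fun b y => ∫ x, fX x * (h1 b (y - x) * gk b (y - x))
  let F2 : ℝ → ℝ → ℝ := fun b y => ∫ x, fX x * (h2 b (y - x) * gk b (y - x))
  let F3 : ℝ → ℝ → ℝ := fun b y => ∫ x, fX x * (h3 b (y - x) * gk b (y - x))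
  let F4 : ℝ → ℝ → ℝ := fun b y => ∫ x, fX x * (h4 b (y - x) * gk b (y - x))
  have hb0 : ∀ b ∈ Set.Ioo l r, 0 < b := fun b hb => hl.trans hb.1
  have q1 : ∀ b u : ℝ, HasDerivAt (h1 b) (-1 * b⁻¹) u := fun b u => by
    exact (((hasDerivAt_id u).mul_const b⁻¹).const_mul (-1)).congr_deriv (by ring)
  have q2 : ∀ b u : ℝ, HasDerivAt (h2 b) (-2 * (b⁻¹ * h1 b u)) u := fun b u => by
    refine (((q1 b u).mul (q1 b u)).add_const (-1 * b⁻¹)).congr_deriv ?_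
    ring
  have q3 : ∀ b u : ℝ, HasDerivAt (h3 b) (-3 * (b⁻¹ * h2 b u)) u := fun b u => by
    refine (((q2 b u).mul (q1 b u)).add (((q1 b u).const_mul b⁻¹).const_mul (-2))).congr_deriv ?_
    simp only [h2]
    ring
  have g1 : ∀ b, 0 < b → ∀ u, HasDerivAt (gk b) (h1 b u * gk b u) u := fun b hb u =>
    (gk_deriv_u hb u).congr_deriv (by simp only [h1]; ring)
  have d0 : ∀ b ∈ Set.Ioo l r, ∀ y, HasDerivAt (F0 b) (F1 b y) y := fun b hb y =>
    deriv_conv hf (φ := gk b) (φ' := fun u => h1 b u * gk b u) (g1 b (hb0 b hb))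
      ((ch1 b).mul (cg b)) (w0 b hb.1 hb.2) (w1 b hb.1 hb.2) y
  have d1 : ∀ b ∈ Set.Ioo l r, ∀ y, HasDerivAt (F1 b) (F2 b y) y := fun b hb y =>
    deriv_conv hf (φ := fun u => h1 b u * gk b u) (φ' := fun u => h2 b u * gk b u)
      (fun u => ((q1 b u).mul (g1 b (hb0 b hb) u)).congr_deriv (by simp only [h2]; ring))
      ((ch2 b).mul (cg b)) (w1 b hb.1 hb.2) (w2 b hb.1 hb.2) y
  have d2 : ∀ b ∈ Set.Ioo l r, ∀ y, HasDerivAt (F2 b) (F3 b y) y := fun b hb y =>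
    deriv_conv hf (φ := fun u => h2 b u * gk b u) (φ' := fun u => h3 b u * gk b u)
      (fun u => ((q2 b u).mul (g1 b (hb0 b hb) u)).congr_deriv (by simp only [h3]; ring))
      ((ch3 b).mul (cg b)) (w2 b hb.1 hb.2) (w3 b hb.1 hb.2) y
  have d3 : ∀ b ∈ Set.Ioo l r, ∀ y, HasDerivAt (F3 b) (F4 b y) y := fun b hb y =>
    deriv_conv hf (φ := fun u => h3 b u * gk b u) (φ' := fun u => h4 b u * gk b u)
      (fun u => ((q3 b u).mul (g1 b (hb0 b hb) u)).congr_deriv (by simp only [h4]; ring))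
      ((ch4 b).mul (cg b)) (w3 b hb.1 hb.2) (w4 b hb.1 hb.2) y
  have hpos : ∀ b ∈ Set.Ioo l r, ∀ y, 0 < F0 b y := fun b hb y =>
    conv_pos hf hfX_nonneg hfX_prob (gk_pos (hb0 b hb)) (cg b) (w0 b hb.1 hb.2) y
  have half : ∀ (p : ℝ → ℝ → ℝ) (b y : ℝ), ∫ x, fX x * (p b (y - x) * gk b (y - x) / 2) =
      (∫ x, fX x * (p b (y - x) * gk b (y - x))) / 2 := by
    intro p b y
    rw [← integral_div]
    congr 1; ext x; ring
  have ga : ∀ b, 0 < b → ∀ u, HasDerivAt (fun b => gk b u) (h2 b u * gk b u / 2) b := fun b hb u =>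
    (gk_deriv_a hb u).congr_deriv (by simp only [h2, h1]; ring)
  have e0 : ∀ b ∈ Set.Ioo l r, ∀ y, HasDerivAt (fun b => F0 b y) (F2 b y / 2) b := by
    intro b hb y
    have := deriv_param hf (l := l) (r := r) (φ := gk) (φ' := fun b u => h2 b u * gk b u / 2)
      (K := K0) (K' := K2 / 2) (fun c hc _ u => ga c (hl.trans hc) u) (fun c _ _ => cg c)
      (fun c _ _ => ((ch2 c).mul (cg c)).div_const 2) w0
      (fun c k1 k2 u => by
        rw [abs_div, abs_two]; exact div_le_div_of_nonneg_right (w2 c k1 k2 u) (by norm_num)) y hb.1 hb.2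
    exact this.congr_deriv (half h2 b y)
  have e1 : ∀ b ∈ Set.Ioo l r, ∀ y, HasDerivAt (fun b => F1 b y) (F3 b y / 2) b := by
    intro b hb y
    have := deriv_param hf (l := l) (r := r) (φ := fun b u => h1 b u * gk b u)
      (φ' := fun b u => h3 b u * gk b u / 2)
      (K := K1) (K' := K3 / 2) (fun c hc _ u => by
        have hc0 : c ≠ 0 := (hl.trans hc).ne'
        refine ((((hasDerivAt_inv hc0).const_mul u).const_mul (-1)).mul
          (ga c (hl.trans hc) u)).congr_deriv ?_
        simp only [h3, h2, h1]
        field_simp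
        ring) (fun c _ _ => (ch1 c).mul (cg c))
      (fun c _ _ => ((ch3 c).mul (cg c)).div_const 2) w1
      (fun c k1 k2 u => by
        rw [abs_div, abs_two]; exact div_le_div_of_nonneg_right (w3 c k1 k2 u) (by norm_num)) y hb.1 hb.2
    exact this.congr_deriv (half h3 b y)
  have b1 : ∀ b ∈ Set.Ioo l r, ∀ y, F1 b y ^ 2 ≤ F0 b y * T y := by
    intro b hb y
    refine (conv_cs hf hfX_nonneg (fun u => (gk_pos (hb0 b hb) u).le) (cg b) (ch1 b)
      (w0 b hb.1 hb.2) (w1 b hb.1 hb.2) (w11 b hb.1 hb.2) y).trans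
      (mul_le_mul_of_nonneg_left ?_ (hpos b hb y).le)
    refine (conv_le hf hfX_nonneg (((ch1 b).mul (ch1 b)).mul (cg b)) (v1 b hb.1.le hb.2.le) L1p y).trans ?_
    exact mul_le_mul_of_nonneg_right (by linarith) (hP0 y)
  have b2 : ∀ b ∈ Set.Ioo l r, ∀ y, F2 b y ^ 2 ≤ F0 b y * T y := by
    intro b hb y
    refine (conv_cs hf hfX_nonneg (fun u => (gk_pos (hb0 b hb) u).le) (cg b) (ch2 b)
      (w0 b hb.1 hb.2) (w2 b hb.1 hb.2) (w22 b hb.1 hb.2) y).trans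
      (mul_le_mul_of_nonneg_left ?_ (hpos b hb y).le)
    refine (conv_le hf hfX_nonneg (((ch2 b).mul (ch2 b)).mul (cg b)) (v2 b hb.1.le hb.2.le) L2p y).trans ?_
    exact mul_le_mul_of_nonneg_right (by linarith) (hP0 y)
  have b3 : ∀ b ∈ Set.Ioo l r, ∀ y, F3 b y ^ 2 ≤ F0 b y * T y := by
    intro b hb y
    refine (conv_cs hf hfX_nonneg (fun u => (gk_pos (hb0 b hb) u).le) (cg b) (ch3 b)
      (w0 b hb.1 hb.2) (w3 b hb.1 hb.2) (w33 b hb.1 hb.2) y).trans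
      (mul_le_mul_of_nonneg_left ?_ (hpos b hb y).le)
    refine (conv_le hf hfX_nonneg (((ch3 b).mul (ch3 b)).mul (cg b)) (v3 b hb.1.le hb.2.le) L3p y).trans ?_
    exact mul_le_mul_of_nonneg_right (by linarith) (hP0 y)
  have b4 : ∀ b ∈ Set.Ioo l r, ∀ y, F1 b y ^ 4 ≤ F0 b y ^ 3 * T y := by
    intro b hb y
    have hp := hpos b hb y
    have s1 := conv_cs hf hfX_nonneg (fun u => (gk_pos (hb0 b hb) u).le) (cg b) (ch1 b)
      (w0 b hb.1 hb.2) (w1 b hb.1 hb.2) (w11 b hb.1 hb.2) y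
    have s2 := conv_cs hf hfX_nonneg (fun u => (gk_pos (hb0 b hb) u).le) (cg b)
      ((ch1 b).mul (ch1 b))
      (w0 b hb.1 hb.2) (w11 b hb.1 hb.2) (w1111 b hb.1 hb.2) y
    have s3 := conv_le hf hfX_nonneg ((((ch1 b).mul (ch1 b)).mul ((ch1 b).mul (ch1 b))).mul (cg b))
      (v4 b hb.1.le hb.2.le) L4p y
    have s4 : L4 * P y ≤ T y := mul_le_mul_of_nonneg_right (by linarith) (hP0 y)
    have s5 := s2.trans (mul_le_mul_of_nonneg_left (s3.trans s4) hp.le)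
    simp only [Pi.mul_apply] at s5
    change F1 b y ^ 2 ≤ F0 b y * _ at s1
    change _ ≤ F0 b y * T y at s5
    calc F1 b y ^ 4 = (F1 b y ^ 2) ^ 2 := by ring
      _ ≤ (F0 b y * _) ^ 2 := pow_le_pow_left₀ (sq_nonneg _) s1 2
      _ = F0 b y ^ 2 * _ ^ 2 := by rw [mul_pow]
      _ ≤ F0 b y ^ 2 * (F0 b y * T y) := mul_le_mul_of_nonneg_left s5 (by positivity)
      _ = _ := by ring
  have c3 : ∀ b ∈ Set.Ioo l r, Continuous (F3 b) := fun b hb =>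
    continuous_iff_continuousAt.2 fun u => (d3 b hb u).continuousAt
  have key := core F0 F1 F2 F3 T l r a hla har hT hpos d0 d1 d2 c3 e0 e1 b1 b2 b3 b4
  have hY : ∀ b, 0 < b → fY b = F0 b := fun b hb => funext fun y => hfY b hb y
  have hS : ∀ b ∈ Set.Ioo l r, (fun y => deriv (fun y' => Real.log (fY b y')) y) =
      fun y => F1 b y / F0 b y := by
    intro b hb
    funext y
    rw [hY b (hb0 b hb)]
    exact ((d0 b hb y).log (hpos b hb y).ne').deriv
  have ha' : a ∈ Set.Ioo l r := ⟨hla, har⟩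
  have hJ' : J =ᶠ[nhds a] fun b => ∫ y, F1 b y ^ 2 / F0 b y := by
    filter_upwards [Ioo_mem_nhds hla har] with b hb
    rw [hJ b (hb0 b hb)]
    congr 1
    funext y
    have h := hpos b hb y
    rw [congrFun (hS b hb) y, hY b (hb0 b hb)]
    field_simp
  refine (key.congr_of_eventuallyEq hJ').congr_deriv ?_
  congr 2
  funext y
  rw [hS a ha', hY a ha]
  congr 2
  exact (((d1 a ha' y).div (d0 a ha' y) (hpos a ha' y).ne').deriv).symm
end

section
/- (Fisher information inequality for Gaussian perturbation) Let X be a real random variable with a differentiable, everywhere positive density f_X, finite second moment, and finite Fisher information J(X) = ∫ f_X'(x)²/f_X(x) dx > 0, and let W be an independent standard Gaussian. Then for every a ≥ 0, the Fisher information J(a) of Y = X + √a·W (defined as J(a) = ∫ f_Y(y;a) (∂/∂y log f_Y(y;a))² dy with f_Y(y;a) = ∫ f_X(x)(2πa)^{−1/2}exp(−(y−x)²/(2a)) dx for a > 0, and J(0) = J(X)) satisfies 1/J(a) ≥ 1/J(X) + a. -/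
open MeasureTheory Filter

lemma conv_int {f q : ℝ → ℝ} (hf : Integrable f) (hq : Integrable q) :
    Integrable (fun y => ∫ x, f x * q (y - x)) ∧
      ∫ y, ∫ x, f x * q (y - x) = (∫ x, f x) * ∫ x, q x := by
  constructor
  · exact hf.integrable_convolution (ContinuousLinearMap.mul ℝ ℝ) hq
  · exact integral_convolution (μ := volume) (ν := volume) (ContinuousLinearMap.mul ℝ ℝ) hf hq

lemma mul_bdd_int {f q : ℝ → ℝ} {C : ℝ} (hf : Integrable f) (hq : Continuous q)
    (hC : ∀ z, |q z| ≤ C) (y : ℝ) : Integrable (fun x => f x * q (y - x)) := by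
  have := hf.bdd_mul (f := fun x => q (y - x)) (c := C)
    (by fun_prop) (Eventually.of_forall fun x => hC _)
  simpa [mul_comm] using this

lemma fisher_core (f p : ℝ → ℝ) (a C j : ℝ) (ha : 0 < a)
    (hf_pos : ∀ x, 0 < f x) (hf_diff : Differentiable ℝ f)
    (hf_prob : (∫ x, f x) = 1)
    (hfish : Integrable (fun x => (deriv f x) ^ 2 / f x))
    (hj : j = ∫ x, (deriv f x) ^ 2 / f x) (hjpos : 0 < j)
    (hp_pos : ∀ z, 0 < p z)
    (hp_d : ∀ z, HasDerivAt p (-(z / a) * p z) z)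
    (hC0 : ∀ z, |p z| ≤ C) (hC1 : ∀ z, |z * p z| ≤ C) (hC2 : ∀ z, |z ^ 2 * p z| ≤ C)
    (hi0 : Integrable p) (hi1 : Integrable (fun z => z * p z))
    (hi2 : Integrable (fun z => z ^ 2 * p z))
    (h0 : ∫ z, p z = 1) (h1 : ∫ z, z * p z = 0) (h2 : ∫ z, z ^ 2 * p z = a)
    (g : ℝ → ℝ) (hg : ∀ y, g y = ∫ x, f x * p (y - x)) :
    1 / (∫ y, g y * (deriv (fun y' => Real.log (g y')) y) ^ 2) ≥ 1 / j + a := by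
  have hf_int : Integrable f := by
    by_contra h
    rw [integral_undef h] at hf_prob
    exact zero_ne_one hf_prob
  have hf'_int : Integrable (deriv f) := by
    refine (hfish.add hf_int).mono' (measurable_deriv f).aestronglyMeasurable
      (Eventually.of_forall fun x => ?_)
    have hx := hf_pos x
    have : (deriv f x) ^ 2 / f x + f x = ((deriv f x) ^ 2 + f x ^ 2) / f x := by
      field_simp
    simp only [Pi.add_apply, Real.norm_eq_abs]
    rw [this, le_div_iff₀ hx]
    nlinarith [sq_nonneg (|deriv f x| - f x), sq_abs (deriv f x), abs_nonneg (deriv f x), sq_nonneg (f x)]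
  have hpc : Continuous p := continuous_iff_continuousAt.2 fun z => (hp_d z).continuousAt
  have hp1c : Continuous (fun z => z * p z) := by fun_prop
  have hp2c : Continuous (fun z => z ^ 2 * p z) := by fun_prop
  have i0 := fun y => mul_bdd_int hf_int hpc hC0 y
  have i1 := fun y => mul_bdd_int hf_int hp1c hC1 y
  have i2 := fun y => mul_bdd_int hf_int hp2c hC2 y
  have k0 := fun y => mul_bdd_int hf'_int hpc hC0 y
  have k1 := fun y => mul_bdd_int hf'_int hp1c hC1 y
  have s0 := fun y => mul_bdd_int hfish hpc hC0 y
  -- derivative of g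
  have hgd : ∀ y, HasDerivAt g (-(1 / a) * ∫ x, f x * ((y - x) * p (y - x))) y := by
    intro y
    have hgf : g = fun y => ∫ x, f x * p (y - x) := funext hg
    have := (hasDerivAt_integral_of_dominated_loc_of_deriv_le (μ := volume)
      (F := fun y x => f x * p (y - x))
      (F' := fun y x => -(1 / a) * (f x * ((y - x) * p (y - x))))
      (bound := fun x => (1 / a) * (f x * C)) (x₀ := y) (s := Set.univ) Filter.univ_mem
      (Eventually.of_forall fun y => (i0 y).aestronglyMeasurable) (i0 y)
      ((i1 y).const_mul _).aestronglyMeasurable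
      (Eventually.of_forall fun x y _ => ?_) ((hf_int.mul_const _).const_mul _)
      (Eventually.of_forall fun x y _ => ?_)).2
    · rw [integral_const_mul] at this
      rw [hgf]; exact this
    · rw [norm_mul, norm_mul, norm_neg, Real.norm_of_nonneg (by positivity : 0 ≤ 1 / a),
        Real.norm_of_nonneg (hf_pos x).le]
      have := hC1 (y - x)
      have := hf_pos x
      rw [Real.norm_eq_abs]
      gcongr
    · have := ((hp_d (y - x)).comp y ((hasDerivAt_id y).sub_const x)).const_mul (f x)
      refine HasDerivAt.congr_deriv this ?_
      ring
  -- integration by parts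
  have hparts : ∀ y, ∫ x, deriv f x * p (y - x)
      = -(1 / a) * ∫ x, f x * ((y - x) * p (y - x)) := by
    intro y
    have hv : ∀ x, HasDerivAt (fun x => p (y - x)) ((1 / a) * ((y - x) * p (y - x))) x := by
      intro x
      have := (hp_d (y - x)).comp x ((hasDerivAt_id x).const_sub y)
      refine HasDerivAt.congr_deriv this ?_
      ring
    have e : (fun x => f x * ((1 / a) * ((y - x) * p (y - x))))
        = fun x => (1 / a) * (f x * ((y - x) * p (y - x))) := by ext x; ring
    have := integral_mul_deriv_eq_deriv_mul_of_integrable (u := f) (u' := deriv f)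
      (v := fun x => p (y - x)) (v' := fun x => (1 / a) * ((y - x) * p (y - x)))
      (fun x _ => (hf_diff x).hasDerivAt) (fun x _ => hv x)
      (by change Integrable (fun x => f x * ((1 / a) * ((y - x) * p (y - x))))
          rw [e]; exact (i1 y).const_mul _) (k0 y) (i0 y)
    rw [e, integral_const_mul] at this
    linarith
  have hg_pos : ∀ y, 0 < g y := by
    intro y
    rw [hg, integral_pos_iff_support_of_nonneg
      (fun x => (mul_pos (hf_pos x) (hp_pos _)).le) (i0 y)]
    have : Function.support (fun x => f x * p (y - x)) = Set.univ := by
      ext x; simp [(hf_pos x).ne', (hp_pos (y - x)).ne']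
    rw [this]; simp
  have hgdiff : Differentiable ℝ g := fun y => (hgd y).differentiableAt
  have hlog : ∀ y, deriv (fun y' => Real.log (g y')) y = deriv g y / g y := fun y =>
    ((hgdiff y).hasDerivAt.log (hg_pos y).ne').deriv
  set l : ℝ := 1 / (1 + a * j) with hl
  let A := fun y => ∫ x, (deriv f x) ^ 2 / f x * p (y - x)
  let B := fun y => ∫ x, deriv f x * ((y - x) * p (y - x))
  let D := fun y => ∫ x, f x * ((y - x) ^ 2 * p (y - x))
  obtain ⟨hA, hA'⟩ := conv_int hfish hi0
  obtain ⟨hB, hB'⟩ := conv_int hf'_int hi1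
  obtain ⟨hD, hD'⟩ := conv_int hf_int hi2
  obtain ⟨hG, hG'⟩ := conv_int hf_int hi0
  have hGi : Integrable g := by rw [funext hg]; exact hG
  let H := fun y => l ^ 2 * A y + (-2 * l * (1 - l) / a) * B y + ((1 - l) ^ 2 / a ^ 2) * D y
  have hHi : Integrable H := ((hA.const_mul _).fun_add (hB.const_mul _)).add (hD.const_mul _)
  have hHv : ∫ y, H y = 1 / (1 / j + a) := by
    have e1 : ∫ y, H y = l ^ 2 * (∫ y, A y) + (-2 * l * (1 - l) / a) * (∫ y, B y)
        + ((1 - l) ^ 2 / a ^ 2) * ∫ y, D y := by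
      rw [← integral_const_mul, ← integral_const_mul, ← integral_const_mul,
        ← integral_add (hA.const_mul _) (hB.const_mul _),
        ← integral_add ((hA.const_mul _).fun_add (hB.const_mul _)) (hD.const_mul _)]
    rw [e1]
    change l ^ 2 * (∫ y, ∫ x, (deriv f x) ^ 2 / f x * p (y - x))
        + (-2 * l * (1 - l) / a) * (∫ y, ∫ x, deriv f x * ((y - x) * p (y - x)))
        + ((1 - l) ^ 2 / a ^ 2) * (∫ y, ∫ x, f x * ((y - x) ^ 2 * p (y - x))) = _
    rw [hA', hB', hD', h0, h1, h2, hf_prob, ← hj, hl]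
    have : 0 < 1 + a * j := by positivity
    field_simp
    ring
  have hpt : ∀ y, g y * (deriv (fun y' => Real.log (g y')) y) ^ 2 ≤ H y := by
    intro y
    rw [hlog]
    have hgy := hg_pos y
    set m := deriv g y / g y with hm
    have hd : deriv g y = m * g y := by rw [hm]; field_simp
    have d1 : ∫ x, deriv f x * p (y - x) = m * g y := by
      rw [hparts, ← (hgd y).deriv, hd]
    have d2 : -(1 / a) * ∫ x, f x * ((y - x) * p (y - x)) = m * g y := by
      rw [← (hgd y).deriv, hd]
    have key : 0 ≤ ∫ x, (l * (deriv f x / f x) - (1 - l) * ((y - x) / a) - m) ^ 2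
        * (f x * p (y - x)) :=
      integral_nonneg fun x => mul_nonneg (sq_nonneg _) (mul_pos (hf_pos x) (hp_pos _)).le
    have e : ∀ x, (l * (deriv f x / f x) - (1 - l) * ((y - x) / a) - m) ^ 2
        * (f x * p (y - x)) =
        l ^ 2 * ((deriv f x) ^ 2 / f x * p (y - x))
        + (-2 * l * (1 - l) / a) * (deriv f x * ((y - x) * p (y - x)))
        + ((1 - l) ^ 2 / a ^ 2) * (f x * ((y - x) ^ 2 * p (y - x)))
        + (-2 * m * l) * (deriv f x * p (y - x))
        + (2 * m * (1 - l) / a) * (f x * ((y - x) * p (y - x)))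
        + m ^ 2 * (f x * p (y - x)) := by
      intro x
      have := (hf_pos x).ne'
      field_simp
      ring
    simp_rw [e] at key
    have j1 := (s0 y).const_mul (l ^ 2)
    have j2 := j1.fun_add ((k1 y).const_mul (-2 * l * (1 - l) / a))
    have j3 := j2.fun_add ((i2 y).const_mul ((1 - l) ^ 2 / a ^ 2))
    have j4 := j3.fun_add ((k0 y).const_mul (-2 * m * l))
    have j5 := j4.fun_add ((i1 y).const_mul (2 * m * (1 - l) / a))
    rw [integral_add j5 ((i0 y).const_mul _), integral_add j4 ((i1 y).const_mul _),
      integral_add j3 ((k0 y).const_mul _), integral_add j2 ((i2 y).const_mul _),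
      integral_add j1 ((k1 y).const_mul _)] at key
    simp only [integral_const_mul] at key
    rw [d1, ← hg] at key
    have d3 : ∫ x, f x * ((y - x) * p (y - x)) = -a * (m * g y) := by
      rw [← d2]; field_simp
    rw [d3] at key
    have r : 2 * m * (1 - l) / a * (-a * (m * g y)) = -2 * m * (1 - l) * (m * g y) := by
      field_simp
    rw [r] at key
    change _ ≤ l ^ 2 * (∫ x, (deriv f x) ^ 2 / f x * p (y - x))
        + (-2 * l * (1 - l) / a) * (∫ x, deriv f x * ((y - x) * p (y - x)))
        + ((1 - l) ^ 2 / a ^ 2) * (∫ x, f x * ((y - x) ^ 2 * p (y - x)))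
    linarith
  have hnn : ∀ y, 0 ≤ g y * (deriv (fun y' => Real.log (g y')) y) ^ 2 := fun y =>
    mul_nonneg (hg_pos y).le (sq_nonneg _)
  have hJi : Integrable (fun y => g y * (deriv (fun y' => Real.log (g y')) y) ^ 2) := by
    refine hHi.mono' ?_ (Eventually.of_forall fun y => ?_)
    · exact (hgdiff.continuous.measurable.mul
        ((measurable_deriv _).pow_const 2)).aestronglyMeasurable
    · rw [Real.norm_of_nonneg (hnn y)]; exact hpt y
  have hle : ∫ y, g y * (deriv (fun y' => Real.log (g y')) y) ^ 2 ≤ 1 / (1 / j + a) := by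
    rw [← hHv]; exact integral_mono hJi hHi hpt
  have hpos : 0 < ∫ y, g y * (deriv (fun y' => Real.log (g y')) y) ^ 2 := by
    refine lt_of_le_of_ne (integral_nonneg hnn) fun h => ?_
    have hz := (integral_eq_zero_iff_of_nonneg hnn hJi).1 h.symm
    have hdc : Continuous (deriv g) := by
      rw [funext fun y => (hgd y).deriv]
      refine Continuous.mul continuous_const ?_
      refine continuous_of_dominated (bound := fun x => f x * C)
        (fun y => (i1 y).aestronglyMeasurable)
        (fun y => Eventually.of_forall fun x => ?_) (hf_int.mul_const _)
        (Eventually.of_forall fun x => by fun_prop)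
      rw [norm_mul, Real.norm_of_nonneg (hf_pos x).le]
      exact mul_le_mul_of_nonneg_left (hC1 _) (hf_pos x).le
    have hz' : deriv g =ᵐ[volume] 0 := by
      filter_upwards [hz] with y hy
      rw [hlog] at hy
      simpa [(hg_pos y).ne'] using hy
    have hz2 := (hdc.ae_eq_iff_eq volume continuous_const).1 hz'
    have hc := is_const_of_deriv_eq_zero hgdiff (fun x => congrFun hz2 x)
    have hgc : g = fun _ => g 0 := funext fun y => hc y 0
    rw [hgc, integrable_const_iff] at hGi
    rcases hGi with h | h
    · exact (hg_pos 0).ne' h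
    · have := h.measure_univ_lt_top
      simp at this
  have := one_div_le_one_div_of_le hpos hle
  rwa [one_div_one_div] at this

/-- The frozen theorem for `a > 0`: facts on the Gaussian kernel. -/
lemma gauss_facts (a : ℝ) (ha : 0 < a) (p : ℝ → ℝ)
    (hp : ∀ z, p z = (Real.sqrt (2 * Real.pi * a))⁻¹ * Real.exp (-z ^ 2 / (2 * a))) :
    (∀ z, 0 < p z) ∧ (∀ z, HasDerivAt p (-(z / a) * p z) z) ∧
    (∃ C, (∀ z, |p z| ≤ C) ∧ (∀ z, |z * p z| ≤ C) ∧ (∀ z, |z ^ 2 * p z| ≤ C)) ∧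
    Integrable p ∧ Integrable (fun z => z * p z) ∧ Integrable (fun z => z ^ 2 * p z) ∧
    ∫ z, p z = 1 ∧ ∫ z, z * p z = 0 ∧ ∫ z, z ^ 2 * p z = a := by
  have hpos : ∀ z, 0 < p z := fun z => by rw [hp]; positivity
  set c := (Real.sqrt (2 * Real.pi * a))⁻¹ with hc
  have hcpos : 0 < c := by positivity
  have hpf : p = fun z => c * Real.exp (-z ^ 2 / (2 * a)) := funext hp
  have b0 : ∀ z, p z ≤ c := by
    intro z
    rw [hp]
    have : Real.exp (-z ^ 2 / (2 * a)) ≤ 1 := by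
      rw [Real.exp_le_one_iff, neg_div]
      have : 0 ≤ z ^ 2 / (2 * a) := by positivity
      linarith
    nlinarith
  have b2 : ∀ z, z ^ 2 * p z ≤ 2 * a * c := by
    intro z
    rw [hp, neg_div, Real.exp_neg]
    have h := Real.add_one_le_exp (z ^ 2 / (2 * a))
    have h' : z ^ 2 / (2 * a) * (Real.exp (z ^ 2 / (2 * a)))⁻¹ ≤ 1 := by
      rw [← div_eq_mul_inv, div_le_one (Real.exp_pos _)]; linarith
    have e : z ^ 2 * (c * (Real.exp (z ^ 2 / (2 * a)))⁻¹) =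
      2 * a * c * (z ^ 2 / (2 * a) * (Real.exp (z ^ 2 / (2 * a)))⁻¹) := by field_simp
    rw [e]
    exact mul_le_of_le_one_right (by positivity) h'
  have hexp : ∀ z : ℝ, -z ^ 2 / (2 * a) = -(1 / (2 * a)) * z ^ 2 := fun z => by ring
  have ha' : 0 < 1 / (2 * a) := by positivity
  let v : NNReal := ⟨a, ha.le⟩
  have hv : v ≠ 0 := fun h => ha.ne' (congrArg NNReal.toReal h)
  have hpdf : ProbabilityTheory.gaussianPDFReal 0 v = p := by
    ext z
    rw [ProbabilityTheory.gaussianPDFReal_def, hp]; simp only [sub_zero]; rfl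
  have q1 := ProbabilityTheory.integral_gaussianPDFReal_eq_one 0 hv
  have q2 := ProbabilityTheory.integral_id_gaussianReal (μ := 0) (v := v)
  have q3 := ProbabilityTheory.variance_fun_id_gaussianReal (μ := 0) (v := v)
  rw [ProbabilityTheory.variance_of_integral_eq_zero (by fun_prop) q2,
    ProbabilityTheory.integral_gaussianReal_eq_integral_smul hv] at q3
  rw [ProbabilityTheory.integral_gaussianReal_eq_integral_smul hv] at q2
  rw [hpdf] at q1 q2 q3
  refine ⟨hpos, fun z => ?_, ⟨c + 2 * a * c, fun z => ?_, fun z => ?_, fun z => ?_⟩,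
    ?_, ?_, ?_, q1, ?_, ?_⟩
  · have h := (((hasDerivAt_pow 2 z).neg.div_const (2 * a)).exp).const_mul c
    rw [hpf]
    refine HasDerivAt.congr_deriv h ?_
    simp
    field_simp
  · rw [abs_of_pos (hpos z)]
    have := b0 z
    have : 0 < 2 * a * c := by positivity
    linarith
  · rw [abs_mul, abs_of_pos (hpos z)]
    have h0 := b0 z
    have h2 := b2 z
    have : |z| ≤ 1 + z ^ 2 := by nlinarith [sq_abs z, sq_nonneg (|z| - 1)]
    nlinarith [hpos z]
  · rw [abs_of_nonneg (mul_nonneg (sq_nonneg z) (hpos z).le)]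
    have := b2 z
    linarith
  · rw [← hpdf]; exact ProbabilityTheory.integrable_gaussianPDFReal 0 v
  · have := (integrable_mul_exp_neg_mul_sq ha').const_mul c
    refine this.congr (Eventually.of_forall fun z => ?_)
    simp only [hp, hexp]; ring
  · have := (integrable_rpow_mul_exp_neg_mul_sq ha' (s := 2) (by norm_num)).const_mul c
    refine this.congr (Eventually.of_forall fun z => ?_)
    simp only [hp, hexp, Real.rpow_two]; ring
  · simpa [mul_comm] using q2
  · have q4 : ∫ x, p x * x ^ 2 = a := q3
    simpa [mul_comm] using q4

/-- **Fisher information inequality for Gaussian perturbation.** For `X` with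
a differentiable everywhere positive density, finite second moment and finite
positive Fisher information `J(X)`, and `Y = X + √a·W` with `W` standard
Gaussian independent of `X`, one has `1/J(a) ≥ 1/J(X) + a` for all `a ≥ 0`. -/
theorem fisher_information_inequality
    (fX : ℝ → ℝ)
    (hfX_pos : ∀ x, 0 < fX x)
    (hfX_diff : Differentiable ℝ fX)
    (hfX_prob : (∫ x, fX x) = 1)
    (hfX_mom : Integrable (fun x => x ^ 2 * fX x))
    (hfX_fisher_int : Integrable (fun x => (deriv fX x) ^ 2 / fX x))
    (fY : ℝ → ℝ → ℝ)
    (hfY : ∀ b, 0 < b → ∀ y, fY b y =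
      ∫ x, fX x * ((Real.sqrt (2 * Real.pi * b))⁻¹ *
        Real.exp (-(y - x) ^ 2 / (2 * b))))
    (J : ℝ → ℝ)
    (hJ0 : J 0 = ∫ x, (deriv fX x) ^ 2 / fX x)
    (hJ0_pos : 0 < J 0)
    (hJb : ∀ b, 0 < b → J b =
      ∫ y, fY b y * (deriv (fun y' => Real.log (fY b y')) y) ^ 2) :
    ∀ a, 0 ≤ a → 1 / J a ≥ 1 / J 0 + a := by
  intro a ha
  rcases ha.eq_or_lt with rfl | ha
  · simp
  obtain ⟨p1, p2, ⟨C, c0, c1, c2⟩, i0, i1, i2, m0, m1, m2⟩ := gauss_facts a ha _ (fun _ => rfl)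
  rw [hJb a ha]
  exact fisher_core fX _ a C (J 0) ha hfX_pos hfX_diff hfX_prob hfX_fisher_int hJ0 hJ0_pos
    p1 p2 c0 c1 c2 i0 i1 i2 m0 m1 m2 (fY a) (hfY a ha)
end

section
/- (Costa's entropy power inequality, concavity form) For every a > 0, the entropy power N(a) = (1/(2πe)) exp(2h(a)) of the output of the additive Gaussian noise channel is twice differentiable in a and d²/da² N(a) = −N(a) · ∫ f_Y(y;a) ( J(a) + ∂/∂y S_Y(y;a) )² dy ≤ 0; in particular a ↦ N(a) is concave, where h(a) = −∫ f_Y(y;a) log f_Y(y;a) dy, S_Y(y;a) = ∂/∂y log f_Y(y;a), and J(a) = ∫ f_Y(y;a) S_Y(y;a)² dy. -/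
open MeasureTheory Filter

namespace CostaAux

/-- The Gaussian kernel of variance `a`. -/
noncomputable def G (a z : ℝ) : ℝ := (Real.sqrt (2 * Real.pi * a))⁻¹ * Real.exp (-z ^ 2 / (2 * a))

/-- Kernel moments. -/
noncomputable def p (fX : ℝ → ℝ) (k : ℕ) (a y : ℝ) : ℝ :=
  ∫ x, fX x * ((y - x) ^ k * G a (y - x))

/-- The standing assumptions. -/
structure Hyp (fX : ℝ → ℝ) : Prop where
  nonneg : ∀ x, 0 ≤ fX x
  int : Integrable fX
  prob : (∫ x, fX x) = 1
  mom : Integrable (fun x => x ^ 2 * fX x)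

lemma G_pos {a : ℝ} (ha : 0 < a) (z : ℝ) : 0 < G a z := by
  unfold G
  have := Real.pi_pos
  positivity

lemma G_cont (a : ℝ) : Continuous (G a) := by
  unfold G
  fun_prop

lemma poly_exp_bound (b : ℝ) (hb : 0 < b) (n : ℕ) :
    ∃ C > 0, ∀ z : ℝ, (1 + z ^ 2) ^ n * Real.exp (-(b * z ^ 2)) ≤ C := by
  refine ⟨n.factorial / b ^ n * Real.exp b, by positivity, fun z => ?_⟩
  have h1 := Real.pow_div_factorial_le_exp (b * (1 + z ^ 2)) (by positivity) n
  have h2 : Real.exp (b * (1 + z ^ 2)) = Real.exp b * Real.exp (b * z ^ 2) := by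
    rw [← Real.exp_add]; ring_nf
  rw [h2, mul_pow, div_le_iff₀ (by positivity)] at h1
  rw [Real.exp_neg, ← div_eq_mul_inv, div_le_iff₀ (by positivity)]
  have h3 : (1 + z ^ 2) ^ n = (b ^ n * (1 + z ^ 2) ^ n) / b ^ n := by field_simp
  rw [h3, div_le_iff₀ (by positivity)]
  calc _ ≤ _ := h1
    _ = _ := by field_simp

lemma G_le {a0 a : ℝ} (h0 : 0 < a0) (ha : a ∈ Set.Ioo (a0 / 2) (2 * a0)) (z : ℝ) :
    G a z ≤ (Real.sqrt (Real.pi * a0))⁻¹ * Real.exp (-z ^ 2 / (4 * a0)) := by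
  obtain ⟨h1, h2⟩ := ha
  have hp := Real.pi_pos
  have hapos : 0 < a := by linarith
  unfold G
  gcongr ?_⁻¹ * Real.exp ?_
  · apply Real.sqrt_le_sqrt
    nlinarith
  · rw [neg_div, neg_div, neg_le_neg_iff]
    exact div_le_div_of_nonneg_left (sq_nonneg z) (by positivity) (by linarith)

lemma kernel_bound (a0 : ℝ) (h0 : 0 < a0) (n : ℕ) :
    ∃ C > 0, ∀ a ∈ Set.Ioo (a0 / 2) (2 * a0), ∀ z : ℝ,
      (1 + z ^ 2) ^ n * G a z ≤ C * Real.exp (-(1 / (8 * a0)) * z ^ 2) := by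
  obtain ⟨C, hC, h⟩ := poly_exp_bound (1 / (8 * a0)) (by positivity) n
  have hp := Real.pi_pos
  refine ⟨(Real.sqrt (Real.pi * a0))⁻¹ * C, by positivity, fun a ha z => ?_⟩
  have h1 := G_le h0 ha z
  have h2 : Real.exp (-z ^ 2 / (4 * a0)) =
      Real.exp (-(1 / (8 * a0) * z ^ 2)) * Real.exp (-(1 / (8 * a0)) * z ^ 2) := by
    rw [← Real.exp_add]
    congr 1
    field_simp
    ring
  calc (1 + z ^ 2) ^ n * G a z
      ≤ (1 + z ^ 2) ^ n * ((Real.sqrt (Real.pi * a0))⁻¹ * Real.exp (-z ^ 2 / (4 * a0))) := by gcongr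
    _ = (Real.sqrt (Real.pi * a0))⁻¹ * ((1 + z ^ 2) ^ n * Real.exp (-(1 / (8 * a0) * z ^ 2)))
        * Real.exp (-(1 / (8 * a0)) * z ^ 2) := by rw [h2]; ring
    _ ≤ _ := by gcongr; exact h z

lemma kernel_bound' (a0 : ℝ) (h0 : 0 < a0) (n : ℕ) :
    ∃ C > 0, ∀ a ∈ Set.Ioo (a0 / 2) (2 * a0), ∀ z : ℝ, (1 + z ^ 2) ^ n * G a z ≤ C := by
  obtain ⟨C, hC, h⟩ := kernel_bound a0 h0 n
  refine ⟨C, hC, fun a ha z => (h a ha z).trans ?_⟩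
  have : Real.exp (-(1 / (8 * a0)) * z ^ 2) ≤ 1 := by
    rw [Real.exp_le_one_iff]
    have : 0 ≤ (1 / (8 * a0)) * z ^ 2 := by positivity
    linarith
  nlinarith

lemma abs_pow_le (z : ℝ) {k n : ℕ} (hkn : k ≤ n) : |z ^ k| ≤ (1 + z ^ 2) ^ n := by
  rw [abs_pow]
  have h1 : |z| ≤ 1 + z ^ 2 := by
    rw [abs_le]; constructor <;> nlinarith [sq_nonneg (z - 1), sq_nonneg (z + 1)]
  calc |z| ^ k ≤ (1 + z ^ 2) ^ k := by gcongr
    _ ≤ (1 + z ^ 2) ^ n := pow_le_pow_right₀ (by nlinarith [sq_nonneg z]) hkn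

lemma mem_nhd {a : ℝ} (ha : 0 < a) : a ∈ Set.Ioo (a / 2) (2 * a) :=
  ⟨by linarith, by linarith⟩

/-- Continuous bounded times `fX` is integrable. -/
lemma int_mul {fX : ℝ → ℝ} (H : Hyp fX) {q : ℝ → ℝ} (hq : Continuous q) {C : ℝ}
    (hb : ∀ x, |q x| ≤ C) : Integrable (fun x => fX x * q x) := by
  have := H.int.bdd_mul (f := q) hq.aestronglyMeasurable (c := C) (ae_of_all _ hb)
  simpa [mul_comm] using this

lemma int_p {fX : ℝ → ℝ} (H : Hyp fX) (k : ℕ) {a : ℝ} (ha : 0 < a) (y : ℝ) :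
    Integrable (fun x => fX x * ((y - x) ^ k * G a (y - x))) := by
  obtain ⟨C, hC, h⟩ := kernel_bound' a ha k
  refine int_mul H (C := C) ?_ ?_
  · have := G_cont a
    fun_prop
  · intro x
    rw [abs_mul, abs_of_pos (G_pos ha _)]
    refine le_trans ?_ (h a (mem_nhd ha) (y - x))
    gcongr
    · exact (G_pos ha _).le
    · exact abs_pow_le _ le_rfl

lemma hasDerivAt_G_z {a : ℝ} (ha : 0 < a) (z : ℝ) : HasDerivAt (G a) (-(z / a) * G a z) z := by
  unfold G
  have h1 : HasDerivAt (fun z : ℝ => -z ^ 2 / (2 * a)) (-(z / a)) z := by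
    have := ((hasDerivAt_pow 2 z).neg).div_const (2 * a)
    refine this.congr_deriv ?_
    push_cast
    field_simp
    try simp
  refine ((h1.exp).const_mul ((Real.sqrt (2 * Real.pi * a))⁻¹)).congr_deriv ?_
  ring

lemma hasDerivAt_G_a {a : ℝ} (ha : 0 < a) (z : ℝ) :
    HasDerivAt (fun a => G a z) ((z ^ 2 / (2 * a ^ 2) - 1 / (2 * a)) * G a z) a := by
  unfold G
  have hp := Real.pi_pos
  have h1 : HasDerivAt (fun a : ℝ => -z ^ 2 / (2 * a)) (z ^ 2 / (2 * a ^ 2)) a := by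
    have := (hasDerivAt_const a (-z ^ 2)).div ((hasDerivAt_id a).const_mul 2) (by positivity)
    refine this.congr_deriv ?_
    simp only [id]
    field_simp
    ring
  have hs : Real.sqrt (2 * Real.pi * a) ≠ 0 := by positivity
  have h2 : HasDerivAt (fun a : ℝ => (Real.sqrt (2 * Real.pi * a))⁻¹)
      (-(1 / (2 * a)) * (Real.sqrt (2 * Real.pi * a))⁻¹) a := by
    have h3 := (((hasDerivAt_id a).const_mul (2 * Real.pi)).sqrt (by positivity)).inv hs
    refine h3.congr_deriv ?_
    simp only [id]
    have hsq : Real.sqrt (2 * Real.pi * a) ^ 2 = 2 * Real.pi * a := Real.sq_sqrt (by positivity)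
    rw [hsq]
    field_simp
  refine (h2.mul h1.exp).congr_deriv ?_
  ring

lemma hasDerivAt_p_y {fX : ℝ → ℝ} (H : Hyp fX) (k : ℕ) {a : ℝ} (ha : 0 < a) (y : ℝ) :
    HasDerivAt (p fX k a) (k * p fX (k - 1) a y - p fX (k + 1) a y / a) y := by
  obtain ⟨C, hC, h⟩ := kernel_bound' a ha (k + 1)
  have key := hasDerivAt_integral_of_dominated_loc_of_deriv_le (μ := volume) (x₀ := y)
    (s := Set.univ) (F := fun y x => fX x * ((y - x) ^ k * G a (y - x)))
    (F' := fun y x => k * (fX x * ((y - x) ^ (k - 1) * G a (y - x)))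
      - (fX x * ((y - x) ^ (k + 1) * G a (y - x))) / a)
    (bound := fun x => (k * C + C / a) * fX x)
    univ_mem (Eventually.of_forall fun y => (int_p H k ha y).aestronglyMeasurable)
    (int_p H k ha y)
    (((int_p H (k - 1) ha y).const_mul _).sub ((int_p H (k + 1) ha y).div_const a)).aestronglyMeasurable
    ?_ (H.int.const_mul _) ?_
  · have := key.2
    rw [integral_sub ((int_p H (k - 1) ha y).const_mul _) ((int_p H (k + 1) ha y).div_const a),
      integral_const_mul, integral_div] at this
    exact this
  · refine ae_of_all _ fun x y _ => ?_
    have hG := G_pos ha (y - x)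
    have b (j : ℕ) (hj : j ≤ k + 1) : |fX x * ((y - x) ^ j * G a (y - x))| ≤ fX x * C := by
      rw [abs_mul, abs_mul, abs_of_pos hG, abs_of_nonneg (H.nonneg x)]
      refine mul_le_mul_of_nonneg_left ?_ (H.nonneg x)
      refine le_trans ?_ (h a (mem_nhd ha) (y - x))
      exact mul_le_mul_of_nonneg_right (abs_pow_le _ hj) hG.le
    have b1 := b (k - 1) (by omega)
    have b2 := b (k + 1) le_rfl
    rw [Real.norm_eq_abs]
    calc _ ≤ |(k : ℝ) * (fX x * ((y - x) ^ (k - 1) * G a (y - x)))| +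
          |(fX x * ((y - x) ^ (k + 1) * G a (y - x))) / a| := abs_sub _ _
      _ = (k : ℝ) * |(fX x * ((y - x) ^ (k - 1) * G a (y - x)))| +
          |(fX x * ((y - x) ^ (k + 1) * G a (y - x)))| / a := by
          rw [abs_mul, abs_div, abs_of_pos ha, Nat.abs_cast]
      _ ≤ k * (fX x * C) + (fX x * C) / a := by gcongr
      _ = _ := by ring
  · refine ae_of_all _ fun x y _ => ?_
    have h1 : HasDerivAt (fun y : ℝ => y - x) 1 y := (hasDerivAt_id y).sub_const x
    have h2 := (hasDerivAt_G_z ha (y - x)).comp y h1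
    have h3 := ((h1.pow k).mul h2).const_mul (fX x)
    refine h3.congr_deriv ?_
    simp only [Function.comp, Pi.pow_apply]
    ring

lemma hasDerivAt_p_a {fX : ℝ → ℝ} (H : Hyp fX) (k : ℕ) {a : ℝ} (ha : 0 < a) (y : ℝ) :
    HasDerivAt (fun a => p fX k a y) (p fX (k + 2) a y / (2 * a ^ 2) - p fX k a y / (2 * a)) a := by
  obtain ⟨C, hC, h⟩ := kernel_bound' a ha (k + 2)
  have hpos : ∀ b ∈ Set.Ioo (a / 2) (2 * a), 0 < b := fun b hb => by
    have := hb.1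
    linarith
  have hnh : Set.Ioo (a / 2) (2 * a) ∈ nhds a := Ioo_mem_nhds (by linarith) (by linarith)
  have hFi := ((int_p H (k + 2) ha y).div_const (2 * a ^ 2)).sub
    ((int_p H k ha y).div_const (2 * a))
  have key := hasDerivAt_integral_of_dominated_loc_of_deriv_le (μ := volume) (x₀ := a)
    (s := Set.Ioo (a / 2) (2 * a)) (F := fun a x => fX x * ((y - x) ^ k * G a (y - x)))
    (F' := fun a x => (fX x * ((y - x) ^ (k + 2) * G a (y - x))) / (2 * a ^ 2)
      - (fX x * ((y - x) ^ k * G a (y - x))) / (2 * a))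
    (bound := fun x => (C / (2 * (a / 2) ^ 2) + C / (2 * (a / 2))) * fX x)
    hnh (by filter_upwards [hnh] with b hb using (int_p H k (hpos b hb) y).aestronglyMeasurable)
    (int_p H k ha y)
    hFi.aestronglyMeasurable
    ?_ (H.int.const_mul _) ?_
  · have := key.2
    rw [integral_sub ((int_p H (k + 2) ha y).div_const (2 * a ^ 2))
      ((int_p H k ha y).div_const (2 * a)), integral_div, integral_div] at this
    exact this
  · refine ae_of_all _ fun x b hb => ?_
    have hb0 := hpos b hb
    have hb1 := hb.1.le
    have hG := G_pos hb0 (y - x)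
    have bd (j : ℕ) (hj : j ≤ k + 2) : |fX x * ((y - x) ^ j * G b (y - x))| ≤ fX x * C := by
      rw [abs_mul, abs_mul, abs_of_pos hG, abs_of_nonneg (H.nonneg x)]
      refine mul_le_mul_of_nonneg_left ?_ (H.nonneg x)
      refine le_trans ?_ (h b hb (y - x))
      exact mul_le_mul_of_nonneg_right (abs_pow_le _ hj) hG.le
    have b1 := bd (k + 2) le_rfl
    have b2 := bd k (by omega)
    have hfn := H.nonneg x
    rw [Real.norm_eq_abs]
    calc _ ≤ |(fX x * ((y - x) ^ (k + 2) * G b (y - x))) / (2 * b ^ 2)| +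
          |(fX x * ((y - x) ^ k * G b (y - x))) / (2 * b)| := abs_sub _ _
      _ = |(fX x * ((y - x) ^ (k + 2) * G b (y - x)))| / (2 * b ^ 2) +
          |(fX x * ((y - x) ^ k * G b (y - x)))| / (2 * b) := by
          rw [abs_div, abs_div, abs_of_pos (show 0 < 2 * b by positivity),
            abs_of_pos (show 0 < 2 * b ^ 2 by positivity)]
      _ ≤ (fX x * C) / (2 * (a / 2) ^ 2) + (fX x * C) / (2 * (a / 2)) := by gcongr
      _ = _ := by ring
  · refine ae_of_all _ fun x b hb => ?_
    have h3 := ((hasDerivAt_G_a (hpos b hb) (y - x)).const_mul ((y - x) ^ k)).const_mul (fX x)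
    refine h3.congr_deriv ?_
    ring

lemma cont_p {fX : ℝ → ℝ} (H : Hyp fX) (k : ℕ) {a : ℝ} (ha : 0 < a) : Continuous (p fX k a) :=
  continuous_iff_continuousAt.2 fun y => (hasDerivAt_p_y H k ha y).continuousAt

lemma p_even_nonneg {fX : ℝ → ℝ} (H : Hyp fX) (k : ℕ) {a : ℝ} (ha : 0 < a) (y : ℝ) :
    0 ≤ p fX (2 * k) a y := by
  refine integral_nonneg fun x => ?_
  have := H.nonneg x
  have := G_pos ha (y - x)
  have : 0 ≤ (y - x) ^ (2 * k) := by rw [pow_mul]; positivity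
  positivity

/-- Variance inequality. -/
lemma cs_p {fX : ℝ → ℝ} (H : Hyp fX) (k : ℕ) {a : ℝ} (ha : 0 < a) (y : ℝ)
    (h0 : 0 < p fX 0 a y) : p fX k a y ^ 2 ≤ p fX 0 a y * p fX (2 * k) a y := by
  set P := p fX 0 a y with hP
  set Q := p fX k a y with hQ
  have h1 : 0 ≤ ∫ x, (P ^ 2 * (fX x * ((y - x) ^ (2 * k) * G a (y - x)))
      - 2 * P * Q * (fX x * ((y - x) ^ k * G a (y - x)))
      + Q ^ 2 * (fX x * ((y - x) ^ 0 * G a (y - x)))) := by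
    refine integral_nonneg fun x => ?_
    have := H.nonneg x
    have := G_pos ha (y - x)
    have : 0 ≤ fX x * G a (y - x) * (P * (y - x) ^ k - Q) ^ 2 := by positivity
    refine this.trans (le_of_eq ?_)
    simp only [pow_zero]
    ring
  have i1 := (int_p H (2 * k) ha y).const_mul (P ^ 2)
  have i2 := (int_p H k ha y).const_mul (2 * P * Q)
  have i3 := (int_p H 0 ha y).const_mul (Q ^ 2)
  rw [integral_add (by exact i1.sub i2) i3, integral_sub i1 i2, integral_const_mul, integral_const_mul,
    integral_const_mul] at h1
  change 0 ≤ P ^ 2 * p fX (2 * k) a y - 2 * P * Q * Q + Q ^ 2 * P at h1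
  have h2 : 0 ≤ P * (P * p fX (2 * k) a y - Q ^ 2) := by nlinarith
  have := nonneg_of_mul_nonneg_right h2 h0
  linarith

lemma p0_lower {fX : ℝ → ℝ} (H : Hyp fX) : ∃ M ≥ (0 : ℝ), ∀ a > 0, ∀ y,
    (Real.sqrt (2 * Real.pi * a))⁻¹ * Real.exp (-(y ^ 2 + M) / a) ≤ p fX 0 a y := by
  refine ⟨∫ x, x ^ 2 * fX x, integral_nonneg fun x => mul_nonneg (sq_nonneg x) (H.nonneg x), ?_⟩
  intro a ha y
  set M := ∫ x, x ^ 2 * fX x with hM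
  set c := (Real.sqrt (2 * Real.pi * a))⁻¹ with hc
  have hp := Real.pi_pos
  have hcp : 0 < c := by positivity
  set E := Real.exp (-(y ^ 2 + M) / a) with hE
  have hEp : 0 < E := Real.exp_pos _
  have i1 : Integrable (fun x => c * E * (1 + M / a) * fX x - c * E / a * (x ^ 2 * fX x)) :=
    (H.int.const_mul _).sub (H.mom.const_mul _)
  have : ∫ x, (c * E * (1 + M / a) * fX x - c * E / a * (x ^ 2 * fX x)) ≤ p fX 0 a y := by
    refine integral_mono i1 (int_p H 0 ha y) fun x => ?_
    simp only [pow_zero, one_mul]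
    have hx := H.nonneg x
    have h1 : E * (1 + (M - x ^ 2) / a) ≤ Real.exp (-(y - x) ^ 2 / (2 * a)) := by
      have h2 := Real.add_one_le_exp ((M - x ^ 2) / a)
      calc E * (1 + (M - x ^ 2) / a) ≤ E * Real.exp ((M - x ^ 2) / a) := by gcongr; linarith
        _ = Real.exp (-(y ^ 2 + x ^ 2) / a) := by
            rw [hE, ← Real.exp_add]; congr 1; ring
        _ ≤ _ := by
            apply Real.exp_le_exp.2
            rw [div_le_div_iff₀ ha (by positivity)]
            nlinarith [mul_nonneg ha.le (sq_nonneg (y + x))]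
    calc _ = fX x * (c * (E * (1 + (M - x ^ 2) / a))) := by ring
      _ ≤ fX x * (c * Real.exp (-(y - x) ^ 2 / (2 * a))) := by gcongr
      _ = _ := by simp only [G, hc]
  rw [integral_sub (H.int.const_mul _) (H.mom.const_mul _), integral_const_mul, integral_const_mul,
    H.prob, ← hM] at this
  refine le_trans (le_of_eq ?_) this
  ring

lemma p0_pos {fX : ℝ → ℝ} (H : Hyp fX) {a : ℝ} (ha : 0 < a) (y : ℝ) : 0 < p fX 0 a y := by
  obtain ⟨M, _, h⟩ := p0_lower H
  refine lt_of_lt_of_le ?_ (h a ha y)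
  have := Real.pi_pos
  positivity

lemma log_bound {fX : ℝ → ℝ} (H : Hyp fX) (a0 : ℝ) (h0 : 0 < a0) : ∃ C > 0,
    ∀ a ∈ Set.Ioo (a0 / 2) (2 * a0), ∀ y, |Real.log (p fX 0 a y)| ≤ C * (1 + y ^ 2) := by
  obtain ⟨M, hM, hl⟩ := p0_lower H
  obtain ⟨C, hC, hu⟩ := kernel_bound' a0 h0 0
  have hp := Real.pi_pos
  set c := (Real.sqrt (2 * Real.pi * (2 * a0)))⁻¹ with hc
  have hcp : 0 < c := by positivity
  refine ⟨|Real.log C| + |Real.log c| + (M + 1) / (a0 / 2), by positivity, fun a ha y => ?_⟩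
  have hapos : 0 < a := by have := ha.1; linarith
  have hP := p0_pos H hapos y
  have hup : p fX 0 a y ≤ C := by
    have : p fX 0 a y ≤ ∫ x, C * fX x := by
      refine integral_mono (int_p H 0 hapos y) (H.int.const_mul _) fun x => ?_
      have := hu a ha (y - x)
      simp only [pow_zero, one_mul] at this ⊢
      have := H.nonneg x
      nlinarith
    rwa [integral_const_mul, H.prob, mul_one] at this
  have h1 : Real.log (p fX 0 a y) ≤ Real.log C := Real.log_le_log hP hup
  have hlo : c * Real.exp (-(y ^ 2 + M) / (a0 / 2)) ≤ p fX 0 a y := by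
    refine le_trans ?_ (hl a hapos y)
    gcongr ?_ * Real.exp ?_
    · gcongr
      exact ha.2.le
    · rw [neg_div, neg_div, neg_le_neg_iff]
      gcongr
      exact ha.1.le
  have h2 := Real.log_le_log (by positivity) hlo
  rw [Real.log_mul hcp.ne' (by positivity), Real.log_exp] at h2
  have hy : (y ^ 2 + M) / (a0 / 2) ≤ (M + 1) / (a0 / 2) * (1 + y ^ 2) := by
    rw [div_mul_eq_mul_div]
    gcongr
    nlinarith [mul_nonneg hM (sq_nonneg y)]
  rw [neg_div] at h2
  have e1 : |Real.log C| ≤ |Real.log C| * (1 + y ^ 2) := by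
    nlinarith [mul_nonneg (abs_nonneg (Real.log C)) (sq_nonneg y)]
  have e2 : |Real.log c| ≤ |Real.log c| * (1 + y ^ 2) := by
    nlinarith [mul_nonneg (abs_nonneg (Real.log c)) (sq_nonneg y)]
  have e3 := le_abs_self (Real.log C)
  have e4 := neg_abs_le (Real.log c)
  have e5 : 0 ≤ (M + 1) / (a0 / 2) * (1 + y ^ 2) := by positivity
  rw [abs_le]
  constructor <;> nlinarith [abs_nonneg (Real.log C), abs_nonneg (Real.log c)]

/-- Domination of even kernel moments, uniformly near `a0`. -/
lemma dom {fX : ℝ → ℝ} (H : Hyp fX) (a0 : ℝ) (h0 : 0 < a0) (k : ℕ) : ∃ D : ℝ → ℝ,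
    Integrable D ∧ ∀ a ∈ Set.Ioo (a0 / 2) (2 * a0), ∀ y, (1 + y ^ 2) * p fX (2 * k) a y ≤ D y := by
  obtain ⟨C, hC, h⟩ := kernel_bound a0 h0 (2 * k + 1)
  have if1 : Integrable (fun x => 2 * C * (fX x + x ^ 2 * fX x)) := (H.int.add H.mom).const_mul _
  have ig := integrable_exp_neg_mul_sq (b := 1 / (8 * a0)) (by positivity)
  refine ⟨_, if1.integrable_convolution (ContinuousLinearMap.mul ℝ ℝ) ig, fun a ha y => ?_⟩
  have hapos : 0 < a := by have := ha.1; linarith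
  rw [convolution_def]
  simp only [ContinuousLinearMap.mul_apply']
  unfold p
  rw [← integral_const_mul]
  refine integral_mono ((int_p H _ hapos y).const_mul _) ?_ fun x => ?_
  · refine if1.mul_bdd (c := 1) ?_ (ae_of_all _ fun x => ?_)
    · exact Continuous.aestronglyMeasurable (by fun_prop)
    · rw [Real.norm_eq_abs, abs_of_pos (Real.exp_pos _), Real.exp_le_one_iff]
      have : 0 ≤ (1 / (8 * a0)) * (y - x) ^ 2 := by positivity
      linarith
  · have hx := H.nonneg x
    have hG := G_pos hapos (y - x)
    have h1 : 1 + y ^ 2 ≤ 2 * (1 + x ^ 2) * (1 + (y - x) ^ 2) := by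
      nlinarith [sq_nonneg (y - 2 * x), mul_nonneg (sq_nonneg x) (sq_nonneg (y - x))]
    have h2 : (y - x) ^ (2 * k) ≤ (1 + (y - x) ^ 2) ^ (2 * k) :=
      (le_abs_self _).trans (abs_pow_le _ le_rfl)
    have h3 : 0 ≤ (y - x) ^ (2 * k) := by rw [pow_mul]; positivity
    simp only
    calc (1 + y ^ 2) * (fX x * ((y - x) ^ (2 * k) * G a (y - x)))
        ≤ (2 * (1 + x ^ 2) * (1 + (y - x) ^ 2)) *
          (fX x * ((1 + (y - x) ^ 2) ^ (2 * k) * G a (y - x))) := by gcongr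
      _ = 2 * (1 + x ^ 2) * fX x * ((1 + (y - x) ^ 2) ^ (2 * k + 1) * G a (y - x)) := by ring
      _ ≤ 2 * (1 + x ^ 2) * fX x * (C * Real.exp (-(1 / (8 * a0)) * (y - x) ^ 2)) := by
          exact mul_le_mul_of_nonneg_left (h a ha (y - x)) (by positivity)
      _ = _ := by ring

/-- Dominating sum of moments. -/
noncomputable def T (fX : ℝ → ℝ) (a y : ℝ) : ℝ :=
  p fX 0 a y + p fX 2 a y + p fX 4 a y + p fX 6 a y

lemma dom_T {fX : ℝ → ℝ} (H : Hyp fX) (a0 : ℝ) (h0 : 0 < a0) : ∃ D : ℝ → ℝ,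
    Integrable D ∧ ∀ a ∈ Set.Ioo (a0 / 2) (2 * a0), ∀ y, (1 + y ^ 2) * T fX a y ≤ D y := by
  obtain ⟨D0, i0, b0⟩ := dom H a0 h0 0
  obtain ⟨D1, i1, b1⟩ := dom H a0 h0 1
  obtain ⟨D2, i2, b2⟩ := dom H a0 h0 2
  obtain ⟨D3, i3, b3⟩ := dom H a0 h0 3
  refine ⟨fun y => D0 y + D1 y + D2 y + D3 y, ((i0.add i1).add i2).add i3, fun a ha y => ?_⟩
  have := b0 a ha y
  have := b1 a ha y
  have := b2 a ha y
  have := b3 a ha y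
  simp only [Nat.mul_zero, Nat.mul_one, Nat.reduceMul] at *
  unfold T
  nlinarith

/-- All the moment bounds at a point. -/
structure Bds (P0 P1 P2 P3 t : ℝ) : Prop where
  pos : 0 < P0
  b0 : P0 ≤ t
  p2n : 0 ≤ P2
  b2 : P2 ≤ t
  b1 : |P1| ≤ t
  b11 : P1 ^ 2 / P0 ≤ t
  b13 : |P1 * P3 / P0| ≤ t
  b112 : P1 ^ 2 * P2 / P0 ^ 2 ≤ t
  b1111 : P1 ^ 4 / P0 ^ 3 ≤ t
  b22 : P2 ^ 2 / P0 ≤ t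
  b12 : |P1 * P2 / P0| ≤ t
  b111 : |P1 ^ 3 / P0 ^ 2| ≤ t

lemma bds {fX : ℝ → ℝ} (H : Hyp fX) {a : ℝ} (ha : 0 < a) (y : ℝ) :
    Bds (p fX 0 a y) (p fX 1 a y) (p fX 2 a y) (p fX 3 a y) (T fX a y) := by
  have q0 := p0_pos H ha y
  have q2 := p_even_nonneg H 1 ha y
  have q4 := p_even_nonneg H 2 ha y
  have q6 := p_even_nonneg H 3 ha y
  have c1 := cs_p H 1 ha y q0
  have c2 := cs_p H 2 ha y q0
  have c3 := cs_p H 3 ha y q0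
  unfold T
  simp only [Nat.mul_one, Nat.reduceMul] at *
  generalize p fX 0 a y = P0 at *
  generalize p fX 1 a y = P1 at *
  generalize p fX 2 a y = P2 at *
  generalize p fX 3 a y = P3 at *
  generalize p fX 4 a y = P4 at *
  generalize p fX 6 a y = P6 at *
  have d1 : P1 ^ 2 / P0 ≤ P2 := by rw [div_le_iff₀ q0]; linarith
  have d2 : P2 ^ 2 / P0 ≤ P4 := by rw [div_le_iff₀ q0]; linarith
  have d3 : P3 ^ 2 / P0 ≤ P6 := by rw [div_le_iff₀ q0]; linarith
  have d4 : P1 ^ 2 * P2 / P0 ^ 2 ≤ P4 := by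
    calc P1 ^ 2 * P2 / P0 ^ 2 = (P1 ^ 2 / P0) * P2 / P0 := by field_simp
      _ ≤ P2 * P2 / P0 := by gcongr
      _ = P2 ^ 2 / P0 := by ring
      _ ≤ P4 := d2
  have d5 : P1 ^ 4 / P0 ^ 3 ≤ P4 := by
    calc P1 ^ 4 / P0 ^ 3 = (P1 ^ 2 / P0) ^ 2 / P0 := by field_simp
      _ ≤ P2 ^ 2 / P0 := by gcongr
      _ ≤ P4 := d2
  have am (u v : ℝ) : |u * v / P0| ≤ (u ^ 2 / P0 + v ^ 2 / P0) / 2 := by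
    rw [abs_div, abs_of_pos q0, ← add_div, div_div, div_le_div_iff₀ q0 (by positivity)]
    have : |u * v| ≤ (u ^ 2 + v ^ 2) / 2 := by
      rw [abs_le]
      constructor <;> nlinarith [sq_nonneg (u - v), sq_nonneg (u + v)]
    nlinarith
  refine ⟨q0, by linarith, q2, by linarith, ?_, by linarith, ?_, by linarith, by linarith,
    by linarith, ?_, ?_⟩
  · have := am P1 P0
    have e : P1 * P0 / P0 = P1 := by field_simp
    have e2 : P0 ^ 2 / P0 = P0 := by field_simp
    rw [e, e2] at this
    linarith
  · have := am P1 P3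
    linarith
  · have := am P1 P2
    linarith
  · have := am P1 (P1 ^ 2 / P0)
    have e : P1 * (P1 ^ 2 / P0) / P0 = P1 ^ 3 / P0 ^ 2 := by field_simp
    have e2 : (P1 ^ 2 / P0) ^ 2 / P0 = P1 ^ 4 / P0 ^ 3 := by field_simp
    rw [e, e2] at this
    linarith

lemma int_T {fX : ℝ → ℝ} (H : Hyp fX) {a : ℝ} (ha : 0 < a) {q : ℝ → ℝ} (hq : Continuous q)
    (K : ℝ) (hb : ∀ y, |q y| ≤ K * ((1 + y ^ 2) * T fX a y)) : Integrable q := by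
  obtain ⟨D, iD, hD⟩ := dom_T H a ha
  refine Integrable.mono' (iD.const_mul |K|) hq.aestronglyMeasurable (ae_of_all _ fun y => ?_)
  rw [Real.norm_eq_abs]
  have B := bds H ha y
  have ht : 0 ≤ (1 + y ^ 2) * T fX a y := by
    have := B.pos.le.trans B.b0
    positivity
  calc |q y| ≤ K * ((1 + y ^ 2) * T fX a y) := hb y
    _ ≤ |K| * ((1 + y ^ 2) * T fX a y) := by gcongr; exact le_abs_self K
    _ ≤ |K| * D y := by gcongr; exact hD a (mem_nhd ha) y

lemma int_T' {fX : ℝ → ℝ} (H : Hyp fX) {a : ℝ} (ha : 0 < a) {q : ℝ → ℝ} (hq : Continuous q)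
    (K : ℝ) (hK : 0 ≤ K) (hb : ∀ y, |q y| ≤ K * T fX a y) : Integrable q := by
  refine int_T H ha hq K fun y => (hb y).trans ?_
  have B := bds H ha y
  have ht : 0 ≤ T fX a y := B.pos.le.trans B.b0
  gcongr
  nlinarith [mul_nonneg (sq_nonneg y) ht]

/-- `a`-derivative of the Fisher integrand. -/
noncomputable def dJ (fX : ℝ → ℝ) (a y : ℝ) : ℝ :=
  p fX 1 a y * p fX 3 a y / p fX 0 a y / a ^ 4
    - p fX 1 a y ^ 2 * p fX 2 a y / p fX 0 a y ^ 2 / (2 * a ^ 4)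
    - 5 / 2 * (p fX 1 a y ^ 2 / p fX 0 a y) / a ^ 3

/-- Fisher integrand. -/
noncomputable def jf (fX : ℝ → ℝ) (a y : ℝ) : ℝ := p fX 1 a y ^ 2 / p fX 0 a y / a ^ 2

/-- Derivative of the score. -/
noncomputable def sd (fX : ℝ → ℝ) (a y : ℝ) : ℝ :=
  -(1 / a) + p fX 2 a y / (a ^ 2 * p fX 0 a y) - p fX 1 a y ^ 2 / (a ^ 2 * p fX 0 a y ^ 2)

section facts
variable {fX : ℝ → ℝ} (H : Hyp fX) {a : ℝ} (ha : 0 < a)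

lemma cont_jf (H : Hyp fX) (ha : 0 < a) : Continuous (jf fX a) := by
  have c0 := cont_p H 0 ha
  have c1 := cont_p H 1 ha
  have n0 : ∀ y, p fX 0 a y ≠ 0 := fun y => (p0_pos H ha y).ne'
  unfold jf
  exact ((c1.pow 2).div c0 n0).div_const _

lemma cont_dJ (H : Hyp fX) (ha : 0 < a) : Continuous (dJ fX a) := by
  have c0 := cont_p H 0 ha
  have c1 := cont_p H 1 ha
  have c2 := cont_p H 2 ha
  have c3 := cont_p H 3 ha
  have n0 : ∀ y, p fX 0 a y ≠ 0 := fun y => (p0_pos H ha y).ne'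
  have n1 : ∀ y, p fX 0 a y ^ 2 ≠ 0 := fun y => pow_ne_zero 2 (n0 y)
  unfold dJ
  exact ((((c1.mul c3).div c0 n0).div_const _).sub
    ((((c1.pow 2).mul c2).div (c0.pow 2) n1).div_const _)).sub
    (((((c1.pow 2).div c0 n0)).const_mul (5 / 2)).div_const _)

lemma cont_sd (H : Hyp fX) (ha : 0 < a) : Continuous (sd fX a) := by
  have c0 := cont_p H 0 ha
  have c1 := cont_p H 1 ha
  have c2 := cont_p H 2 ha
  have n0 : ∀ y, a ^ 2 * p fX 0 a y ≠ 0 := fun y => by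
    have := p0_pos H ha y
    positivity
  have n1 : ∀ y, a ^ 2 * p fX 0 a y ^ 2 ≠ 0 := fun y => by
    have := p0_pos H ha y
    positivity
  unfold sd
  exact (continuous_const.add (c2.div (c0.const_mul _) n0)).sub
    ((c1.pow 2).div ((c0.pow 2).const_mul _) n1)

lemma int_p0 (H : Hyp fX) (ha : 0 < a) : Integrable (p fX 0 a) :=
  int_T' H ha (cont_p H 0 ha) 1 zero_le_one fun y => by
    have B := bds H ha y
    rw [abs_of_pos B.pos, one_mul]
    exact B.b0

lemma int_p2 (H : Hyp fX) (ha : 0 < a) : Integrable (p fX 2 a) :=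
  int_T' H ha (cont_p H 2 ha) 1 zero_le_one fun y => by
    have B := bds H ha y
    rw [abs_of_nonneg B.p2n, one_mul]
    exact B.b2

lemma int_p1 (H : Hyp fX) (ha : 0 < a) : Integrable (p fX 1 a) :=
  int_T' H ha (cont_p H 1 ha) 1 zero_le_one fun y => by
    rw [one_mul]
    exact (bds H ha y).b1

lemma int_jf (H : Hyp fX) (ha : 0 < a) : Integrable (jf fX a) :=
  int_T' H ha (cont_jf H ha) (1 / a ^ 2) (by positivity) fun y => by
    have B := bds H ha y
    have hp := B.pos
    unfold jf
    rw [abs_of_nonneg (by positivity), one_div_mul_eq_div]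
    gcongr
    exact B.b11

lemma dJ_bound (H : Hyp fX) {b : ℝ} (hb : 0 < b) (hab : b ≤ a) (y : ℝ) :
    |dJ fX a y| ≤ (1 / b ^ 4 + 1 / (2 * b ^ 4) + 5 / 2 / b ^ 3) * T fX a y := by
  have ha : 0 < a := by linarith
  have B := bds H ha y
  have hp := B.pos
  have hp2 := B.p2n
  have ht : 0 ≤ T fX a y := B.pos.le.trans B.b0
  unfold dJ
  refine (abs_sub _ _).trans ?_
  have e1 := abs_sub (p fX 1 a y * p fX 3 a y / p fX 0 a y / a ^ 4)
    (p fX 1 a y ^ 2 * p fX 2 a y / p fX 0 a y ^ 2 / (2 * a ^ 4))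
  have e2 : |p fX 1 a y * p fX 3 a y / p fX 0 a y / a ^ 4| ≤ T fX a y / b ^ 4 := by
    rw [abs_div, abs_of_pos (show 0 < a ^ 4 by positivity)]
    gcongr
    exact B.b13
  have e3 : |p fX 1 a y ^ 2 * p fX 2 a y / p fX 0 a y ^ 2 / (2 * a ^ 4)|
      ≤ T fX a y / (2 * b ^ 4) := by
    rw [abs_of_nonneg (by positivity)]
    gcongr
    exact B.b112
  have e4 : |5 / 2 * (p fX 1 a y ^ 2 / p fX 0 a y) / a ^ 3| ≤ 5 / 2 * T fX a y / b ^ 3 := by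
    rw [abs_of_nonneg (by positivity)]
    gcongr
    exact B.b11
  refine (add_le_add (e1.trans (add_le_add e2 e3)) e4).trans (le_of_eq ?_)
  ring

lemma int_dJ (H : Hyp fX) (ha : 0 < a) : Integrable (dJ fX a) :=
  int_T' H ha (cont_dJ H ha) _ (by positivity) fun y => dJ_bound H ha le_rfl y

lemma int_sd2 (H : Hyp fX) (ha : 0 < a) : Integrable (fun y => p fX 0 a y * sd fX a y ^ 2) := by
  refine int_T' H ha ((cont_p H 0 ha).mul ((cont_sd H ha).pow 2)) (3 * (1 / a ^ 2 + 2 / a ^ 4))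
    (by positivity) fun y => ?_
  have B := bds H ha y
  have hp := B.pos
  have ht : 0 ≤ T fX a y := B.pos.le.trans B.b0
  rw [abs_of_nonneg (by positivity)]
  have h1 : sd fX a y ^ 2 ≤ 3 * ((1 / a) ^ 2 + (p fX 2 a y / (a ^ 2 * p fX 0 a y)) ^ 2
      + (p fX 1 a y ^ 2 / (a ^ 2 * p fX 0 a y ^ 2)) ^ 2) := by
    unfold sd
    generalize 1 / a = u
    generalize p fX 2 a y / (a ^ 2 * p fX 0 a y) = v
    generalize p fX 1 a y ^ 2 / (a ^ 2 * p fX 0 a y ^ 2) = w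
    nlinarith [sq_nonneg (u + v), sq_nonneg (u - w), sq_nonneg (v + w)]
  calc p fX 0 a y * sd fX a y ^ 2
      ≤ p fX 0 a y * (3 * ((1 / a) ^ 2 + (p fX 2 a y / (a ^ 2 * p fX 0 a y)) ^ 2
      + (p fX 1 a y ^ 2 / (a ^ 2 * p fX 0 a y ^ 2)) ^ 2)) := by gcongr
    _ = 3 * (p fX 0 a y / a ^ 2 + (p fX 2 a y ^ 2 / p fX 0 a y) / a ^ 4
        + (p fX 1 a y ^ 4 / p fX 0 a y ^ 3) / a ^ 4) := by field_simp
    _ ≤ 3 * (T fX a y / a ^ 2 + T fX a y / a ^ 4 + T fX a y / a ^ 4) := by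
        gcongr
        · exact B.b0
        · exact B.b22
        · exact B.b1111
    _ = _ := by ring

lemma d0 (H : Hyp fX) (ha : 0 < a) (y : ℝ) :
    HasDerivAt (p fX 0 a) (-(p fX 1 a y / a)) y :=
  (hasDerivAt_p_y H 0 ha y).congr_deriv (by simp)

lemma d1 (H : Hyp fX) (ha : 0 < a) (y : ℝ) :
    HasDerivAt (p fX 1 a) (p fX 0 a y - p fX 2 a y / a) y :=
  (hasDerivAt_p_y H 1 ha y).congr_deriv (by simp)

lemma d2 (H : Hyp fX) (ha : 0 < a) (y : ℝ) :
    HasDerivAt (p fX 2 a) (2 * p fX 1 a y - p fX 3 a y / a) y :=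
  (hasDerivAt_p_y H 2 ha y).congr_deriv (by simp)

lemma deriv_log (H : Hyp fX) (ha : 0 < a) (y : ℝ) :
    HasDerivAt (fun y => Real.log (p fX 0 a y)) (-(p fX 1 a y / (a * p fX 0 a y))) y := by
  refine ((d0 H ha y).log (p0_pos H ha y).ne').congr_deriv ?_
  field_simp

lemma deriv_score (H : Hyp fX) (ha : 0 < a) (y : ℝ) :
    HasDerivAt (fun y => -(p fX 1 a y / (a * p fX 0 a y))) (sd fX a y) y := by
  have hp := p0_pos H ha y
  refine ((d1 H ha y).div ((d0 H ha y).const_mul a) (by positivity)).neg.congr_deriv ?_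
  unfold sd
  field_simp
  ring

/-- First integration by parts: the mean score derivative is minus J. -/
lemma int_score (H : Hyp fX) (ha : 0 < a) :
    Integrable (fun y => p fX 0 a y * sd fX a y) ∧
    ∫ y, p fX 0 a y * sd fX a y = - ∫ y, jf fX a y := by
  have e : (fun y => p fX 0 a y * sd fX a y) =
      fun y => -((p fX 0 a y - p fX 2 a y / a) / a) - jf fX a y := by
    funext y
    have hp := p0_pos H ha y
    unfold sd jf
    field_simp
    ring
  have i1 : Integrable (fun y => -((p fX 0 a y - p fX 2 a y / a) / a)) :=
    (((int_p0 H ha).sub ((int_p2 H ha).div_const a)).div_const a).neg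
  have z := integral_eq_zero_of_hasDerivAt_of_integrable
    (fun y => ((d1 H ha y).div_const a).neg) i1 ((int_p1 H ha).div_const a).neg
  rw [e]
  refine ⟨i1.sub (int_jf H ha), ?_⟩
  rw [integral_sub i1 (int_jf H ha), z, zero_sub]

/-- Second integration by parts. -/
lemma int_dJ_eq (H : Hyp fX) (ha : 0 < a) :
    ∫ y, dJ fX a y = - ∫ y, p fX 0 a y * sd fX a y ^ 2 := by
  have hd : ∀ y, HasDerivAt (fun y => p fX 1 a y / a ^ 2
      - p fX 1 a y * p fX 2 a y / p fX 0 a y / a ^ 3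
      + p fX 1 a y ^ 3 / p fX 0 a y ^ 2 / (2 * a ^ 3))
      (dJ fX a y + p fX 0 a y * sd fX a y ^ 2) y := by
    intro y
    have hp := p0_pos H ha y
    have h0 := d0 H ha y
    have h1 := d1 H ha y
    have h2 := d2 H ha y
    refine (((h1.div_const (a ^ 2)).sub (((h1.mul h2).div h0 hp.ne').div_const (a ^ 3))).add
      (((h1.pow 3).div (h0.pow 2) (pow_ne_zero 2 hp.ne')).div_const (2 * a ^ 3))).congr_deriv ?_
    simp only [Pi.pow_apply, Pi.mul_apply]
    unfold dJ sd
    field_simp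
    push_cast
    ring
  have c0 := cont_p H 0 ha
  have c1 := cont_p H 1 ha
  have c2 := cont_p H 2 ha
  have n0 : ∀ y, p fX 0 a y ≠ 0 := fun y => (p0_pos H ha y).ne'
  have n1 : ∀ y, p fX 0 a y ^ 2 ≠ 0 := fun y => pow_ne_zero 2 (n0 y)
  have i1 : Integrable (fun y => p fX 1 a y * p fX 2 a y / p fX 0 a y) :=
    int_T' H ha ((c1.mul c2).div c0 n0) 1 zero_le_one fun y => by
      rw [one_mul]; exact (bds H ha y).b12
  have i2 : Integrable (fun y => p fX 1 a y ^ 3 / p fX 0 a y ^ 2) :=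
    int_T' H ha ((c1.pow 3).div (c0.pow 2) n1) 1 zero_le_one fun y => by
      rw [one_mul]; exact (bds H ha y).b111
  have z := integral_eq_zero_of_hasDerivAt_of_integrable hd
    ((int_dJ H ha).add (int_sd2 H ha))
    ((((int_p1 H ha).div_const _).sub (i1.div_const _)).add (i2.div_const _))
  rw [integral_add (int_dJ H ha) (int_sd2 H ha)] at z
  linarith

lemma hasDerivAt_J (H : Hyp fX) (ha : 0 < a) :
    HasDerivAt (fun a => ∫ y, jf fX a y) (-∫ y, p fX 0 a y * sd fX a y ^ 2) a := by
  obtain ⟨D, iD, hD⟩ := dom_T H a ha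
  have hpos : ∀ b ∈ Set.Ioo (a / 2) (2 * a), 0 < b := fun b hb => by
    have := hb.1
    linarith
  have hnh : Set.Ioo (a / 2) (2 * a) ∈ nhds a := Ioo_mem_nhds (by linarith) (by linarith)
  have key := hasDerivAt_integral_of_dominated_loc_of_deriv_le (μ := volume) (x₀ := a)
    (s := Set.Ioo (a / 2) (2 * a)) (F := jf fX) (F' := dJ fX)
    (bound := fun y => (1 / (a / 2) ^ 4 + 1 / (2 * (a / 2) ^ 4) + 5 / 2 / (a / 2) ^ 3) * D y)
    hnh (by filter_upwards [hnh] with b hb using (cont_jf H (hpos b hb)).aestronglyMeasurable)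
    (int_jf H ha) (cont_dJ H ha).aestronglyMeasurable ?_ (iD.const_mul _) ?_
  · rw [← int_dJ_eq H ha]
    exact key.2
  · refine ae_of_all _ fun y b hb => ?_
    refine (dJ_bound H (by positivity) hb.1.le y).trans ?_
    have B := bds H (hpos b hb) y
    have ht : 0 ≤ T fX b y := B.pos.le.trans B.b0
    gcongr
    refine le_trans ?_ (hD b hb y)
    nlinarith [mul_nonneg (sq_nonneg y) ht]
  · refine ae_of_all _ fun y b hb => ?_
    have hb0 := hpos b hb
    have hp := p0_pos H hb0 y
    have h0 := hasDerivAt_p_a H 0 hb0 y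
    have h1 := hasDerivAt_p_a H 1 hb0 y
    refine (((h1.pow 2).div h0 hp.ne').div (hasDerivAt_pow 2 b) (by positivity)).congr_deriv ?_
    simp only [Pi.pow_apply, Pi.div_apply]
    unfold dJ
    norm_num
    field_simp
    ring

/-- `a`-derivative of the entropy integrand. -/
noncomputable def dE (fX : ℝ → ℝ) (a y : ℝ) : ℝ :=
  (p fX 2 a y / (2 * a ^ 2) - p fX 0 a y / (2 * a)) * (Real.log (p fX 0 a y) + 1)

lemma cont_log (H : Hyp fX) (ha : 0 < a) : Continuous (fun y => Real.log (p fX 0 a y)) :=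
  (cont_p H 0 ha).log fun y => (p0_pos H ha y).ne'

lemma cont_dE (H : Hyp fX) (ha : 0 < a) : Continuous (dE fX a) := by
  have c0 := cont_p H 0 ha
  have c2 := cont_p H 2 ha
  have cl := cont_log H ha
  unfold dE
  exact ((c2.div_const _).sub (c0.div_const _)).mul (cl.add continuous_const)

lemma log_one_bound {C : ℝ} (hC : 0 < C) {l y : ℝ} (hl : |l| ≤ C * (1 + y ^ 2)) :
    |l + 1| ≤ (C + 1) * (1 + y ^ 2) := by
  have := abs_add_le l 1
  rw [abs_one] at this
  nlinarith [sq_nonneg y]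

lemma dE_bound (H : Hyp fX) {b C : ℝ} (hb : 0 < b) (hab : b ≤ a) (hC : 0 < C) (y : ℝ)
    (hl : |Real.log (p fX 0 a y)| ≤ C * (1 + y ^ 2)) :
    |dE fX a y| ≤ (1 / (2 * b ^ 2) + 1 / (2 * b)) * (C + 1) * ((1 + y ^ 2) * T fX a y) := by
  have ha : 0 < a := by linarith
  have B := bds H ha y
  have hp := B.pos
  have hp2 := B.p2n
  have ht : 0 ≤ T fX a y := B.pos.le.trans B.b0
  unfold dE
  rw [abs_mul]
  have e1 : |p fX 2 a y / (2 * a ^ 2) - p fX 0 a y / (2 * a)|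
      ≤ T fX a y / (2 * b ^ 2) + T fX a y / (2 * b) := by
    refine (abs_sub _ _).trans ?_
    rw [abs_of_nonneg (by positivity), abs_of_nonneg (by positivity)]
    gcongr
    · exact B.b2
    · exact B.b0
  have e2 := log_one_bound hC hl
  calc _ ≤ (T fX a y / (2 * b ^ 2) + T fX a y / (2 * b)) * ((C + 1) * (1 + y ^ 2)) := by gcongr
    _ = _ := by ring

lemma int_dE (H : Hyp fX) (ha : 0 < a) : Integrable (dE fX a) := by
  obtain ⟨C, hC, hl⟩ := log_bound H a ha
  exact int_T H ha (cont_dE H ha) _ fun y => dE_bound H ha le_rfl hC y (hl a (mem_nhd ha) y)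

lemma int_E (H : Hyp fX) (ha : 0 < a) :
    Integrable (fun y => p fX 0 a y * Real.log (p fX 0 a y)) := by
  obtain ⟨C, hC, hl⟩ := log_bound H a ha
  refine int_T H ha ((cont_p H 0 ha).mul (cont_log H ha)) C fun y => ?_
  have B := bds H ha y
  have hp := B.pos
  have ht : 0 ≤ T fX a y := B.pos.le.trans B.b0
  rw [abs_mul, abs_of_pos hp]
  calc _ ≤ T fX a y * (C * (1 + y ^ 2)) := by
        gcongr
        · exact B.b0
        · exact hl a (mem_nhd ha) y
    _ = _ := by ring

lemma int_dE_eq (H : Hyp fX) (ha : 0 < a) :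
    ∫ y, dE fX a y = - ((∫ y, jf fX a y) / 2) := by
  have hd : ∀ y, HasDerivAt (fun y => -(p fX 1 a y / a) * (Real.log (p fX 0 a y) + 1))
      (2 * dE fX a y + jf fX a y) y := by
    intro y
    have hp := p0_pos H ha y
    refine ((((d1 H ha y).div_const a).neg).mul ((deriv_log H ha y).add_const 1)).congr_deriv ?_
    simp only [Pi.neg_apply]
    unfold dE jf
    field_simp
    ring
  obtain ⟨C, hC, hl⟩ := log_bound H a ha
  have i1 : Integrable (fun y => -(p fX 1 a y / a) * (Real.log (p fX 0 a y) + 1)) := by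
    refine int_T H ha ((((cont_p H 1 ha).div_const a).neg).mul
      ((cont_log H ha).add continuous_const)) ((C + 1) / a) fun y => ?_
    have B := bds H ha y
    have ht : 0 ≤ T fX a y := B.pos.le.trans B.b0
    have e2 := log_one_bound hC (hl a (mem_nhd ha) y)
    have e1 := B.b1
    rw [abs_mul, abs_neg, abs_div, abs_of_pos ha]
    calc _ ≤ T fX a y / a * ((C + 1) * (1 + y ^ 2)) := by gcongr
      _ = _ := by ring
  have i2 := (int_dE H ha).const_mul 2
  have z := integral_eq_zero_of_hasDerivAt_of_integrable hd (i2.add (int_jf H ha)) i1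
  rw [integral_add i2 (int_jf H ha), integral_const_mul] at z
  linarith

lemma hasDerivAt_E (H : Hyp fX) (ha : 0 < a) :
    HasDerivAt (fun a => ∫ y, p fX 0 a y * Real.log (p fX 0 a y))
      (-((∫ y, jf fX a y) / 2)) a := by
  obtain ⟨D, iD, hD⟩ := dom_T H a ha
  obtain ⟨C, hC, hl⟩ := log_bound H a ha
  have hpos : ∀ b ∈ Set.Ioo (a / 2) (2 * a), 0 < b := fun b hb => by
    have := hb.1
    linarith
  have hnh : Set.Ioo (a / 2) (2 * a) ∈ nhds a := Ioo_mem_nhds (by linarith) (by linarith)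
  have key := hasDerivAt_integral_of_dominated_loc_of_deriv_le (μ := volume) (x₀ := a)
    (s := Set.Ioo (a / 2) (2 * a)) (F := fun a y => p fX 0 a y * Real.log (p fX 0 a y))
    (F' := dE fX)
    (bound := fun y => (1 / (2 * (a / 2) ^ 2) + 1 / (2 * (a / 2))) * (C + 1) * D y)
    hnh (by filter_upwards [hnh] with b hb using
      (int_E H (hpos b hb)).aestronglyMeasurable)
    (int_E H ha) (cont_dE H ha).aestronglyMeasurable ?_ (iD.const_mul _) ?_
  · rw [← int_dE_eq H ha]
    exact key.2
  · refine ae_of_all _ fun y b hb => ?_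
    refine (dE_bound H (by positivity) hb.1.le hC y (hl b hb y)).trans ?_
    gcongr
    exact hD b hb y
  · refine ae_of_all _ fun y b hb => ?_
    have hb0 := hpos b hb
    have hp := p0_pos H hb0 y
    have h0 := hasDerivAt_p_a H 0 hb0 y
    refine (h0.mul (h0.log hp.ne')).congr_deriv ?_
    unfold dE
    field_simp

/-- Total mass one. -/
lemma int_p0_eq (H : Hyp fX) (ha : 0 < a) : ∫ y, p fX 0 a y = 1 := by
  have hG : ∀ z, G a z = ProbabilityTheory.gaussianPDFReal 0 ⟨a, ha.le⟩ z := by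
    intro z
    simp only [G, ProbabilityTheory.gaussianPDFReal, sub_zero]
    rfl
  have ig : Integrable (G a) := by
    rw [funext hG]
    exact ProbabilityTheory.integrable_gaussianPDFReal _ _
  have hne : (⟨a, ha.le⟩ : NNReal) ≠ 0 := fun h => ha.ne' (congrArg Subtype.val h)
  have eg : ∫ z, G a z = 1 := by
    rw [funext hG]
    exact ProbabilityTheory.integral_gaussianPDFReal_eq_one 0 hne
  have := integral_convolution (μ := volume) (ν := volume) (ContinuousLinearMap.mul ℝ ℝ) H.int ig
  rw [eg, H.prob] at this
  simp only [convolution_def, ContinuousLinearMap.mul_apply', mul_one] at this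
  rw [← this]
  simp [p]

end facts

end CostaAux

/-- **Costa's entropy power inequality (concavity form).** For the additive
Gaussian noise channel, the entropy power `N(a) = (1/(2πe)) e^{2h(a)}` of the
output is twice differentiable on `a > 0`,
`d²/da² N(a) = −N(a)·E_Y[(J(a) + ∂/∂y S_Y(y;a))²] ≤ 0`,
and in particular `N` is concave on `(0,∞)`. -/
theorem costa_epi_concavity
    (fX : ℝ → ℝ)
    (hfX_nonneg : ∀ x, 0 ≤ fX x)
    (hfX_prob : (∫ x, fX x) = 1)
    (hfX_mom : Integrable (fun x => x ^ 2 * fX x))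
    (fY : ℝ → ℝ → ℝ)
    (hfY : ∀ a, 0 < a → ∀ y, fY a y =
      ∫ x, fX x * ((Real.sqrt (2 * Real.pi * a))⁻¹ *
        Real.exp (-(y - x) ^ 2 / (2 * a))))
    (h : ℝ → ℝ)
    (hh : ∀ a, 0 < a → h a = -∫ y, fY a y * Real.log (fY a y))
    (J : ℝ → ℝ)
    (hJ : ∀ a, 0 < a → J a =
      ∫ y, fY a y * (deriv (fun y' => Real.log (fY a y')) y) ^ 2)
    (N : ℝ → ℝ)
    (hN : ∀ a, N a = (2 * Real.pi * Real.exp 1)⁻¹ * Real.exp (2 * h a)) :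
    (∀ a, 0 < a → DifferentiableAt ℝ N a) ∧
    (∀ a, 0 < a → HasDerivAt (deriv N)
      (-N a * ∫ y, fY a y *
        (J a + deriv (fun y' => deriv (fun y'' => Real.log (fY a y'')) y') y) ^ 2)
      a) ∧
    (∀ a, 0 < a → deriv (deriv N) a ≤ 0) ∧
    ConcaveOn ℝ (Set.Ioi 0) N := by
  have H : CostaAux.Hyp fX := by
    refine ⟨hfX_nonneg, ?_, hfX_prob, hfX_mom⟩
    by_contra hc
    rw [integral_undef hc] at hfX_prob
    exact zero_ne_one hfX_prob
  have hfY' : ∀ a, 0 < a → fY a = CostaAux.p fX 0 a := by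
    intro a ha
    funext y
    rw [hfY a ha y]
    simp [CostaAux.p, CostaAux.G]
  have hs : ∀ a, 0 < a → deriv (fun y' => Real.log (fY a y')) =
      fun y => -(CostaAux.p fX 1 a y / (a * CostaAux.p fX 0 a y)) := by
    intro a ha
    funext y
    rw [hfY' a ha]
    exact (CostaAux.deriv_log H ha y).deriv
  have hs2 : ∀ a, 0 < a → ∀ y,
      deriv (fun y' => deriv (fun y'' => Real.log (fY a y'')) y') y = CostaAux.sd fX a y := by
    intro a ha y
    rw [hs a ha]
    exact (CostaAux.deriv_score H ha y).deriv
  have hJ' : ∀ a, 0 < a → J a = ∫ y, CostaAux.jf fX a y := by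
    intro a ha
    rw [hJ a ha, hs a ha, hfY' a ha]
    congr 1
    funext y
    have hp := CostaAux.p0_pos H ha y
    unfold CostaAux.jf
    field_simp
  have hDh : ∀ a, 0 < a → HasDerivAt h (J a / 2) a := by
    intro a ha
    have h1 := (CostaAux.hasDerivAt_E H ha).neg
    rw [neg_neg, ← hJ' a ha] at h1
    refine h1.congr_of_eventuallyEq ?_
    filter_upwards [Ioi_mem_nhds ha] with b hb
    rw [hh b hb, hfY' b hb]
    rfl
  have hDJ : ∀ a, 0 < a → HasDerivAt J
      (-∫ y, CostaAux.p fX 0 a y * CostaAux.sd fX a y ^ 2) a := by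
    intro a ha
    refine (CostaAux.hasDerivAt_J H ha).congr_of_eventuallyEq ?_
    filter_upwards [Ioi_mem_nhds ha] with b hb
    exact hJ' b hb
  have hDN : ∀ a, 0 < a → HasDerivAt N (N a * J a) a := by
    intro a ha
    have h1 := (((hDh a ha).const_mul 2).exp).const_mul (2 * Real.pi * Real.exp 1)⁻¹
    have e : N = fun a => (2 * Real.pi * Real.exp 1)⁻¹ * Real.exp (2 * h a) := funext hN
    rw [e]
    refine h1.congr_deriv ?_
    ring
  have hD2 : ∀ a, 0 < a → HasDerivAt (deriv N)
      (-N a * ∫ y, fY a y *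
        (J a + deriv (fun y' => deriv (fun y'' => Real.log (fY a y'')) y') y) ^ 2) a := by
    intro a ha
    have h1 : HasDerivAt (fun a => N a * J a) _ a := (hDN a ha).mul (hDJ a ha)
    have h2 : deriv N =ᶠ[nhds a] fun a => N a * J a := by
      filter_upwards [Ioi_mem_nhds ha] with b hb
      exact (hDN b hb).deriv
    refine (h1.congr_of_eventuallyEq h2).congr_deriv ?_
    have e : (∫ y, fY a y *
        (J a + deriv (fun y' => deriv (fun y'' => Real.log (fY a y'')) y') y) ^ 2) =
        ∫ y, (J a ^ 2 * CostaAux.p fX 0 a y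
          + 2 * J a * (CostaAux.p fX 0 a y * CostaAux.sd fX a y)
          + CostaAux.p fX 0 a y * CostaAux.sd fX a y ^ 2) := by
      congr 1
      funext y
      rw [hs2 a ha y, hfY' a ha]
      ring
    have i1 := (CostaAux.int_p0 H ha).const_mul (J a ^ 2)
    have i2 := (CostaAux.int_score H ha).1.const_mul (2 * J a)
    rw [e, integral_add (by exact i1.add i2) (CostaAux.int_sd2 H ha), integral_add i1 i2,
      integral_const_mul, integral_const_mul, (CostaAux.int_score H ha).2, ← hJ' a ha,
      CostaAux.int_p0_eq H ha]
    ring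
  have hnp : ∀ a, 0 < a → deriv (deriv N) a ≤ 0 := by
    intro a ha
    rw [(hD2 a ha).deriv]
    have hNn : 0 ≤ N a := by
      rw [hN]
      have := Real.pi_pos
      positivity
    have hi : 0 ≤ ∫ y, fY a y *
        (J a + deriv (fun y' => deriv (fun y'' => Real.log (fY a y'')) y') y) ^ 2 := by
      refine integral_nonneg fun y => mul_nonneg ?_ (sq_nonneg _)
      rw [hfY' a ha]
      exact (CostaAux.p0_pos H ha y).le
    nlinarith [mul_nonneg hNn hi]
  refine ⟨fun a ha => (hDN a ha).differentiableAt, hD2, hnp, ?_⟩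
  refine concaveOn_of_deriv2_nonpos' (convex_Ioi 0) ?_ ?_ ?_
  · exact fun a ha => (hDN a ha).differentiableAt.differentiableWithinAt
  · exact fun a ha => (hD2 a ha).differentiableAt.differentiableWithinAt
  · exact fun a ha => hnp a ha
end
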